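/- arXiv:1309.7076 — 6 statements merged into one kernel-verified Lean document; each statement's English description precedes it below -/
import Mathlib

section
/- For any field F and any n × n matrices x₁, …, x₂ₙ over F, the standard polynomial of degree 2n vanishes: ∑_{σ ∈ Sym(2n)} sgn(σ) x_{σ(1)} ⋯ x_{σ(2n)} = 0. -/
/-- The standard polynomial `[[x₁,…,x_k]] = ∑_{σ ∈ Sym(k)} sgn(σ) x_{σ(1)} ⋯ x_{σ(k)}`
in an associative ring. -/
noncomputable def standardPolynomial {R : Type*} [Ring R] {k : ℕ} (x : Fin k → R) : R :=
  ∑ σ : Equiv.Perm (Fin k), (Equiv.Perm.sign σ : ℤ) • (List.ofFn fun i => x (σ i)).prod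

open Polynomial in
theorem AL.derivative_charpoly {R : Type*} [CommRing R] {n : Type*} [Fintype n] [DecidableEq n]
    (M : Matrix n n R) :
    derivative M.charpoly = (M.charmatrix.adjugate).trace := by
  have h : ∀ j, M.charmatrix.adjugate j j
      = (M.charmatrix.updateCol j (Pi.single j 1)).det := by
    intro j
    rw [← Matrix.cramer_apply, Matrix.cramer_eq_adjugate_mulVec]
    simp
  have hd : ∀ i j, derivative (M.charmatrix i j) = if i = j then 1 else 0 := by
    intro i j
    by_cases hij : i = j <;> simp [Matrix.charmatrix_apply, hij]
  rw [Matrix.trace, Matrix.charpoly, Matrix.det_apply', derivative_sum]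
  simp only [Matrix.diag_apply, h, Matrix.det_apply']
  rw [Finset.sum_comm]
  refine Finset.sum_congr rfl fun σ _ => ?_
  rw [← Finset.mul_sum, derivative_intCast_mul, derivative_prod_finset]
  congr 1
  refine Finset.sum_congr rfl fun j _ => ?_
  rw [← Finset.prod_erase_mul _ _ (Finset.mem_univ j), hd]
  congr 1
  · refine Finset.prod_congr rfl fun b hb => ?_
    rw [Matrix.updateCol_ne (Finset.ne_of_mem_erase hb)]
  · rw [Matrix.updateCol_self, Pi.single_apply]

open Polynomial in
theorem AL.pow_eq_zero {R : Type*} [CommRing R] [Algebra ℚ R] (n : ℕ)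
    (M : Matrix (Fin n) (Fin n) R) (hM : ∀ k, 0 < k → (M ^ k).trace = 0) : M ^ n = 0 := by
  have tor : ∀ (k : ℕ) (c : R), k ≠ 0 → (k : R) * c = 0 → c = 0 := by
    intro k c hk h
    have h2 : (k : ℚ) • c = 0 := by
      rw [Algebra.smul_def]; simpa using h
    exact (smul_eq_zero_iff_right (by exact_mod_cast hk)).1 h2
  rcases n with _ | n
  · exact Subsingleton.elim _ _
  nontriviality R
  set P := matPolyEquiv M.charmatrix.adjugate with hP
  have key : P * (X - C M) = M.charpoly.map (algebraMap R (Matrix (Fin (n+1)) (Fin (n+1)) R)) := by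
    rw [← Matrix.matPolyEquiv_charmatrix, hP, ← map_mul, Matrix.adjugate_mul, ← matPolyEquiv_smul_one]
    rfl
  have hc : ∀ k, P.coeff k = P.coeff (k+1) * M + algebraMap R _ (M.charpoly.coeff (k+1)) := by
    intro k
    have := congrArg (fun p => p.coeff (k+1)) key
    simp only [mul_sub, coeff_sub, coeff_mul_X, coeff_mul_C, coeff_map] at this
    rw [← this]; abel
  have h0 : P.coeff 0 * M = - algebraMap R _ (M.charpoly.coeff 0) := by
    have := congrArg (fun p => p.coeff 0) key
    simp only [mul_sub, coeff_sub, coeff_map, mul_coeff_zero, coeff_X_zero, mul_zero, zero_sub] at this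
    rw [← this]; simp
  have htr : ∀ k, (P.coeff k).trace = (k + 1 : ℕ) * M.charpoly.coeff (k+1) := by
    intro k
    have := congrArg (fun p => p.coeff k) (AL.derivative_charpoly M)
    simp only [coeff_derivative] at this
    push_cast
    rw [mul_comm, this]
    simp [Matrix.trace, hP, matPolyEquiv_coeff_apply]
  have hdeg : M.charpoly.natDegree = n + 1 := by simp
  have hlead : M.charpoly.coeff (n+1) = 1 := by
    have := M.charpoly_monic.coeff_natDegree
    rwa [hdeg] at this
  have hbig : ∀ N k, n + 1 ≤ k → P.coeff k = P.coeff (k + N) * M ^ N := by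
    intro N
    induction N with
    | zero => simp
    | succ N ih =>
      intro k hk
      rw [ih k hk, hc (k+N), coeff_eq_zero_of_natDegree_lt (p := M.charpoly) (by omega)]
      simp [pow_succ', mul_assoc, add_assoc]
  have hz : P.coeff (n+1) = 0 := by
    rw [hbig (P.natDegree + 1) _ le_rfl, coeff_eq_zero_of_natDegree_lt (by omega), zero_mul]
  have htralg : ∀ c : R, (algebraMap R (Matrix (Fin (n+1)) (Fin (n+1)) R) c).trace = (n + 1 : ℕ) * c := by
    intro c
    rw [Algebra.algebraMap_eq_smul_one]; simp [mul_comm]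
  have hmain : ∀ j k, j + k = n → P.coeff k = M ^ j := by
    intro j
    induction j with
    | zero =>
      intro k hk
      obtain rfl : k = n := by omega
      rw [hc, hz, hlead]; simp
    | succ j ih =>
      intro k hk
      have e := hc k
      rw [ih (k+1) (by omega), ← pow_succ] at e
      have e2 := congrArg Matrix.trace e
      rw [Matrix.trace_add, hM _ (by omega), htralg, htr] at e2
      have : M.charpoly.coeff (k+1) = 0 := by
        apply tor (j+1) _ (by omega)
        have : n = j + 1 + k := by omega
        subst this
        push_cast at e2 ⊢
        linear_combination -e2
      rw [e, this]; simp
  rw [hmain n 0 (by omega), ← pow_succ] at h0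
  have e2 := congrArg Matrix.trace h0
  rw [Matrix.trace_neg, hM _ (by omega), htralg] at e2
  have e3 := tor (n+1) (M.charpoly.coeff 0) (by omega) (by linear_combination e2)
  rw [h0, e3]
  simp

theorem AL.map_std {R S : Type*} [Ring R] [Ring S] (f : R →+* S) {k : ℕ} (x : Fin k → R) :
    f (standardPolynomial x) = standardPolynomial (fun i => f (x i)) := by
  simp [standardPolynomial, map_list_prod, List.map_ofFn, Function.comp_def]

theorem AL.std_eq_alt (F : Type*) [CommRing F] {R : Type*} [Ring R] [Algebra F R] {k : ℕ} (x : Fin k → R) :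
    standardPolynomial x = MultilinearMap.alternatization (MultilinearMap.mkPiAlgebraFin F k R) x := by
  simp [standardPolynomial, MultilinearMap.alternatization_apply, Units.smul_def]

theorem AL.transfer (F : Type*) [Field F] (n k : ℕ)
    (H : ∀ x : Fin k → Matrix (Fin n) (Fin n) ℚ, standardPolynomial x = 0)
    (x : Fin k → Matrix (Fin n) (Fin n) F) : standardPolynomial x = 0 := by
  have HZ : ∀ x : Fin k → Matrix (Fin n) (Fin n) ℤ, standardPolynomial x = 0 := by
    intro x
    have h := AL.map_std (Int.castRingHom ℚ).mapMatrix x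
    rw [H] at h
    ext i j
    have := congrFun (congrFun h i) j
    simpa using this
  rw [AL.std_eq_alt F]
  suffices h : MultilinearMap.alternatization (MultilinearMap.mkPiAlgebraFin F k (Matrix (Fin n) (Fin n) F)) = 0 by
    rw [h]; rfl
  refine Module.Basis.ext_alternating (Matrix.stdBasis F (Fin n) (Fin n)) fun v _ => ?_
  rw [← AL.std_eq_alt F]
  have h := AL.map_std (Int.castRingHom F).mapMatrix
    (fun i => Matrix.single (v i).1 (v i).2 (1:ℤ))
  rw [HZ, map_zero] at h
  rw [AlternatingMap.zero_apply, h]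
  congr 1
  ext i : 1
  rw [Matrix.stdBasis_eq_single]
  ext a b
  simp [Matrix.single_apply]

open ExteriorAlgebra in
theorem AL.ι_anti {V : Type*} [AddCommGroup V] [Module ℚ V] (a b : V) :
    ι ℚ a * ι ℚ b = - (ι ℚ b * ι ℚ a) := 
  eq_neg_of_add_eq_zero_left (ExteriorAlgebra.ι_add_mul_swap a b)

open ExteriorAlgebra in
theorem AL.mem_center {V : Type*} [AddCommGroup V] [Module ℚ V] (a b : V) :
    ι ℚ a * ι ℚ b ∈ Subalgebra.center ℚ (ExteriorAlgebra ℚ V) := by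
  rw [Subalgebra.mem_center_iff]
  intro z
  induction z using ExteriorAlgebra.induction with
  | algebraMap r => exact Algebra.commutes _ _
  | ι x => 
    rw [← mul_assoc, AL.ι_anti x a, mul_assoc, neg_mul, mul_assoc, AL.ι_anti x b, mul_neg, neg_neg, ← mul_assoc]
    
  | mul x y hx hy => rw [mul_assoc, hy, ← mul_assoc, hx, mul_assoc]
  | add x y hx hy => rw [add_mul, mul_add, hx, hy]

/-- The generic Grassmann matrix. -/
noncomputable def AL.gm {n k : ℕ} (x : Fin k → Matrix (Fin n) (Fin n) ℚ) :
    Matrix (Fin n) (Fin n) (ExteriorAlgebra ℚ (Fin k → ℚ)) :=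
  Matrix.of fun a b => ExteriorAlgebra.ι ℚ (fun i => x i a b)

/-- The product of Grassmann matrix summands. -/
theorem AL.list_prod {n k : ℕ} (x : Fin k → Matrix (Fin n) (Fin n) ℚ) (e : Fin k → ExteriorAlgebra ℚ (Fin k → ℚ))
    (l : List (Fin k)) :
    (l.map fun i => (x i).map (fun q => q • e i)).prod
      = (l.map x).prod.map (fun q => q • (l.map e).prod) := by
  induction l with
  | nil => ext a b; by_cases h : a = b <;> simp [h, Matrix.one_apply]
  | cons i l ih =>
    rw [List.map_cons, List.prod_cons, ih]
    ext a b
    simp [Matrix.mul_apply, Finset.sum_smul, smul_smul, mul_comm]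

theorem AL.gm_pow {n k : ℕ} (x : Fin k → Matrix (Fin n) (Fin n) ℚ) (h : AL.gm x ^ k = 0) :
    standardPolynomial x = 0 := by
  have h1 : AL.gm x = ∑ i, (x i).map (fun q => q • ExteriorAlgebra.ι ℚ (Pi.single i (1:ℚ) : Fin k → ℚ)) := by
    ext a b
    rw [Matrix.sum_apply]
    simp only [AL.gm, Matrix.of_apply, Matrix.map_apply, ← map_smul, ← map_sum]
    congr 1
    ext j
    simp [Finset.sum_apply, Pi.single_apply]
  have h2 := MultilinearMap.mkPiAlgebraFin_apply_const (R := ℚ) (n := k) (AL.gm x)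
  rw [h, h1, MultilinearMap.map_sum] at h2
  have h3 : ∀ f : Fin k → Fin k, ∀ a b, ((MultilinearMap.mkPiAlgebraFin ℚ k _) fun i => (x (f i)).map (fun q => q • ExteriorAlgebra.ι ℚ (Pi.single (f i) (1:ℚ) : Fin k → ℚ))) a b
      = ((List.ofFn fun i => x (f i)).prod a b) • ExteriorAlgebra.ιMulti ℚ k (fun i => (Pi.single (f i) (1:ℚ) : Fin k → ℚ)) := by
    intro f a b
    have := AL.list_prod x (fun i => ExteriorAlgebra.ι ℚ (Pi.single i (1:ℚ) : Fin k → ℚ)) (List.ofFn f)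
    simp only [List.map_ofFn, Function.comp_def] at this
    rw [MultilinearMap.mkPiAlgebraFin_apply, this, ExteriorAlgebra.ιMulti_apply]
    rfl
  let D : (i : ℕ) → (Fin k → ℚ) [⋀^Fin i]→ₗ[ℚ] ℚ := fun i =>
    if hi : i = k then hi ▸ Matrix.detRowAlternating else 0
  have hD : D k = Matrix.detRowAlternating := by simp [D]
  ext a b
  have h4 := congrArg (ExteriorAlgebra.liftAlternating D) (congrFun (congrFun h2 a) b)
  rw [Matrix.sum_apply] at h4
  simp only [h3, map_sum, map_smul, ExteriorAlgebra.liftAlternating_apply_ιMulti, hD, Matrix.zero_apply, map_zero] at h4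
  rw [Matrix.zero_apply, ← h4, standardPolynomial, Matrix.sum_apply]
  have h5 : ∀ f : Fin k → Fin k, (Matrix.detRowAlternating (fun i => (Pi.single (f i) (1:ℚ) : Fin k → ℚ)))
      = ∑ σ : Equiv.Perm (Fin k), if f = σ then ((Equiv.Perm.sign σ : ℤ) : ℚ) else 0 := by
    intro f
    change Matrix.det (Matrix.of fun i => (Pi.single (f i) (1:ℚ) : Fin k → ℚ)) = _
    rw [← Matrix.det_transpose, Matrix.det_apply']
    refine Finset.sum_congr rfl fun σ _ => ?_
    simp only [Matrix.transpose_apply, Matrix.of_apply, Pi.single_apply]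
    rw [Finset.prod_ite_zero]
    by_cases hf : f = σ
    · subst hf; simp
    · rw [if_neg hf, if_neg]
      · simp
      · intro hh; exact hf (funext fun i => (hh i (Finset.mem_univ _)).symm)
  simp only [h5, Finset.smul_sum]
  rw [Finset.sum_comm]
  refine Finset.sum_congr rfl fun σ _ => ?_
  rw [Finset.sum_eq_single (σ : Fin k → Fin k)]
  · simp [mul_comm]
  · intro f _ hf; simp [hf]
  · simp

theorem AL.rat (n : ℕ)
    (x : Fin (2 * n) → Matrix (Fin n) (Fin n) ℚ) : standardPolynomial x = 0 := by
  apply AL.gm_pow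
  rw [pow_mul]
  set A := AL.gm x with hA
  let Z := Subalgebra.center ℚ (ExteriorAlgebra ℚ (Fin (2*n) → ℚ))
  let B : Matrix (Fin n) (Fin n) Z := Matrix.of fun a b => 
    ∑ c, ⟨_, AL.mem_center (fun i => x i a c) (fun i => x i c b)⟩
  have hB : A ^ 2 = (Z.val : Z →+* _).mapMatrix B := by
    ext a b
    simp [hA, B, AL.gm, pow_two, Matrix.mul_apply]
  rw [hB, ← map_pow, AL.pow_eq_zero n B, map_zero]
  intro k hk
  obtain ⟨k, rfl⟩ : ∃ j, k = j + 1 := ⟨k - 1, by omega⟩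
  apply Subtype.val_injective
  have e1 : ((B ^ (k+1)).trace : ExteriorAlgebra ℚ (Fin (2*n) → ℚ)) = (A * (A * (Z.val : Z →+* _).mapMatrix (B^k))).trace := by
    rw [← mul_assoc, ← pow_two, hB, ← map_mul, ← pow_succ']
    simp [Matrix.trace]
  have e2 : (A * (A * (Z.val : Z →+* _).mapMatrix (B^k))).trace = - ((A * (Z.val : Z →+* _).mapMatrix (B^k)) * A).trace := by
    simp only [Matrix.trace, Matrix.diag_apply]
    rw [← Finset.sum_neg_distrib]
    simp only [Matrix.mul_apply (M := A) (N := A * _), Matrix.mul_apply (M := A * _) (N := A)]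
    simp only [← Finset.sum_neg_distrib]
    rw [Finset.sum_comm]
    refine Finset.sum_congr rfl fun a _ => Finset.sum_congr rfl fun b _ => ?_
    rw [Matrix.mul_apply, Finset.sum_mul, Finset.mul_sum, ← Finset.sum_neg_distrib]
    refine Finset.sum_congr rfl fun c _ => ?_
    have hz := Subalgebra.mem_center_iff.1 ((B^k) c b).2
    change A b a * (A a c * ((B^k) c b : ExteriorAlgebra ℚ (Fin (2*n) → ℚ))) = -(A a c * ((B^k) c b : ExteriorAlgebra ℚ (Fin (2*n) → ℚ)) * A b a)
    rw [mul_assoc, ← hz (A b a), ← mul_assoc, ← mul_assoc, ← neg_mul]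
    congr 1
    exact AL.ι_anti _ _
  have e3 : ((A * (Z.val : Z →+* _).mapMatrix (B^k)) * A) = (A * (A * (Z.val : Z →+* _).mapMatrix (B^k))) := by
    have : (Z.val : Z →+* _).mapMatrix (B^k) = (A^2)^k := by rw [hB, map_pow]
    rw [this, ← pow_mul, ← pow_succ', ← pow_succ, ← pow_succ']
  rw [e3] at e2
  have e4 : ((B ^ (k+1)).trace : ExteriorAlgebra ℚ (Fin (2*n) → ℚ)) = 0 := by
    rw [e1]
    have e5 := add_eq_zero_iff_eq_neg.2 e2
    rw [← two_smul ℚ] at e5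
    exact (smul_eq_zero_iff_right (two_ne_zero)).1 e5
  exact e4

/-- **Amitsur–Levitski theorem**: the algebra of `n × n` matrices over any field `F`
satisfies the standard identity of degree `2n`. -/
theorem amitsur_levitski (F : Type*) [Field F] (n : ℕ)
    (x : Fin (2 * n) → Matrix (Fin n) (Fin n) F) :
    standardPolynomial x = 0 := by
  exact AL.transfer F n (2 * n) (AL.rat n) x
end

section
/- For even n and any skew-symmetric n × n complex matrices x₁, …, x_{2n−2}, the standard polynomial of degree 2n − 2 vanishes: ∑_{σ ∈ Sym(2n−2)} sgn(σ) x_{σ(1)} ⋯ x_{σ(2n−2)} = 0. -/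
open Matrix

open Polynomial in
lemma derivative_charpoly_eq {n : ℕ} {R : Type*} [CommRing R] (A : Matrix (Fin n) (Fin n) R) :
    derivative A.charpoly = trace (adjugate (charmatrix A)) := by
  have hd : ∀ k i, derivative (charmatrix A k i) = (1 : Matrix (Fin n) (Fin n) R[X]) k i := by
    intro k i
    by_cases h : k = i
    · subst h; simp [charmatrix_apply]
    · simp [charmatrix_apply, h]
  have hadj : ∀ i, adjugate (charmatrix A) i i =
      ((charmatrix A).updateCol i (fun k => (1 : Matrix (Fin n) (Fin n) R[X]) k i)).det := by
    intro i
    rw [← transpose_apply (adjugate _), adjugate_transpose, adjugate_apply, ← det_transpose,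
      ← updateCol_transpose, transpose_transpose]
    congr 2
    ext k
    simp [Pi.single_apply, one_apply]
  rw [Matrix.charpoly, trace]
  simp only [diag_apply, hadj, det_apply, derivative_sum]
  rw [Finset.sum_comm]
  refine Finset.sum_congr rfl fun σ _ => ?_
  rw [← Finset.smul_sum, Polynomial.derivative_smul, Polynomial.derivative_prod_finset]
  congr 1
  refine Finset.sum_congr rfl fun i _ => ?_
  rw [← Finset.mul_prod_erase Finset.univ _ (Finset.mem_univ i), mul_comm, hd]
  congr 1
  · simp
  · refine Finset.prod_congr rfl fun j hj => ?_
    rw [updateCol_ne (Finset.ne_of_mem_erase hj)]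

open Polynomial in
lemma pow_eq_adjugate_of_trace {n : ℕ} {R : Type*} [CommRing R] [Algebra ℂ R]
    (A : Matrix (Fin n) (Fin n) R) (hn : 0 < n)
    (ht : ∀ k, 0 < k → trace (A ^ k) = 0) :
    A ^ (n - 1) = (-1 : R) ^ (n - 1) • adjugate A := by
  nontriviality R
  set P := adjugate (charmatrix A) with hP
  set p := A.charpoly with hp
  let B : ℕ → Matrix (Fin n) (Fin n) R := fun k => P.map (fun q => q.coeff k)
  have hrec : ∀ k, B k = A * B (k + 1) + p.coeff (k + 1) • 1 := by
    intro k
    have h : charmatrix A * P = p • 1 := mul_adjugate _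
    have h2 : charmatrix A = (X : R[X]) • (1 : Matrix (Fin n) (Fin n) R[X]) - A.map C := by
      ext i j
      simp [charmatrix_apply, diagonal_apply, one_apply]
    rw [h2, sub_mul] at h
    ext i j
    have h3 := congrArg (fun q => coeff q (k + 1)) (congrFun (congrFun h i) j)
    simp [mul_apply, coeff_X_mul, Matrix.one_apply] at h3
    simp only [B, map_apply, Matrix.add_apply, mul_apply, Matrix.smul_apply, one_apply, smul_eq_mul]
    rw [sub_eq_iff_eq_add] at h3
    rw [h3, add_comm]
    split_ifs <;> simp
  obtain ⟨N, hN⟩ : ∃ N, ∀ k, N ≤ k → B k = 0 := by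
    refine ⟨(∑ i, ∑ j, (P i j).natDegree) + 1, fun k hk => ?_⟩
    ext i j
    refine coeff_eq_zero_of_natDegree_lt (lt_of_lt_of_le (Nat.lt_succ_of_le ?_) hk)
    calc (P i j).natDegree ≤ ∑ j, (P i j).natDegree :=
          Finset.single_le_sum (f := fun j => (P i j).natDegree) (by simp) (Finset.mem_univ j)
      _ ≤ _ := Finset.single_le_sum (f := fun i => ∑ j, (P i j).natDegree) (by simp)
          (Finset.mem_univ i)
  have htr : ∀ d k, N ≤ k + d → ∀ j, 0 < j → trace (A ^ j * B k) = 0 := by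
    intro d
    induction d with
    | zero => intro k hk j hj; rw [hN k (by simpa using hk)]; simp
    | succ d ih =>
      intro k hk j hj
      rw [hrec, mul_add, ← mul_assoc, ← pow_succ, trace_add, ih (k+1) (by omega) (j+1) (by omega)]
      simp [ht j hj]
  have hder : ∀ k, p.coeff (k + 1) * ((k : R) + 1) = trace (B k) := by
    intro k
    have := congrArg (fun q => coeff q k) (derivative_charpoly_eq A)
    simp only [coeff_derivative] at this
    rw [← hp] at this
    rw [this, trace, trace, finsetSum_coeff]
    rfl
  have hz : ∀ k, k + 1 ≠ n → p.coeff (k + 1) = 0 := by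
    intro k hk
    have h1 := hder k
    have h0 := htr N (k+1) (by omega) 1 one_pos
    rw [pow_one] at h0
    rw [hrec, trace_add, h0, zero_add, trace_smul, trace_one, Fintype.card_fin, smul_eq_mul] at h1
    have h2 : p.coeff (k+1) * algebraMap ℂ R ((k : ℂ) + 1 - n) = 0 := by
      simp only [map_sub, map_add, map_natCast, map_one, mul_sub]
      rw [h1, sub_self]
    have h3 : ((k : ℂ) + 1 - n) ≠ 0 := by
      rw [sub_ne_zero]; exact_mod_cast hk
    exact ((IsUnit.map (algebraMap ℂ R) (isUnit_iff_ne_zero.2 h3)).mul_left_eq_zero).1 h2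
  have hbig : ∀ d k, n ≤ k → N ≤ k + d → B k = 0 := by
    intro d
    induction d with
    | zero => intro k _ hk; exact hN k (by simpa using hk)
    | succ d ih =>
      intro k h1 h2
      rw [hrec, ih (k+1) (by omega) (by omega), hz k (by omega)]; simp
  have htop : B (n - 1) = 1 := by
    rw [hrec, Nat.sub_add_cancel hn, hbig N n le_rfl (by omega)]
    have h1 : p.coeff n = 1 := by
      have := A.charpoly_monic
      rw [Monic, leadingCoeff, A.charpoly_natDegree_eq_dim, Fintype.card_fin] at this
      exact this
    rw [h1]; simp
  have hdown : ∀ d, d ≤ n - 1 → B (n - 1 - d) = A ^ d := by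
    intro d
    induction d with
    | zero => intro _; simpa using htop
    | succ d ih =>
      intro hd
      rw [hrec, hz _ (by omega), show n - 1 - (d+1) + 1 = n - 1 - d by omega, ih (by omega),
        pow_succ']
      simp
  rw [← hdown (n-1) le_rfl, Nat.sub_self]
  have h0 : B 0 = adjugate (-A) := by
    have : P.map (evalRingHom (0:R)) = adjugate ((charmatrix A).map (evalRingHom (0:R))) := by
      have := RingHom.map_adjugate (evalRingHom (0:R)) (charmatrix A)
      simpa [RingHom.mapMatrix_apply] using this
    have h1 : (charmatrix A).map (evalRingHom (0:R)) = -A := by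
      ext i j
      by_cases h : i = j
      · subst h; simp [charmatrix_apply]
      · simp [charmatrix_apply, h]
    rw [h1] at this
    rw [← this]
    ext i j
    simp [B, coeff_zero_eq_eval_zero]
  rw [h0, ← neg_one_smul R A, adjugate_smul, Fintype.card_fin]

lemma prod_perm_sign {n : ℕ} {Z : Type*} [CommRing Z] (c : Fin n → Fin n → Z)
    (h3 : ∀ j j' k k', c j k * c j' k' = -(c j k' * c j' k)) (σ : Equiv.Perm (Fin n)) :
    ∏ l, c l (σ l) = ((Equiv.Perm.sign σ : ℤ) : Z) * ∏ l, c l l := by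
  induction σ using Equiv.Perm.swap_induction_on' with
  | one => simp
  | mul_swap f i j hij ih =>
    have key : ∏ l, c l ((f * Equiv.swap i j) l) = - ∏ l, c l (f l) := by
      have hj : j ∈ Finset.univ.erase i := by simp [hij.symm]
      rw [← Finset.mul_prod_erase Finset.univ _ (Finset.mem_univ i),
        ← Finset.mul_prod_erase Finset.univ (fun l => c l (f l)) (Finset.mem_univ i),
        ← Finset.mul_prod_erase _ _ hj, ← Finset.mul_prod_erase _ (fun l => c l (f l)) hj,
        ← mul_assoc, ← mul_assoc, ← neg_mul]
      congr 1
      · simp [h3 i j (f j) (f i)]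
      · refine Finset.prod_congr rfl fun l hl => ?_
        simp only [Finset.mem_erase] at hl
        simp [Equiv.swap_apply_of_ne_of_ne hl.2.1 hl.1]
    rw [key, ih, Equiv.Perm.sign_mul, Equiv.Perm.sign_swap hij]
    simp

lemma prod_sum_eq_det {n : ℕ} {Z : Type*} [CommRing Z] (c : Fin n → Fin n → Z)
    (h2 : ∀ j j' k, c j k * c j' k = 0)
    (h3 : ∀ j j' k k', c j k * c j' k' = -(c j k' * c j' k)) (v : Matrix (Fin n) (Fin n) Z) :
    ∏ l, ∑ k, v l k * c l k = v.det * ∏ l, c l l := by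
  rw [Finset.prod_univ_sum, Fintype.piFinset_univ, ← det_transpose, det_apply', Finset.sum_mul]
  symm
  refine Finset.sum_of_injOn (fun σ : Equiv.Perm (Fin n) => (σ : Fin n → Fin n))
    (fun a _ b _ h => DFunLike.coe_injective h) (by simp) ?_ ?_
  · intro p _ hp
    have hni : ¬ Function.Injective p := by
      intro hi
      apply hp
      exact ⟨Equiv.ofBijective p (Finite.injective_iff_bijective.1 hi), by simp, rfl⟩
    simp only [Function.Injective, not_forall] at hni
    obtain ⟨i, j, hpij, hij⟩ := hni
    have hj : j ∈ Finset.univ.erase i := by simp [Ne.symm hij]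
    rw [← Finset.mul_prod_erase Finset.univ _ (Finset.mem_univ i), ← Finset.mul_prod_erase _ _ hj,
      ← mul_assoc, mul_mul_mul_comm, hpij, h2]
    simp
  · intro σ _
    rw [Finset.prod_mul_distrib, prod_perm_sign c h3]
    simp only [transpose_apply]
    ring

lemma sum_pow_sq_zero {ι Z : Type*} [CommRing Z] [DecidableEq ι] (t : ι → Z)
    (ht : ∀ l, t l * t l = 0) (s : Finset ι) :
    (∑ l ∈ s, t l) ^ s.card = (s.card.factorial : Z) * ∏ l ∈ s, t l ∧
    (∑ l ∈ s, t l) ^ (s.card + 1) = 0 := by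
  induction s using Finset.induction_on with
  | empty => simp
  | insert a s ha ih =>
    obtain ⟨h1, h2⟩ := ih
    have hex : ∀ y : Z, ∀ k : ℕ, (t a + y) ^ (k + 1) = y ^ (k + 1) + ((k + 1 : ℕ) : Z) * t a * y ^ k := by
      intro y k
      induction k with
      | zero => simp; ring
      | succ k ih =>
        rw [pow_succ, ih]
        push_cast
        linear_combination ((k : Z) + 1) * y ^ k * ht a
    rw [Finset.sum_insert ha, Finset.card_insert_of_notMem ha, Finset.prod_insert ha]
    constructor
    · rw [hex, h2, h1, Nat.factorial_succ]; push_cast; ring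
    · rw [hex, pow_succ, h2]; simp

lemma adjugate_mul_top {n : ℕ} {Z : Type*} [CommRing Z] [Algebra ℂ Z] (c : Fin n → Fin n → Z)
    (h1 : ∀ j k k', c j k * c j k' = 0)
    (h2 : ∀ j j' k, c j k * c j' k = 0)
    (h3 : ∀ j j' k k', c j k * c j' k' = -(c j k' * c j' k)) (A : Matrix (Fin n) (Fin n) Z)
    (hw : (∑ j, ∑ k, A j k * c j k) ^ (n - 1) = 0) (i j : Fin n) :
    adjugate A i j * ∏ l, c l l = 0 := by
  set t : Fin n → Z := fun j => ∑ k, A j k * c j k with ht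
  have htc : ∀ j k, t j * c j k = 0 := by
    intro j k
    rw [ht, Finset.sum_mul]
    exact Finset.sum_eq_zero fun k' _ => by rw [mul_assoc, h1, mul_zero]
  have htt : ∀ j, t j * t j = 0 := by
    intro j
    conv_lhs => rw [ht]
    simp only []
    rw [Finset.sum_mul]
    exact Finset.sum_eq_zero fun k' _ => by rw [mul_assoc, mul_comm (c j k'), htc, mul_zero]
  rw [adjugate_apply, ← prod_sum_eq_det c h2 h3, ← Finset.mul_prod_erase Finset.univ _ (Finset.mem_univ j)]
  have e1 : ∑ k, A.updateRow j (Pi.single i 1) j k * c j k = c j i := by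
    simp [Pi.single_apply]
  have e2 : ∏ x ∈ Finset.univ.erase j, ∑ k, A.updateRow j (Pi.single i 1) x k * c x k
      = ∏ x ∈ Finset.univ.erase j, t x := by
    refine Finset.prod_congr rfl fun x hx => ?_
    rw [updateRow_ne (Finset.ne_of_mem_erase hx)]
  rw [e1, e2]
  have h4 := (sum_pow_sq_zero t htt (Finset.univ.erase j)).1
  rw [Finset.card_erase_of_mem (Finset.mem_univ j), Finset.card_univ, Fintype.card_fin] at h4
  have h5 : ∀ k : ℕ, c j i * (∑ l, t l) ^ k = c j i * (∑ l ∈ Finset.univ.erase j, t l) ^ k := by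
    intro k
    induction k with
    | zero => simp
    | succ k ih =>
      rw [pow_succ, pow_succ, ← mul_assoc, ih, ← Finset.add_sum_erase Finset.univ t (Finset.mem_univ j)]
      linear_combination (∑ l ∈ Finset.univ.erase j, t l) ^ k * htc j i
  have h6 := h5 (n - 1)
  rw [hw, mul_zero, h4] at h6
  have h7 : algebraMap ℂ Z ((n - 1).factorial : ℂ) * (c j i * ∏ l ∈ Finset.univ.erase j, t l) = 0 := by
    rw [map_natCast, h6]; ring
  exact ((IsUnit.map (algebraMap ℂ Z) (isUnit_iff_ne_zero.2
    (by exact_mod_cast (n-1).factorial_ne_zero))).mul_right_eq_zero).1 h7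

lemma pf_vanish {S : Type*} [Ring S] [Algebra ℂ S] {n m : ℕ} (hn : n = 2 * m) (hm : 0 < m)
    (X : Fin n → Fin n → S) (a : Fin n → S) (hX : ∀ i j, X i j = -X j i)
    (hXX : ∀ i j k l, X i j * X k l = -(X k l * X i j))
    (haX : ∀ k i j, a k * X i j = -(X i j * a k))
    (haa : ∀ k l, a k * a l = -(a l * a k))
    (der : Fin n → S →ₗ[ℂ] S)
    (d0 : ∀ l, der l 1 = 0)
    (d1 : ∀ l k y, der l (a k * y) = (if l = k then y else 0) - a k * der l y)
    (d2 : ∀ l i j y, der l (X i j * y) = -(X i j * der l y)) :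
    (∑ l, (∑ k, X l k * a k) * (∑ k, X l k * a k)) ^ m = 0 := by
  have self0 : ∀ y : S, y = -y → y = 0 := by
    intro y hy
    have h : (2 : ℂ) • y = 0 := by rw [two_smul]; nth_rewrite 1 [hy]; simp
    rw [← one_smul ℂ y, ← inv_mul_cancel₀ (two_ne_zero (α := ℂ)), mul_smul, h, smul_zero]
  set φ : Fin n → S := fun l => ∑ k, X l k * a k with hφ
  change (∑ l, φ l * φ l) ^ m = 0
  have φX : ∀ l i j, φ l * X i j = X i j * φ l := by
    intro l i j
    simp only [hφ, Finset.sum_mul, Finset.mul_sum]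
    refine Finset.sum_congr rfl fun k _ => ?_
    rw [mul_assoc, haX, mul_neg, ← mul_assoc, hXX]; simp [mul_assoc]
  have φa : ∀ l j, φ l * a j = a j * φ l := by
    intro l j
    simp only [hφ, Finset.sum_mul, Finset.mul_sum]
    refine Finset.sum_congr rfl fun k _ => ?_
    rw [mul_assoc, haa, mul_neg, ← mul_assoc, ← mul_assoc, haX]; simp
  have φφ : ∀ l j, φ l * φ j = φ j * φ l := by
    intro l j
    exact Commute.sum_right _ _ _ fun k _ => Commute.mul_right (φX l j k) (φa l k)
  let D : S →ₗ[ℂ] S := ∑ l, (LinearMap.mulLeft ℂ (φ l)) ∘ₗ der l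
  have hD : ∀ y, D y = ∑ l, φ l * der l y := by intro y; simp [D]
  have Da : ∀ k y, D (a k * y) = φ k * y - a k * D y := by
    intro k y
    simp only [hD, d1, mul_sub, Finset.sum_sub_distrib, Finset.mul_sum]
    congr 1
    · simp
    · refine Finset.sum_congr rfl fun l _ => ?_
      rw [← mul_assoc, φa, mul_assoc]
  have DX : ∀ i j y, D (X i j * y) = - (X i j * D y) := by
    intro i j y
    simp only [hD, d2, mul_neg, Finset.sum_neg_distrib, Finset.mul_sum]
    congr 1
    refine Finset.sum_congr rfl fun l _ => ?_
    rw [← mul_assoc, φX, mul_assoc]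
  have Dφ : ∀ l y, D (φ l * y) = φ l * D y - ∑ k, X l k * φ k * y := by
    intro l y
    conv_lhs => rw [hφ]
    simp only [Finset.sum_mul, map_sum, mul_assoc, DX, Da, mul_sub]
    simp only [hφ, Finset.sum_mul, mul_assoc, neg_sub, Finset.sum_sub_distrib]
  have skew0 : ∀ y, ∑ l, ∑ k, X l k * (φ k * (φ l * y)) = 0 := by
    intro y
    apply self0
    conv_lhs => rw [Finset.sum_comm]
    simp only [← Finset.sum_neg_distrib]
    refine Finset.sum_congr rfl fun l _ => Finset.sum_congr rfl fun k _ => ?_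
    rw [hX k l, neg_mul, ← mul_assoc (φ l), φφ l k, mul_assoc]
  set u := ∑ l, φ l * φ l with hu
  have Du : ∀ y, D (u * y) = u * D y := by
    intro y
    have : ∀ l, D (φ l * φ l * y) = φ l * φ l * D y - (∑ k, X l k * (φ k * (φ l * y)))
        - (∑ k, X l k * (φ k * (φ l * y))) := by
      intro l
      rw [mul_assoc, Dφ, Dφ, mul_sub, sub_right_comm]
      simp only [mul_assoc]
      congr 2
      rw [Finset.mul_sum]
      refine Finset.sum_congr rfl fun k _ => ?_
      rw [← mul_assoc, φX, mul_assoc, ← mul_assoc (φ l), φφ, mul_assoc]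
    rw [hu, Finset.sum_mul, map_sum]
    simp only [this, Finset.sum_sub_distrib, skew0, sub_zero, Finset.sum_mul]
  have Dupow : ∀ r : ℕ, D (u ^ r) = 0 := by
    intro r
    induction r with
    | zero => simp [hD, d0]
    | succ r ih => rw [pow_succ', Du, ih, mul_zero]
  have DT : ∀ y, D y = 0 → D ((∑ l, a l * φ l) * y) = u * y + u * y := by
    intro y hy
    have : ∀ l, D (a l * φ l * y) = φ l * φ l * y + ∑ k, a l * X l k * (φ k * y) := by
      intro l
      rw [mul_assoc, Da, Dφ, hy]
      simp only [mul_zero, zero_sub, mul_neg, sub_neg_eq_add, Finset.mul_sum, mul_assoc]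
    rw [Finset.sum_mul, map_sum]
    simp only [this, Finset.sum_add_distrib, ← Finset.sum_mul]
    rw [← hu]
    congr 1
    rw [Finset.sum_comm, hu, Finset.sum_mul]
    refine Finset.sum_congr rfl fun k _ => ?_
    rw [← Finset.sum_mul, mul_assoc]
    congr 1
    refine Finset.sum_congr rfl fun l _ => ?_
    rw [haX, hX l k]; simp
  have Dtop : ∀ y, (∀ k, a k * y = 0) → D y = 0 := by
    intro y hy
    have h : ∀ l k, a k * der l y = if l = k then y else 0 := by
      intro l k
      have := d1 l k y
      rw [hy, map_zero] at this
      exact (sub_eq_zero.1 this.symm).symm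
    rw [hD]
    refine Finset.sum_eq_zero fun l _ => ?_
    simp only [hφ, Finset.sum_mul, mul_assoc, h]
    simp [self0 _ (hX l l)]
  -- degree bookkeeping
  let Q : ℕ → S → Prop := fun s y => ∀ L : List (Fin n), L.length = s → (L.map a).prod * y = 0
  have aL : ∀ (L : List (Fin n)) k, (L.map a).prod * a k = a k * (L.map a).prod ∨
      (L.map a).prod * a k = -(a k * (L.map a).prod) := by
    intro L k
    induction L with
    | nil => simp
    | cons b L ih =>
      simp only [List.map_cons, List.prod_cons, mul_assoc]
      rcases ih with h | h <;> rw [h]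
      · right; rw [← mul_assoc, haa]; simp [mul_assoc]
      · left; rw [mul_neg, ← mul_assoc, haa]; simp [mul_assoc]
  have XL : ∀ (L : List (Fin n)) i j, (L.map a).prod * X i j = X i j * (L.map a).prod ∨
      (L.map a).prod * X i j = -(X i j * (L.map a).prod) := by
    intro L i j
    induction L with
    | nil => simp
    | cons b L ih =>
      simp only [List.map_cons, List.prod_cons, mul_assoc]
      rcases ih with h | h <;> rw [h]
      · right; rw [← mul_assoc, haX]; simp [mul_assoc]
      · left; rw [mul_neg, ← mul_assoc, haX]; simp [mul_assoc]
  have nodup0 : ∀ L : List (Fin n), ¬ L.Nodup → (L.map a).prod = 0 := by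
    intro L
    induction L with
    | nil => simp
    | cons b L ih =>
      intro h
      rw [List.nodup_cons, not_and_or, not_not] at h
      rw [List.map_cons, List.prod_cons]
      rcases h with h | h
      · obtain ⟨L1, L2, rfl⟩ := List.append_of_mem h
        have hbb : a b * a b = 0 := self0 _ (haa b b)
        rw [List.map_append, List.prod_append, List.map_cons, List.prod_cons,
          ← mul_assoc (L1.map a).prod]
        rcases aL L1 b with h | h <;> rw [h]
        · simp only [← mul_assoc, hbb, zero_mul]
        · simp only [neg_mul, mul_neg, ← mul_assoc, hbb, zero_mul, neg_zero]
      · rw [ih h, mul_zero]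
  have Qtop : ∀ y, Q (n + 1) y := by
    intro y L hL
    rw [nodup0, zero_mul]
    intro h
    have := h.length_le_card
    simp [hL] at this
  have Qa : ∀ s y k, Q (s + 1) y → Q s (a k * y) := by
    intro s y k h L hL
    have := h (L ++ [k]) (by simp [hL])
    simpa [mul_assoc] using this
  have QX : ∀ s y i j, Q s y → Q s (X i j * y) := by
    intro s y i j h L hL
    rw [← mul_assoc]
    rcases XL L i j with h' | h' <;> rw [h']
    · rw [mul_assoc, h L hL, mul_zero]
    · rw [neg_mul, mul_assoc, h L hL, mul_zero, neg_zero]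
  have Qsum : ∀ s (f : Fin n → S), (∀ l, Q s (f l)) → Q s (∑ l, f l) := by
    intro s f h L hL
    rw [Finset.mul_sum]
    exact Finset.sum_eq_zero fun l _ => h l L hL
  have Qφ : ∀ s y l, Q (s + 1) y → Q s (φ l * y) := by
    intro s y l h
    simp only [hφ, Finset.sum_mul, mul_assoc]
    exact Qsum _ _ fun k => QX _ _ _ _ (Qa _ _ _ h)
  have Qu : ∀ s y, Q (s + 2) y → Q s (u * y) := by
    intro s y h
    rw [hu, Finset.sum_mul]
    refine Qsum _ _ fun l => ?_
    rw [mul_assoc]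
    exact Qφ _ _ _ (Qφ _ _ _ h)
  have Qupow : ∀ r s, s + 2 * r = n + 1 → Q s (u ^ r) := by
    intro r
    induction r with
    | zero => intro s hs; simp at hs; subst hs; exact Qtop _
    | succ r ih => intro s hs; rw [pow_succ']; exact Qu _ _ (ih _ (by omega))
  have QT : Q 1 ((∑ l, a l * φ l) * u ^ (m - 1)) := by
    rw [Finset.sum_mul]
    refine Qsum _ _ fun l => ?_
    rw [mul_assoc]
    exact Qa _ _ _ (Qφ _ _ _ (Qupow _ _ (by omega)))
  have e1 := DT _ (Dupow (m - 1))
  rw [Dtop _ (fun k => by simpa using QT [k] rfl), ← pow_succ', Nat.sub_add_cancel hm] at e1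
  exact self0 _ (eq_neg_of_add_eq_zero_left e1.symm)

section ext
variable {V : Type*} [AddCommGroup V] [Module ℂ V]

lemma ext_anti (v w : V) : ExteriorAlgebra.ι ℂ v * ExteriorAlgebra.ι ℂ w =
    -(ExteriorAlgebra.ι ℂ w * ExteriorAlgebra.ι ℂ v) :=
  eq_neg_of_add_eq_zero_left (ExteriorAlgebra.ι_add_mul_swap v w)

lemma ext_center (v w : V) : ExteriorAlgebra.ι ℂ v * ExteriorAlgebra.ι ℂ w ∈
    Subalgebra.center ℂ (ExteriorAlgebra ℂ V) := by
  rw [Subalgebra.mem_center_iff]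
  intro y
  induction y using ExteriorAlgebra.induction with
  | algebraMap r => exact Algebra.commutes _ _
  | ι z =>
    rw [← mul_assoc, ext_anti z v, neg_mul, mul_assoc, ext_anti z w, mul_assoc]; simp
  | mul a b ha hb => rw [mul_assoc, hb, ← mul_assoc, ha, mul_assoc]
  | add a b ha hb => rw [add_mul, ha, hb, mul_add]

lemma list_prod_mul {M β : Type*} [Monoid M] (a E : β → M) (h : ∀ p q, E p * a q = a q * E p)
    (L : List β) : (L.map fun p => a p * E p).prod = (L.map a).prod * (L.map E).prod := by
  have h2 : ∀ p (L : List β), E p * (L.map a).prod = (L.map a).prod * E p := by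
    intro p L
    induction L with
    | nil => simp
    | cons q L ih =>
      simp only [List.map_cons, List.prod_cons]
      rw [← mul_assoc, h, mul_assoc, ih, mul_assoc]
  induction L with
  | nil => simp
  | cons q L ih =>
    simp only [List.map_cons, List.prod_cons]
    rw [ih, mul_assoc, ← mul_assoc (E q), h2]
    simp only [mul_assoc]

lemma std_pow {n K : ℕ} (x : Fin K → Matrix (Fin n) (Fin n) ℂ) (v : Fin K → V) :
    (∑ p, (x p).map (algebraMap ℂ (ExteriorAlgebra ℂ V)) *
      Matrix.scalar (Fin n) (ExteriorAlgebra.ι ℂ (v p))) ^ K =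
    (standardPolynomial x).map (algebraMap ℂ (ExteriorAlgebra ℂ V)) *
      Matrix.scalar (Fin n) (ExteriorAlgebra.ιMulti ℂ K v) := by
  set a : Fin K → Matrix (Fin n) (Fin n) (ExteriorAlgebra ℂ V) :=
    fun p => (algebraMap ℂ (ExteriorAlgebra ℂ V)).mapMatrix (x p) with ha
  set E : Fin K → Matrix (Fin n) (Fin n) (ExteriorAlgebra ℂ V) :=
    fun p => Matrix.scalar (Fin n) (ExteriorAlgebra.ι ℂ (v p)) with hE
  have hcomm : ∀ p q, E p * a q = a q * E p := by
    intro p q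
    ext i j
    simp only [hE, ha, scalar_apply, diagonal_mul, mul_diagonal, RingHom.mapMatrix_apply, map_apply]
    exact (Algebra.commutes _ _).symm
  have hterm : ∀ f : Fin K → Fin K, (List.ofFn fun i => a (f i) * E (f i)).prod =
      (algebraMap ℂ (ExteriorAlgebra ℂ V)).mapMatrix (List.ofFn fun i => x (f i)).prod *
      Matrix.scalar (Fin n) (ExteriorAlgebra.ιMulti ℂ K (v ∘ f)) := by
    intro f
    have h := list_prod_mul a E hcomm (List.ofFn f)
    rw [List.map_ofFn, List.map_ofFn, List.map_ofFn] at h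
    refine h.trans ?_
    rw [ExteriorAlgebra.ιMulti_apply, map_list_prod, map_list_prod, List.map_ofFn, List.map_ofFn]
    rfl
  change (∑ p, a p * E p) ^ K = (algebraMap ℂ (ExteriorAlgebra ℂ V)).mapMatrix _ * _
  rw [← MultilinearMap.mkPiAlgebraFin_apply_const (R := ℂ), MultilinearMap.map_sum]
  simp only [MultilinearMap.mkPiAlgebraFin_apply, hterm]
  rw [standardPolynomial, map_sum, Finset.sum_mul]
  symm
  refine Finset.sum_of_injOn (fun σ : Equiv.Perm (Fin K) => (σ : Fin K → Fin K))
    (fun a _ b _ h => DFunLike.coe_injective h) (by simp) ?_ ?_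
  · intro p _ hp
    have hni : ¬ Function.Injective p := by
      intro hi
      apply hp
      exact ⟨Equiv.ofBijective p (Finite.injective_iff_bijective.1 hi), by simp, rfl⟩
    rw [ExteriorAlgebra.ιMulti_eq_zero_of_not_inj, map_zero, mul_zero]
    intro h
    exact hni (Function.Injective.of_comp h)
  · intro σ _
    rw [AlternatingMap.map_perm, map_zsmul, smul_mul_assoc]
    have : Equiv.Perm.sign σ • (ExteriorAlgebra.ιMulti ℂ K) v =
      (Equiv.Perm.sign σ : ℤ) • (ExteriorAlgebra.ιMulti ℂ K) v := rfl
    rw [this, map_zsmul, mul_smul_comm]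

lemma list_contract {I : Type*} [DecidableEq I] (h : I) (L : List I) (hL : h ∉ L) :
    CliffordAlgebra.contractLeft (Q := (0 : QuadraticForm ℂ (I → ℂ)))
      (LinearMap.proj h : (I → ℂ) →ₗ[ℂ] ℂ)
      ((L.map fun i => ExteriorAlgebra.ι ℂ (Pi.single i 1 : I → ℂ)).prod) = 0 := by
  induction L with
  | nil => simp
  | cons q L ih =>
    simp only [List.mem_cons, not_or] at hL
    simp only [List.map_cons, List.prod_cons]
    rw [ExteriorAlgebra.ι, CliffordAlgebra.contractLeft_ι_mul]
    erw [ih hL.2]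
    simp [Pi.single_apply, hL.1]

lemma list_ne_zero {I : Type*} [DecidableEq I] (L : List I) (hL : L.Nodup) :
    (L.map fun i => ExteriorAlgebra.ι ℂ (Pi.single i 1 : I → ℂ)).prod ≠ 0 := by
  induction L with
  | nil => simp
  | cons q L ih =>
    rw [List.nodup_cons] at hL
    intro h
    apply ih hL.2
    have h2 := congrArg (CliffordAlgebra.contractLeft (Q := (0 : QuadraticForm ℂ (I → ℂ)))
      (LinearMap.proj q : (I → ℂ) →ₗ[ℂ] ℂ)) h
    simp only [List.map_cons, List.prod_cons] at h2
    rw [ExteriorAlgebra.ι, CliffordAlgebra.contractLeft_ι_mul] at h2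
    erw [list_contract q L hL.1] at h2
    simpa using h2

end ext

lemma pow_zero_of_sub {Z : Type*} [CommRing Z] [Algebra ℂ Z] (a b w : Z) (r : ℂ) {m k : ℕ}
    (hr : r ≠ 0) (ha : a ^ m = 0) (hb : b ^ m = 0) (h : a - b = r • w) (hk : m + m ≤ k + 1) :
    w ^ k = 0 := by
  have h3 := Commute.add_pow_eq_zero_of_add_le_succ_of_pow_eq_zero (Commute.all a (-b)) ha
    (by rw [neg_pow, hb, mul_zero]) hk
  rw [← sub_eq_add_neg, h, smul_pow] at h3
  rw [← one_smul ℂ (w ^ k), ← inv_mul_cancel₀ (pow_ne_zero k hr), mul_smul, h3, smul_zero]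

section main
variable {V : Type*} [AddCommGroup V] [Module ℂ V]

/-- The vanishing of the Pfaffian of the square of a skew matrix of odd elements. -/
lemma ext_pf {n m : ℕ} (hn : n = 2 * m) (hm : 0 < m) (X : Fin n → Fin n → V)
    (hX : ∀ i j, X i j = -X j i) (α : Fin n → V) (d : Fin n → Module.Dual ℂ V)
    (hdα : ∀ l k, d l (α k) = if l = k then 1 else 0) (hdX : ∀ l i j, d l (X i j) = 0) :
    (∑ j, ∑ k, (∑ l, ExteriorAlgebra.ι ℂ (X j l) * ExteriorAlgebra.ι ℂ (X l k)) *
      (ExteriorAlgebra.ι ℂ (α j) * ExteriorAlgebra.ι ℂ (α k))) ^ m = 0 := by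
  have h := pf_vanish hn hm (fun i j => ExteriorAlgebra.ι ℂ (X i j))
    (fun k => ExteriorAlgebra.ι ℂ (α k)) (fun i j => by rw [← map_neg, ← hX])
    (fun _ _ _ _ => ext_anti _ _) (fun _ _ _ => ext_anti _ _) (fun _ _ => ext_anti _ _)
    (fun l => CliffordAlgebra.contractLeft (Q := (0 : QuadraticForm ℂ V)) (d l))
    (fun l => CliffordAlgebra.contractLeft_one _ (d l))
    (fun l k y => by
      refine (CliffordAlgebra.contractLeft_ι_mul _ _ _).trans ?_
      rw [hdα]
      split_ifs <;> simp [ExteriorAlgebra.ι])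
    (fun l i j y => by
      refine (CliffordAlgebra.contractLeft_ι_mul _ _ _).trans ?_
      rw [hdX]
      simp [ExteriorAlgebra.ι])
  rw [← h]
  congr 1
  simp only [Finset.sum_mul, Finset.mul_sum]
  rw [Finset.sum_comm_cycle]
  refine Finset.sum_congr rfl fun l _ => ?_
  rw [Finset.sum_comm]
  refine Finset.sum_congr rfl fun j _ => ?_
  refine Finset.sum_congr rfl fun k _ => ?_
  have h1 : ExteriorAlgebra.ι ℂ (X k l) = -ExteriorAlgebra.ι ℂ (X l k) := by
    rw [← map_neg, ← hX]
  have h2 := ext_anti (α k) (X l j)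
  rw [h1, mul_assoc, mul_assoc, ← mul_assoc _ _ (ExteriorAlgebra.ι ℂ (α j)),
    ← mul_assoc (ExteriorAlgebra.ι ℂ (α k)), h2]
  simp

lemma trace_pow_zero {n : ℕ} (X : Fin n → Fin n → V)
    (A : Matrix (Fin n) (Fin n) (Subalgebra.center ℂ (ExteriorAlgebra ℂ V)))
    (hA : (Subalgebra.center ℂ (ExteriorAlgebra ℂ V)).val.mapMatrix A =
      (Matrix.of fun i j => ExteriorAlgebra.ι ℂ (X i j)) ^ 2) (k : ℕ) (hk : 0 < k) :
    trace (A ^ k) = 0 := by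
  set M : Matrix (Fin n) (Fin n) (ExteriorAlgebra ℂ V) :=
    Matrix.of fun i j => ExteriorAlgebra.ι ℂ (X i j) with hM
  have hmap : ∀ k, (Subalgebra.center ℂ (ExteriorAlgebra ℂ V)).val.mapMatrix (A ^ k) =
      M ^ (2 * k) := by
    intro k; rw [map_pow, hA, pow_mul]
  have hcen : ∀ k i j y, y * (M ^ (2 * k)) i j = (M ^ (2 * k)) i j * y := by
    intro k i j y
    rw [← hmap]
    exact (Subalgebra.mem_center_iff.1 ((A ^ k) i j).2 y)
  have hodd : ∀ k i j i' j', M i j * (M ^ (2 * k + 1)) i' j' =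
      -((M ^ (2 * k + 1)) i' j' * M i j) := by
    intro k i j i' j'
    rw [pow_succ', mul_apply, Finset.mul_sum, Finset.sum_mul, ← Finset.sum_neg_distrib]
    refine Finset.sum_congr rfl fun l _ => ?_
    have h : M i j * M i' l = -(M i' l * M i j) := ext_anti _ _
    rw [← mul_assoc, h, mul_assoc, ← hcen]
    simp only [neg_mul, mul_assoc]
  obtain ⟨k, rfl⟩ : ∃ r, k = r + 1 := ⟨k - 1, by omega⟩
  have h1 : trace (M ^ (2 * (k + 1))) = -trace (M ^ (2 * (k + 1))) := by
    have e : M ^ (2 * (k + 1)) = M * M ^ (2 * k + 1) := by rw [← pow_succ']; ring_nf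
    have e' : M ^ (2 * (k + 1)) = M ^ (2 * k + 1) * M := by rw [← pow_succ]; ring_nf
    conv_lhs => rw [e]
    conv_rhs => rw [e']
    simp only [trace, diag_apply, mul_apply, hodd, Finset.sum_neg_distrib]
    rw [Finset.sum_comm]
  have h2 : trace (M ^ (2 * (k + 1))) = 0 := by
    have h : (2 : ℂ) • trace (M ^ (2 * (k + 1))) = 0 := by
      rw [two_smul]; nth_rewrite 1 [h1]; simp
    rw [← one_smul ℂ (trace _), ← inv_mul_cancel₀ (two_ne_zero (α := ℂ)), mul_smul, h, smul_zero]
  apply Subtype.ext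
  rw [← hmap] at h2
  refine Eq.trans ?_ h2
  simp [trace]

lemma main_aux (m : ℕ) (hm : 0 < m) (n N : ℕ) (hn : n = 2 * m) (hN : N = 2 * (n - 1))
    (x : Fin N → Matrix (Fin n) (Fin n) ℂ)
    (hskew : ∀ i, (x i)ᵀ = -(x i)) :
    standardPolynomial x = 0 := by
  let I := Fin N ⊕ (Fin n ⊕ Fin n)
  let b : I → (I → ℂ) := fun i => Pi.single i 1
  let e : Fin N → (I → ℂ) := fun p => b (Sum.inl p)
  let θ : Fin n → (I → ℂ) := fun p => b (Sum.inr (Sum.inl p))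
  let η : Fin n → (I → ℂ) := fun p => b (Sum.inr (Sum.inr p))
  let g : (I → ℂ) →ₗ[ℂ] ExteriorAlgebra ℂ (I → ℂ) := ExteriorAlgebra.ι ℂ
  let X : Fin n → Fin n → (I → ℂ) := fun j k => ∑ p, x p j k • e p
  have hX : ∀ i j, X i j = -X j i := by
    intro i j
    simp only [X, ← Finset.sum_neg_distrib]
    refine Finset.sum_congr rfl fun p _ => ?_
    have := congrFun (congrFun (hskew p) j) i
    simp only [transpose_apply, Matrix.neg_apply] at this
    rw [this, neg_smul]
  let A : Matrix (Fin n) (Fin n) (Subalgebra.center ℂ (ExteriorAlgebra ℂ (I → ℂ))) :=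
    fun j k => ∑ l, ⟨g (X j l) * g (X l k), ext_center _ _⟩
  have hAv : ∀ j k, (A j k : ExteriorAlgebra ℂ (I → ℂ)) = ∑ l, g (X j l) * g (X l k) := by
    intro j k; simp [A]
  have hA : (Subalgebra.center ℂ (ExteriorAlgebra ℂ (I → ℂ))).val.mapMatrix A =
      (Matrix.of fun i j => ExteriorAlgebra.ι ℂ (X i j)) ^ 2 := by
    ext j k
    rw [pow_two, mul_apply]
    exact hAv j k
  have hAskew : ∀ j k, A j k = - A k j := by
    intro j k
    apply Subtype.ext
    rw [NegMemClass.coe_neg, hAv, hAv, ← Finset.sum_neg_distrib]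
    refine Finset.sum_congr rfl fun l _ => ?_
    rw [hX j l, hX l k, map_neg, map_neg, neg_mul_neg]
    exact ext_anti _ _
  have htr := trace_pow_zero X A hA
  let cc : (I → ℂ) → (I → ℂ) → Subalgebra.center ℂ (ExteriorAlgebra ℂ (I → ℂ)) :=
    fun v w => ⟨g v * g w, ext_center v w⟩
  have ccanti : ∀ v w, cc v w = - cc w v := fun v w => Subtype.ext (ext_anti v w)
  have ccaddl : ∀ v v' w, cc (v + v') w = cc v w + cc v' w := fun v v' w =>
    Subtype.ext (by simp [cc, add_mul])
  have ccaddr : ∀ v w w', cc v (w + w') = cc v w + cc v w' := fun v v' w =>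
    Subtype.ext (by simp [cc, mul_add])
  have ccsmull : ∀ (r : ℂ) v w, cc (r • v) w = r • cc v w := fun r v w =>
    Subtype.ext (by simp [cc])
  have ccsmulr : ∀ (r : ℂ) v w, cc v (r • w) = r • cc v w := fun r v w =>
    Subtype.ext (by simp [cc])
  have cc4 : ∀ v w v' w', cc v w * cc v' w' = - (cc v w' * cc v' w) := by
    intro v w v' w'
    apply Subtype.ext
    change g v * g w * (g v' * g w') = - (g v * g w' * (g v' * g w))
    have h1 : g w * (g v' * g w') = (g v' * g w') * g w :=
      Subalgebra.mem_center_iff.1 (ext_center v' w') (g w)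
    have h2 : g v' * g w' = - (g w' * g v') := ext_anti _ _
    rw [mul_assoc, h1, h2]
    simp [mul_assoc]
  have ccsame : ∀ v w v', cc v w * cc v' w = 0 := by
    intro v w v'
    apply Subtype.ext
    change g v * g w * (g v' * g w) = 0
    have h1 : g w * (g v' * g w) = (g v' * g w) * g w :=
      Subalgebra.mem_center_iff.1 (ext_center v' w) (g w)
    have h2 : g w * g w = 0 := ExteriorAlgebra.ι_sq_zero _
    rw [mul_assoc, h1, mul_assoc (g v'), h2, mul_zero, mul_zero]
  have ccsame' : ∀ v w w', cc v w * cc v w' = 0 := by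
    intro v w w'
    rw [ccanti v w, ccanti v w']
    exact (neg_mul_neg _ _).trans (ccsame _ _ _)
  -- the two Pfaffian-type vanishings
  have hu : ∀ r : ℂ, (∑ j, ∑ k, A j k * cc (θ j + r • η j) (θ k + r • η k)) ^ m = 0 := by
    intro r
    have h := ext_pf hn hm X hX (fun j => θ j + r • η j)
      (fun l => (LinearMap.proj (Sum.inr (Sum.inl l)) : (I → ℂ) →ₗ[ℂ] ℂ))
      (by
        intro l k
        simp [θ, η, b, Pi.single_apply]
        have h1 : ((Sum.inr (Sum.inl l) : I) = Sum.inr (Sum.inl k)) ↔ l = k :=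
          ⟨fun h => Sum.inl_injective (Sum.inr_injective h), fun h => by rw [h]⟩
        have h2 : ¬ ((Sum.inr (Sum.inl l) : I) = Sum.inr (Sum.inr k)) :=
          fun h => Sum.inl_ne_inr (Sum.inr_injective h)
        rw [if_neg h2, add_zero]
        exact if_congr h1 rfl rfl)
      (by
        intro l i j
        simp [X, e, b])
    apply Subtype.ext
    rw [SubmonoidClass.coe_pow]
    refine Eq.trans ?_ h
    congr 1
    simp only [AddSubmonoidClass.coe_finsetSum, MulMemClass.coe_mul, hAv]
    rfl
  set w := ∑ j, ∑ k, A j k * cc (θ j) (η k) with hw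
  have hw' : ∑ j, ∑ k, A j k * cc (η j) (θ k) = w := by
    rw [hw, Finset.sum_comm]
    refine Finset.sum_congr rfl fun j _ => Finset.sum_congr rfl fun k _ => ?_
    rw [hAskew, ccanti]
    exact neg_mul_neg _ _
  have hexp : ∀ r : ℂ, (∑ j, ∑ k, A j k * cc (θ j + r • η j) (θ k + r • η k)) =
      (∑ j, ∑ k, A j k * cc (θ j) (θ k)) + r • w + r • w +
      (r * r) • (∑ j, ∑ k, A j k * cc (η j) (η k)) := by
    intro r
    nth_rewrite 2 [← hw']
    rw [hw]
    simp only [Finset.smul_sum, ← Finset.sum_add_distrib]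
    refine Finset.sum_congr rfl fun j _ => Finset.sum_congr rfl fun k _ => ?_
    simp only [ccaddl, ccaddr, ccsmull, ccsmulr, mul_add, mul_smul_comm, smul_smul]
    abel
  have hwpow : w ^ (n - 1) = 0 := by
    have h1 := hu Complex.I
    have h2 := hu (-Complex.I)
    have h4 : (∑ j, ∑ k, A j k * cc (θ j + Complex.I • η j) (θ k + Complex.I • η k)) -
      (∑ j, ∑ k, A j k * cc (θ j + (-Complex.I) • η j) (θ k + (-Complex.I) • η k)) =
      (4 * Complex.I) • w := by
      rw [hexp, hexp]
      module
    exact pow_zero_of_sub _ _ _ _ (by simp) h1 h2 h4 (by omega)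
  have hadj := adjugate_mul_top (fun j k => cc (θ j) (η k)) (fun _ _ _ => ccsame' _ _ _)
    (fun _ _ _ => ccsame _ _ _) (fun _ _ _ _ => cc4 _ _ _ _) A hwpow
  have hpow := pow_eq_adjugate_of_trace A (by omega) htr
  have hpowC : ∀ i j, (A ^ (n - 1)) i j * ∏ l, cc (θ l) (η l) = 0 := by
    intro i j
    rw [hpow, Matrix.smul_apply, smul_mul_assoc, hadj, smul_zero]
  -- the generic matrix
  have hM : (Matrix.of fun i j => ExteriorAlgebra.ι ℂ (X i j)) =
      ∑ p, (x p).map (algebraMap ℂ (ExteriorAlgebra ℂ (I → ℂ))) *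
      Matrix.scalar (Fin n) (ExteriorAlgebra.ι ℂ (e p)) := by
    ext i j
    rw [Matrix.sum_apply]
    simp only [of_apply, X, map_sum, map_smul, scalar_apply, mul_diagonal, map_apply]
    refine Finset.sum_congr rfl fun p _ => ?_
    rw [Algebra.smul_def]
  have hstd := std_pow x e
  have hMpow : (Matrix.of fun i j => ExteriorAlgebra.ι ℂ (X i j)) ^ N =
      (Subalgebra.center ℂ (ExteriorAlgebra ℂ (I → ℂ))).val.mapMatrix (A ^ (n - 1)) := by
    rw [map_pow, hA, ← pow_mul, ← hN]
  rw [← hM, hMpow] at hstd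
  have hC : ((∏ l, cc (θ l) (η l) : Subalgebra.center ℂ (ExteriorAlgebra ℂ (I → ℂ))) :
      ExteriorAlgebra ℂ (I → ℂ)) =
      (((List.finRange n).flatMap fun l =>
        [(Sum.inr (Sum.inl l) : I), Sum.inr (Sum.inr l)]).map fun i => ExteriorAlgebra.ι ℂ (b i)).prod := by
    rw [← List.prod_ofFn, List.ofFn_eq_map, List.map_flatMap, List.flatMap, List.prod_flatten,
      List.map_map]
    refine (map_list_prod (Subalgebra.center ℂ (ExteriorAlgebra ℂ (I → ℂ))).val _).trans ?_
    rw [List.map_map]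
    congr 1
    refine List.map_congr_left fun l _ => ?_
    simp [cc, θ, η, g]
  have hne := list_ne_zero ((List.ofFn fun p : Fin N => (Sum.inl p : I)) ++
    ((List.finRange n).flatMap fun l => [(Sum.inr (Sum.inl l) : I), Sum.inr (Sum.inr l)]))
    (by
      rw [List.nodup_append]
      refine ⟨List.nodup_ofFn.2 Sum.inl_injective, ?_, ?_⟩
      · rw [List.nodup_flatMap]
        refine ⟨by simp, ?_⟩
        refine (List.nodup_finRange n).imp ?_
        intro a b hab
        simp [Function.onFun, hab.symm]
      · intro a ha b hb
        simp at ha hb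
        obtain ⟨y, rfl⟩ := ha
        obtain ⟨z, rfl | rfl⟩ := hb <;> simp)
  rw [List.map_append, List.prod_append] at hne
  ext i j
  have h1 := congrArg Subtype.val (hpowC i j)
  rw [MulMemClass.coe_mul, hC] at h1
  have h2 : (((A ^ (n - 1)) i j : Subalgebra.center ℂ (ExteriorAlgebra ℂ (I → ℂ))) :
      ExteriorAlgebra ℂ (I → ℂ)) = algebraMap ℂ _ (standardPolynomial x i j) *
        ExteriorAlgebra.ιMulti ℂ N e := by
    have := congrFun (congrFun hstd i) j
    rw [scalar_apply, mul_diagonal] at this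
    exact this
  rw [h2, ExteriorAlgebra.ιMulti_apply, mul_assoc, ← Algebra.smul_def] at h1
  rw [List.map_ofFn] at hne
  by_contra hc
  apply hne
  have hc' : standardPolynomial x i j ≠ 0 := hc
  have h3 := congrArg (fun y => (standardPolynomial x i j)⁻¹ • y) h1
  simp only [smul_smul, inv_mul_cancel₀ hc', one_smul] at h3
  refine h3.trans ?_
  exact smul_zero _

end main

/-- **Kostant's theorem**: for even `n`, the skew-symmetric `n × n` complex matrices
satisfy the standard identity of degree `2n − 2`. -/
theorem skew_symmetric_standard_identity (n : ℕ) (hn : Even n)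
    (x : Fin (2 * n - 2) → Matrix (Fin n) (Fin n) ℂ)
    (hskew : ∀ i, (x i)ᵀ = -(x i)) :
    standardPolynomial x = 0 := by
  obtain ⟨m, rfl⟩ := hn
  rcases Nat.eq_zero_or_pos m with rfl | hm
  · ext i
    exact i.elim0
  · exact main_aux m hm (m + m) _ (by omega) (by omega) x hskew
end

section
/- Let g be a finite-dimensional complex semisimple Lie algebra with Killing form used to identify g with g*, and let d : ∧g → ∧g be the Lie algebra cohomology coboundary operator. Then for any g-invariant element u of ∧g that lies in the image of d, one has u = 0; i.e. d(∧g) ∩ (∧g)^g = 0. -/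
open ExteriorAlgebra

namespace CobAux

lemma intDiag_of_iSup {V : Type*} [AddCommGroup V] [Module ℂ V] (D : Module.End ℂ V)
    (h : ⨆ n : ℤ, D.eigenspace (n : ℂ) = ⊤) : 
    (⨆ μ : ℂ, D.eigenspace μ = ⊤) ∧ ∀ μ, D.eigenspace μ ≠ ⊥ → ∃ n : ℤ, μ = n := by
  constructor
  · rw [eq_top_iff, ← h]
    exact iSup_le fun n => le_iSup (fun μ : ℂ => D.eigenspace μ) (n : ℂ)
  · intro μ hμ
    by_contra hn
    push Not at hn
    apply hμ
    have := D.eigenspaces_iSupIndep μ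
    rw [← top_inf_eq (D.eigenspace μ), ← disjoint_iff]
    refine Disjoint.mono_left ?_ this.symm
    rw [← h]
    exact iSup_le fun n => le_iSup₂_of_le (n : ℂ) (hn n).symm le_rfl

lemma trace_sq {V : Type*} [AddCommGroup V] [Module ℂ V] [FiniteDimensional ℂ V]
    (D : Module.End ℂ V) (h1 : ⨆ μ : ℂ, D.eigenspace μ = ⊤)
    (h2 : ∀ μ, D.eigenspace μ ≠ ⊥ → ∃ n : ℤ, μ = n) :
    ∃ r : ℝ, 0 ≤ r ∧ LinearMap.trace ℂ V (D * D) = r ∧ (r = 0 → D = 0) := by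
  classical
  have hds := DirectSum.isInternal_submodule_of_iSupIndep_of_iSup_eq_top
      D.eigenspaces_iSupIndep h1
  have hfin : {μ | D.eigenspace μ ≠ ⊥}.Finite :=
      WellFoundedGT.finite_ne_bot_of_iSupIndep D.eigenspaces_iSupIndep
  have hm : ∀ μ, Set.MapsTo (D * D) (D.eigenspace μ) (D.eigenspace μ) := by
    intro μ x hx
    have hx' : D x = μ • x := Module.End.mem_eigenspace_iff.mp hx
    simp only [SetLike.mem_coe, Module.End.mem_eigenspace_iff, Module.End.mul_apply, hx', map_smul]
  have htr := LinearMap.trace_eq_sum_trace_restrict' hds hfin hm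
  have hr : ∀ μ, LinearMap.trace ℂ _ ((D * D).restrict (hm μ))
      = μ ^ 2 * (Module.finrank ℂ (D.eigenspace μ) : ℂ) := by
    intro μ
    have : (D * D).restrict (hm μ) = (μ ^ 2) • LinearMap.id := by
      ext ⟨x, hx⟩
      have hx' : D x = μ • x := Module.End.mem_eigenspace_iff.mp hx
      change D (D x) = (μ ^ 2) • x
      rw [hx', map_smul, hx', smul_smul, pow_two]
    rw [this, map_smul, LinearMap.trace_id, smul_eq_mul]
  have hre : ∀ μ ∈ hfin.toFinset, μ ^ 2 * (Module.finrank ℂ (D.eigenspace μ) : ℂ) =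
      ((μ.re ^ 2 * (Module.finrank ℂ (D.eigenspace μ) : ℝ) : ℝ) : ℂ) := by
    intro μ hμ
    obtain ⟨n, rfl⟩ := h2 μ (by simpa using hμ)
    simp
  refine ⟨∑ μ ∈ hfin.toFinset, μ.re ^ 2 * (Module.finrank ℂ (D.eigenspace μ) : ℝ),
    Finset.sum_nonneg fun μ _ => by positivity, ?_, ?_⟩
  · rw [htr, Complex.ofReal_sum]
    exact Finset.sum_congr rfl fun μ hμ => (hr μ).trans (hre μ hμ)
  · intro h0
    rw [Finset.sum_eq_zero_iff_of_nonneg (fun μ _ => by positivity)] at h0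
    have hall : ∀ μ, D.eigenspace μ ≤ LinearMap.ker D := by
      intro μ
      by_cases hb : D.eigenspace μ = ⊥
      · rw [hb]; exact bot_le
      · have := h0 μ (by simpa using hb)
        have hpos : (Module.finrank ℂ (D.eigenspace μ) : ℝ) ≠ 0 := by
          rw [Nat.cast_ne_zero]
          intro hz
          exact hb (Submodule.finrank_eq_zero.mp hz)
        obtain ⟨n, rfl⟩ := h2 μ hb
        have hn : (n : ℂ) = 0 := by
          have h3 : ((n : ℂ).re) = 0 := by simpa [hpos] using this
          simpa using h3
        rw [hn, Module.End.eigenspace_zero]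
    have : (⊤ : Submodule ℂ V) ≤ LinearMap.ker D := h1 ▸ iSup_le hall
    exact LinearMap.ker_eq_top.mp (top_le_iff.mp this)

/-- A nilpotent Casimir forces all `sl₂`-triples to act trivially. -/
lemma triv_of_nilpotent {V : Type*} [AddCommGroup V] [Module ℂ V] [FiniteDimensional ℂ V]
    {σ : Type*} [Fintype σ] (h e f : σ → Module.End ℂ V) (c : σ → ℝ) (hc : ∀ i, 0 < c i)
    (hef : ∀ i, e i * f i - f i * e i = h i)
    (hhe : ∀ i, h i * e i - e i * h i = (2 : ℂ) • e i)
    (hhf : ∀ i, h i * f i - f i * h i = (-2 : ℂ) • f i)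
    (h1 : ∀ i, ⨆ μ : ℂ, (h i).eigenspace μ = ⊤)
    (h2 : ∀ i μ, (h i).eigenspace μ ≠ ⊥ → ∃ n : ℤ, μ = n)
    (hnil : IsNilpotent (∑ i, (((c i : ℂ) ^ 2) • (h i * h i) + (c i : ℂ) • (e i * f i)))) :
    ∀ i, h i = 0 ∧ e i = 0 := by
  choose r hr0 hr hrz using fun i => trace_sq (h i) (h1 i) (h2 i)
  have htef : ∀ i, LinearMap.trace ℂ V (e i * f i) = (r i / 2 : ℝ) := by
    intro i
    have h4 : LinearMap.trace ℂ V (h i * h i) = 2 * LinearMap.trace ℂ V (e i * f i) := by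
      nth_rw 2 [← hef i]
      have e1 : h i * e i = e i * h i + (2 : ℂ) • e i := by rw [← hhe i]; abel
      rw [mul_sub, map_sub, ← mul_assoc, ← mul_assoc, LinearMap.trace_mul_comm ℂ (h i * f i) (e i),
        ← mul_assoc, e1, add_mul, map_add, smul_mul_assoc, map_smul, smul_eq_mul]
      ring
    rw [hr] at h4
    push_cast
    rw [h4]; ring
  have ht := (LinearMap.isNilpotent_trace_of_isNilpotent hnil).eq_zero
  rw [map_sum] at ht
  have ht2 : ((∑ i, (c i ^ 2 + c i / 2) * r i : ℝ) : ℂ) = 0 := by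
    rw [← ht]
    push_cast
    refine Finset.sum_congr rfl fun i _ => ?_
    rw [map_add, map_smul, map_smul, hr, htef]
    simp only [smul_eq_mul]; push_cast; ring
  have ht3 : (∑ i, (c i ^ 2 + c i / 2) * r i : ℝ) = 0 := by exact_mod_cast ht2
  rw [Finset.sum_eq_zero_iff_of_nonneg
    (fun i _ => by have := hc i; have := hr0 i; positivity)] at ht3
  intro i
  have hri : r i = 0 := by
    have hci := hc i
    have : c i ^ 2 + c i / 2 ≠ 0 := by positivity
    simpa [this] using ht3 i (Finset.mem_univ i)
  have hh := hrz i hri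
  refine ⟨hh, ?_⟩
  have := hhe i
  rw [hh, zero_mul, mul_zero, sub_zero] at this
  simpa using this.symm

/-- Fitting decomposition: a sum of elements `R i (m i)` killed by the Casimir vanishes. -/
lemma fitting {V : Type*} [AddCommGroup V] [Module ℂ V] [FiniteDimensional ℂ V]
    {σ : Type*} [Fintype σ] (h e f : σ → Module.End ℂ V) (c : σ → ℝ) (hc : ∀ i, 0 < c i)
    (hef : ∀ i, e i * f i - f i * e i = h i)
    (hhe : ∀ i, h i * e i - e i * h i = (2 : ℂ) • e i)
    (hhf : ∀ i, h i * f i - f i * h i = (-2 : ℂ) • f i)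
    (h1 : ∀ i, ⨆ μ : ℂ, (h i).eigenspace μ = ⊤)
    (h2 : ∀ i μ, (h i).eigenspace μ ≠ ⊥ → ∃ n : ℤ, μ = n)
    (C : Module.End ℂ V)
    (hC : C = (∑ i, (((c i : ℂ) ^ 2) • (h i * h i) + (c i : ℂ) • (e i * f i))))
    (hch : ∀ i, Commute C (h i)) (hce : ∀ i, Commute C (e i)) (hcf : ∀ i, Commute C (f i)) :
    ∃ n, 1 ≤ n ∧ IsCompl (LinearMap.ker (C ^ n)) (LinearMap.range (C ^ n)) ∧ 
      ∀ x ∈ LinearMap.ker (C ^ n), ∀ i, h i x = 0 ∧ e i x = 0 := by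
  obtain ⟨n, hn⟩ := (Filter.eventually_atTop.mp C.eventually_isCompl_ker_pow_range_pow)
  refine ⟨max n 1, le_max_right _ _, hn _ (le_max_left _ _), ?_⟩
  set m := max n 1
  set N := LinearMap.ker (C ^ m) with hN
  have hst : ∀ T : Module.End ℂ V, Commute C T → ∀ x ∈ N, T x ∈ N := by
    intro T hT x hx
    rw [hN, LinearMap.mem_ker] at hx ⊢
    have := LinearMap.congr_fun (hT.pow_left m).eq x
    simp only [Module.End.mul_apply] at this
    rw [this, hx, map_zero]
  have key := triv_of_nilpotent (V := N) (fun i => (h i).restrict (hst _ (hch i)))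
    (fun i => (e i).restrict (hst _ (hce i))) (fun i => (f i).restrict (hst _ (hcf i))) c hc
    (fun i => by
      ext x; simpa using LinearMap.congr_fun (hef i) x)
    (fun i => by
      ext x; simpa using LinearMap.congr_fun (hhe i) x)
    (fun i => by
      ext x; simpa using LinearMap.congr_fun (hhf i) x)
    (fun i => Module.End.genEigenspace_restrict_eq_top _ (h1 i))
    (fun i μ hμ => by
      apply h2 i μ
      contrapose! hμ
      have := Module.End.genEigenspace_restrict (h i) N 1 μ (hst _ (hch i))
      unfold Module.End.eigenspace at hμ ⊢
      rw [this, hμ]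
      simp)
    (by
      refine ⟨m, ?_⟩
      have : (∑ i, (((c i : ℂ) ^ 2) • ((h i).restrict (hst _ (hch i)) * (h i).restrict (hst _ (hch i)))
          + (c i : ℂ) • ((e i).restrict (hst _ (hce i)) * (f i).restrict (hst _ (hcf i)))))
          = C.restrict (hst _ (Commute.refl C)) := by
        ext x
        rw [LinearMap.coe_restrict_apply, hC]
        simp [LinearMap.sum_apply]
      rw [this, Module.End.pow_restrict]
      ext x
      simpa using x.2)
  intro x hx i
  obtain ⟨k1, k2⟩ := key i
  constructor
  · simpa using congrArg Subtype.val (LinearMap.congr_fun k1 ⟨x, hx⟩)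
  · simpa using congrArg Subtype.val (LinearMap.congr_fun k2 ⟨x, hx⟩)


open LieAlgebra LieAlgebra.IsKilling LieModule in
lemma structure_lemma (L : Type*) [LieRing L] [LieAlgebra ℂ L] [Module.Finite ℂ L]
    [LieAlgebra.IsKilling ℂ L] :
    ∃ (s : ℕ) (h e f : Fin s → L) (c : Fin s → ℝ), (∀ i, 0 < c i) ∧
      (∀ i, ⁅e i, f i⁆ = h i) ∧ (∀ i, ⁅h i, e i⁆ = (2 : ℂ) • e i) ∧
      (∀ i, ⁅h i, f i⁆ = (-2 : ℂ) • f i) ∧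
      (∀ i, ⨆ n : ℤ, (ad ℂ L (h i)).eigenspace (n : ℂ) = ⊤) ∧
      (∀ x : L, x = ∑ i, (((c i : ℂ) ^ 2 * killingForm ℂ L (h i) x) • h i +
        ((c i : ℂ) * killingForm ℂ L (f i) x) • e i)) := by
  classical
  obtain ⟨y, hy⟩ := LieAlgebra.exists_isCartanSubalgebra_engel ℂ L
  set H := LieSubalgebra.engel ℂ y
  let σ := H.root
  suffices ∃ (h e f : σ → L) (c : σ → ℝ), (∀ i, 0 < c i) ∧
      (∀ i, ⁅e i, f i⁆ = h i) ∧ (∀ i, ⁅h i, e i⁆ = (2 : ℂ) • e i) ∧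
      (∀ i, ⁅h i, f i⁆ = (-2 : ℂ) • f i) ∧
      (∀ i, ⨆ n : ℤ, (ad ℂ L (h i)).eigenspace (n : ℂ) = ⊤) ∧
      (∀ x : L, x = ∑ i, (((c i : ℂ) ^ 2 * killingForm ℂ L (h i) x) • h i +
        ((c i : ℂ) * killingForm ℂ L (f i) x) • e i)) by
    obtain ⟨h, e, f, c, q1, q2, q3, q4, q5, q6⟩ := this
    let E := (Fintype.equivFin σ).symm
    refine ⟨Fintype.card σ, h ∘ E, e ∘ E, f ∘ E, c ∘ E, fun i => q1 _, fun i => q2 _,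
      fun i => q3 _, fun i => q4 _, fun i => q5 _, fun x => ?_⟩
    conv_lhs => rw [q6 x]
    exact (Equiv.sum_comp E (fun i => (((c i : ℂ) ^ 2 * killingForm ℂ L (h i) x) • h i +
        ((c i : ℂ) * killingForm ℂ L (f i) x) • e i))).symm
  have hnz : ∀ α : σ, (α : Weight ℂ H L).IsNonZero := fun α => H.isNonZero_coe_root α
  choose h e f hsl he hf using fun α : σ => exists_isSl2Triple_of_weight_isNonZero (hnz α)
  have hco : ∀ α : σ, h α = coroot (α : Weight ℂ H L) :=
    fun α => (hsl α).h_eq_coroot (hnz α) (he α) (hf α)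
  -- Killing form on the Cartan subalgebra
  have hK : ∀ x y : H, killingForm ℂ L x y = ∑ α : σ, (α : Weight ℂ H L) x * (α : Weight ℂ H L) y := by
    intro x y
    have := LinearMap.congr_fun (LinearMap.congr_fun (restrict_killingForm_eq_sum (H := H)) x) y
    rw [← Finset.sum_coe_sort] at this
    simp only [LinearMap.sum_apply, LinearMap.smulRight_apply, LinearMap.smul_apply,
      smul_eq_mul] at this
    exact this
  have hint : ∀ (β : Weight ℂ H L) (α : σ), ∃ n : ℤ, β (coroot (α : Weight ℂ H L)) = n :=
    fun β α => ⟨_, apply_coroot_eq_cast (α : Weight ℂ H L) β⟩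
  choose n hn using hint
  -- the value on coroots
  let k : σ → ℝ := fun α => ∑ β : σ, ((n β α : ℤ) : ℝ) ^ 2
  have hk : ∀ α, killingForm ℂ L (h α) (h α) = k α := by
    intro α
    rw [hco, hK]
    simp only [k, hn]
    push_cast
    exact Finset.sum_congr rfl fun β _ => (pow_two _).symm
  have hkpos : ∀ α, 0 < k α := by
    intro α
    refine Finset.sum_pos' (fun β _ => by positivity) ⟨α, Finset.mem_univ _, ?_⟩
    have h2 : ((n α α : ℤ) : ℂ) = 2 := by rw [← hn, root_apply_coroot (hnz α)]
    have h3 : n α α = 2 := by exact_mod_cast h2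
    rw [h3]; norm_num
  have hkef : ∀ α, killingForm ℂ L (f α) (e α) = (k α / 2 : ℂ) := by
    intro α
    have h1 : killingForm ℂ L (h α) (h α) = 2 * killingForm ℂ L (e α) (f α) := by
      nth_rw 2 [← (hsl α).lie_e_f]
      rw [← LieModule.traceForm_apply_lie_apply, (hsl α).lie_h_e_smul ℂ]
      simp
    rw [LieModule.traceForm_comm]
    rw [← hk, h1]; ring
  have hspan : ∀ p : Submodule ℂ L, (∀ x : H, (x : L) ∈ p) → (∀ α, e α ∈ p) → p = ⊤ := by
    intro p hp1 hp2
    have htop := cartan_sup_iSup_rootSpace_eq_top (K := ℂ) (L := L) H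
    rw [← LieSubmodule.toSubmodule_inj] at htop
    simp only [LieSubmodule.sup_toSubmodule, LieSubmodule.iSup_toSubmodule,
      LieSubmodule.top_toSubmodule] at htop
    rw [eq_top_iff, ← htop]
    refine sup_le (fun x hx => hp1 ⟨x, hx⟩) (iSup₂_le fun α hα => ?_)
    intro x hx
    have h1 := finrank_rootSpace_eq_one α hα
    let α' : σ := ⟨α, by simpa [σ, LieSubalgebra.root] using hα⟩
    obtain ⟨a, ha⟩ := (finrank_eq_one_iff_of_nonzero' (⟨e α', he α'⟩ : rootSpace H α)
      (by
        intro h0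
        exact (hsl α').e_ne_zero (congrArg Subtype.val h0))).mp h1 ⟨x, hx⟩
    have hx' : x = a • e α' := (congrArg Subtype.val ha).symm
    rw [hx']
    exact p.smul_mem _ (hp2 α')
  refine ⟨h, e, f, fun α => 2 / k α, fun α => by have := hkpos α; positivity,
    fun α => (hsl α).lie_e_f, fun α => (hsl α).lie_h_e_smul ℂ, fun α => ?_, fun α => ?_, ?_⟩
  · rw [(hsl α).lie_h_f_nsmul, ← Nat.cast_smul_eq_nsmul ℂ, ← neg_smul]; norm_num
  · apply hspan
    · intro x
      apply (le_iSup (fun n : ℤ => (ad ℂ L (h α)).eigenspace (n : ℂ)) 0)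
      rw [Module.End.mem_eigenspace_iff, hco]
      have : ⁅coroot (α : Weight ℂ H L), x⁆ = 0 := trivial_lie_zero _ _ _ _
      have := congrArg Subtype.val this
      simpa using this
    · intro β
      apply (le_iSup (fun n : ℤ => (ad ℂ L (h α)).eigenspace (n : ℂ)) (n β α))
      rw [Module.End.mem_eigenspace_iff, hco, ← hn]
      exact lie_eq_smul_of_mem_rootSpace (he β) _
  · -- reproducing property
    let T : L →ₗ[ℂ] L := ∑ α : σ, ((((2 / k α : ℝ) : ℂ) ^ 2) • (killingForm ℂ L (h α)).smulRight (h α) +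
        (((2 / k α : ℝ) : ℂ)) • (killingForm ℂ L (f α)).smulRight (e α))
    have hT : ∀ x, T x = ∑ α, ((((2 / k α : ℝ) : ℂ) ^ 2 * killingForm ℂ L (h α) x) • h α +
        (((2 / k α : ℝ) : ℂ) * killingForm ℂ L (f α) x) • e α) := by
      intro x
      simp [T, LinearMap.sum_apply, smul_smul]
    suffices LinearMap.eqLocus T LinearMap.id = ⊤ by
      intro x
      rw [← hT]
      have hx : x ∈ LinearMap.eqLocus T LinearMap.id := this ▸ Submodule.mem_top
      exact hx.symm
    have hcart : ∀ x : H, (x : L) ∈ rootSpace H (0 : H → ℂ) := by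
      intro x
      rw [rootSpace_zero_eq]; exact x.2
    have hfun : ∀ α : σ, ((α : Weight ℂ H L) : H → ℂ) ≠ 0 := fun α => hnz α
    apply hspan
    · intro x
      change T x = x
      rw [hT]
      have hf0 : ∀ α, killingForm ℂ L (f α) x = 0 := by
        intro α
        apply killingForm_apply_eq_zero_of_mem_rootSpace_of_add_ne_zero ℂ L H (hf α) (hcart x)
        simpa using hfun α
      simp only [hf0, mul_zero, zero_smul, add_zero]
      have hkx : ∀ (α : σ) (z : H), ((2 / k α : ℝ) : ℂ) * killingForm ℂ L (h α) z
          = (α : Weight ℂ H L) z := by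
        intro α z
        have hz : ∀ z : H, killingForm ℂ L (h α) z = 2 * 
          ((α : Weight ℂ H L) ((cartanEquivDual H).symm (α : Weight ℂ H L)))⁻¹ * (α : Weight ℂ H L) z := by
          intro z
          have := traceForm_coroot (α : Weight ℂ H L) z
          rw [hco]
          have h5 : killingForm ℂ L (coroot (α : Weight ℂ H L) : L) z =
            traceForm ℂ H L (coroot (α : Weight ℂ H L)) z := rfl
          rw [h5, this]
          simp [mul_assoc]
        have hh := hk α
        have hz1 := hz (coroot (α : Weight ℂ H L))
        rw [← hco, hh, root_apply_coroot (hnz α)] at hz1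
        have hk0 : (k α : ℂ) ≠ 0 := by exact_mod_cast (hkpos α).ne'
        rw [hz]
        push_cast
        field_simp
        rw [hz1]
        ring
      have hsum : (∑ α : σ, (((2 / k α : ℝ) : ℂ) ^ 2 * killingForm ℂ L (h α) x) • h α : L)
          = ((∑ α : σ, (((2 / k α : ℝ) : ℂ) ^ 2 * killingForm ℂ L (h α) x) • 
            coroot (α : Weight ℂ H L) : H) : L) := by
        push_cast
        exact Finset.sum_congr rfl fun α _ => by rw [hco]
      rw [hsum]
      congr 1
      apply (cartanEquivDual H).injective
      ext z
      have hform : ∀ a : H, cartanEquivDual H a z = killingForm ℂ L a z := fun a => rfl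
      rw [hform, hform, ← hsum, hK]
      rw [map_sum, LinearMap.sum_apply]
      refine Finset.sum_congr rfl fun α _ => ?_
      rw [map_smul, LinearMap.smul_apply, smul_eq_mul, ← hkx, ← hkx]
      ring
    · intro β
      change T (e β) = e β
      rw [hT, Finset.sum_eq_single β]
      · have h0 : killingForm ℂ L (h β) (e β) = 0 := by
          rw [hco]
          apply killingForm_apply_eq_zero_of_mem_rootSpace_of_add_ne_zero ℂ L H (hcart _) (he β)
          simpa using hfun β
        have hk0 : (k β : ℂ) ≠ 0 := by exact_mod_cast (hkpos β).ne'
        rw [h0, hkef, mul_zero, zero_smul, zero_add]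
        push_cast
        have : (2 / (k β : ℂ)) * (k β / 2) = 1 := by field_simp
        rw [this, one_smul]
      · intro α _ hαβ
        have h0 : killingForm ℂ L (h α) (e β) = 0 := by
          rw [hco]
          apply killingForm_apply_eq_zero_of_mem_rootSpace_of_add_ne_zero ℂ L H (hcart _) (he β)
          simpa using hfun β
        have h1 : killingForm ℂ L (f α) (e β) = 0 := by
          apply killingForm_apply_eq_zero_of_mem_rootSpace_of_add_ne_zero ℂ L H (hf α) (he β)
          intro h2
          apply hαβ
          apply Subtype.ext
          apply DFunLike.coe_injective
          exact (neg_add_eq_zero.mp h2)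
        simp [h0, h1]
      · simp

lemma expand
    {L : Type*} [LieRing L] [LieAlgebra ℂ L]
    {κ : Type*} [Fintype κ] [DecidableEq κ] (b b' : κ → L)
    (hdual : ∀ i j, killingForm ℂ L (b i) (b' j) = if i = j then 1 else 0)
    (hbasis : Submodule.span ℂ (Set.range b) = ⊤)
    (x : L) : x = ∑ j, killingForm ℂ L (b' j) x • b j := by
  let T : L →ₗ[ℂ] L := ∑ j, (killingForm ℂ L (b' j)).smulRight (b j)
  have hT : ∀ x, T x = ∑ j, killingForm ℂ L (b' j) x • b j := by
    intro x; simp [T, LinearMap.sum_apply]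
  rw [← hT]
  have : T = LinearMap.id := by
    apply LinearMap.ext_on_range hbasis
    intro i
    rw [hT]
    simp [LieModule.traceForm_comm ℂ L L (b' _) (b i), hdual]
  rw [this]; rfl

lemma nondeg
    {L : Type*} [LieRing L] [LieAlgebra ℂ L]
    {κ : Type*} [Fintype κ] [DecidableEq κ] (b b' : κ → L)
    (hdual : ∀ i j, killingForm ℂ L (b i) (b' j) = if i = j then 1 else 0)
    (hbasis : Submodule.span ℂ (Set.range b) = ⊤)
    (x : L) (h : ∀ y, killingForm ℂ L y x = 0) : x = 0 := by
  rw [expand b b' hdual hbasis x]; simp [h]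

lemma isKilling
    {L : Type*} [LieRing L] [LieAlgebra ℂ L]
    {κ : Type*} [Fintype κ] [DecidableEq κ] (b b' : κ → L)
    (hdual : ∀ i j, killingForm ℂ L (b i) (b' j) = if i = j then 1 else 0)
    (hbasis : Submodule.span ℂ (Set.range b) = ⊤)
    : LieAlgebra.IsKilling ℂ L := by
  constructor
  rw [eq_bot_iff]
  intro x hx
  rw [LieIdeal.mem_killingCompl] at hx
  exact nondeg b b' hdual hbasis x fun y => hx y trivial

lemma expand'
    {L : Type*} [LieRing L] [LieAlgebra ℂ L]
    {κ : Type*} [Fintype κ] [DecidableEq κ] (b b' : κ → L)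
    (hdual : ∀ i j, killingForm ℂ L (b i) (b' j) = if i = j then 1 else 0)
    (hbasis : Submodule.span ℂ (Set.range b) = ⊤)
    (x : L) : x = ∑ j, killingForm ℂ L (b j) x • b' j := by
  rw [← sub_eq_zero]
  apply nondeg b b' hdual hbasis
  intro y
  rw [expand b b' hdual hbasis y]
  rw [map_sum, LinearMap.sum_apply]
  refine Finset.sum_eq_zero fun i _ => ?_
  simp [hdual]

/-- Independence of the canonical tensor from the choice of dual bases. -/
lemma indep
    {L : Type*} [LieRing L] [LieAlgebra ℂ L]
    {κ : Type*} [Fintype κ] [DecidableEq κ] (b b' : κ → L)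
    (hdual : ∀ i j, killingForm ℂ L (b i) (b' j) = if i = j then 1 else 0)
    (hbasis : Submodule.span ℂ (Set.range b) = ⊤)
    {W : Type*} [AddCommGroup W] [Module ℂ W] (F : L →ₗ[ℂ] L →ₗ[ℂ] W)
    {τ : Type*} [Fintype τ] (c c' : τ → L)
    (hc : ∀ x, x = ∑ j, killingForm ℂ L (c' j) x • c j) :
    ∑ i, F (b i) (b' i) = ∑ j, F (c j) (c' j) := by
  have h1 : ∀ i, F (b i) (b' i) = ∑ j, killingForm ℂ L (c' j) (b i) • F (c j) (b' i) := by
    intro i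
    conv_lhs => rw [hc (b i)]
    simp [LinearMap.sum_apply]
  have h2 : ∀ j, F (c j) (c' j) = ∑ i, killingForm ℂ L (b i) (c' j) • F (c j) (b' i) := by
    intro j
    conv_lhs => rw [expand' b b' hdual hbasis (c' j)]
    simp
  simp_rw [h1, h2]
  rw [Finset.sum_comm]
  simp_rw [LieModule.traceForm_comm ℂ L L (c' _) (b _)]

lemma invar
    {L : Type*} [LieRing L] [LieAlgebra ℂ L]
    {κ : Type*} [Fintype κ] [DecidableEq κ] (b b' : κ → L)
    (hdual : ∀ i j, killingForm ℂ L (b i) (b' j) = if i = j then 1 else 0)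
    (hbasis : Submodule.span ℂ (Set.range b) = ⊤)
    {W : Type*} [AddCommGroup W] [Module ℂ W] (F : L →ₗ[ℂ] L →ₗ[ℂ] W) (x : L) :
    ∑ i, (F ⁅x, b i⁆ (b' i) + F (b i) ⁅x, b' i⁆) = 0 := by
  have h1 : ∀ i, F ⁅x, b i⁆ (b' i) = ∑ j, killingForm ℂ L (b' j) ⁅x, b i⁆ • F (b j) (b' i) := by
    intro i
    conv_lhs => rw [expand b b' hdual hbasis ⁅x, b i⁆]
    simp [LinearMap.sum_apply]
  have h2 : ∀ j, F (b j) ⁅x, b' j⁆ = ∑ i, killingForm ℂ L (b i) ⁅x, b' j⁆ • F (b j) (b' i) := by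
    intro j
    conv_lhs => rw [expand' b b' hdual hbasis ⁅x, b' j⁆]
    simp
  have h3 : ∀ i j, killingForm ℂ L (b i) ⁅x, b' j⁆ = - killingForm ℂ L (b' j) ⁅x, b i⁆ := by
    intro i j
    rw [← LieModule.traceForm_apply_lie_apply, ← lie_skew, map_neg, LinearMap.neg_apply,
      LieModule.traceForm_comm]
  rw [Finset.sum_add_distrib]
  simp_rw [h1, h2, h3]
  rw [Finset.sum_comm, ← Finset.sum_add_distrib]
  refine Finset.sum_eq_zero fun i _ => ?_
  rw [← Finset.sum_add_distrib]
  simp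

lemma sum_lie
    {L : Type*} [LieRing L] [LieAlgebra ℂ L]
    {κ : Type*} [Fintype κ] [DecidableEq κ] (b b' : κ → L)
    (hdual : ∀ i j, killingForm ℂ L (b i) (b' j) = if i = j then 1 else 0)
    (hbasis : Submodule.span ℂ (Set.range b) = ⊤)
    : ∑ i, ⁅b i, b' i⁆ = 0 := by
  have := indep b b' hdual hbasis (LieModule.toEnd ℂ L L : L →ₗ[ℂ] L →ₗ[ℂ] L) b' b
    (expand' b b' hdual hbasis)
  simp only [LieHom.coe_toLinearMap, LieModule.toEnd_apply_apply] at this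
  have h2 : ∑ i, ⁅b i, b' i⁆ = - ∑ i, ⁅b i, b' i⁆ := by
    conv_lhs => rw [this]
    rw [← Finset.sum_neg_distrib]
    exact Finset.sum_congr rfl fun i _ => (lie_skew _ _).symm
  have : IsAddTorsionFree L := .of_isTorsionFree ℂ L
  exact self_eq_neg.mp h2


lemma ext_finite (L : Type*) [AddCommGroup L] [Module ℂ L] [Module.Finite ℂ L] :
    Module.Finite ℂ (ExteriorAlgebra ℂ L) :=
  Module.Finite.of_basis (Module.finBasis ℂ L).ExteriorAlgebra

/-- Uniqueness of derivations of the exterior algebra. -/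
lemma der_ext {L : Type*} [AddCommGroup L] [Module ℂ L]
    (D D' : Module.End ℂ (ExteriorAlgebra ℂ L))
    (h1 : D 1 = 0) (h1' : D' 1 = 0) (hm : ∀ u v, D (u * v) = D u * v + u * D v)
    (hm' : ∀ u v, D' (u * v) = D' u * v + u * D' v)
    (hi : ∀ y, D (ι ℂ y) = D' (ι ℂ y)) : D = D' := by
  refine LinearMap.ext fun u => ?_
  induction u using ExteriorAlgebra.induction with
  | algebraMap r => simp [Algebra.algebraMap_eq_smul_one, h1, h1']
  | ι x => exact hi x
  | mul a b ha hb => rw [hm, hm', ha, hb]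
  | add a b ha hb => rw [map_add, map_add, ha, hb]

/-- Diagonalizability passes to the exterior algebra. -/
lemma der_diag {L : Type*} [AddCommGroup L] [Module ℂ L] (A : Module.End ℂ L)
    (D : Module.End ℂ (ExteriorAlgebra ℂ L))
    (h1 : D 1 = 0) (hm : ∀ u v, D (u * v) = D u * v + u * D v)
    (hi : ∀ y, D (ι ℂ y) = ι ℂ (A y))
    (hA : ⨆ n : ℤ, A.eigenspace (n : ℂ) = ⊤) : ⨆ n : ℤ, D.eigenspace (n : ℂ) = ⊤ := by
  set S := ⨆ n : ℤ, D.eigenspace (n : ℂ) with hS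
  have hle : ∀ (n : ℤ) u, D u = (n : ℂ) • u → u ∈ S := fun n u hu =>
    le_iSup (fun n : ℤ => D.eigenspace (n : ℂ)) n (Module.End.mem_eigenspace_iff.mpr hu)
  rw [eq_top_iff]
  rintro u -
  induction u using ExteriorAlgebra.induction with
  | algebraMap r => exact hle 0 _ (by simp [Algebra.algebraMap_eq_smul_one, h1])
  | ι x =>
    have : x ∈ ⨆ n : ℤ, A.eigenspace (n : ℂ) := hA ▸ Submodule.mem_top
    induction this using Submodule.iSup_induction' with
    | mem n x hx => 
      rw [Module.End.mem_eigenspace_iff] at hx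
      exact hle n _ (by rw [hi, hx, map_smul])
    | zero => rw [map_zero]; exact S.zero_mem
    | add x y _ _ hx hy => rw [map_add]; exact S.add_mem hx hy
  | mul a b ha hb =>
    induction ha using Submodule.iSup_induction' with
    | mem n a ha => 
      induction hb using Submodule.iSup_induction' with
      | mem m b hb => 
        rw [Module.End.mem_eigenspace_iff] at ha hb
        refine hle (n + m) _ ?_
        rw [hm, ha, hb, smul_mul_assoc, mul_smul_comm, ← add_smul]; push_cast; rfl
      | zero => rw [mul_zero]; exact S.zero_mem
      | add x y _ _ hx hy => rw [mul_add]; exact S.add_mem hx hy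
    | zero => rw [zero_mul]; exact S.zero_mem
    | add x y _ _ hx hy => rw [add_mul]; exact S.add_mem hx hy
  | add a b ha hb => exact S.add_mem ha hb

end CobAux

/-- For a finite-dimensional complex semisimple Lie algebra `g`, identified with its dual
via the Killing form (here via dual bases `b`, `b'`), every `g`-invariant element of the
exterior algebra `∧g` lying in the image of the Chevalley–Eilenberg coboundary `d`
vanishes: `d(∧g) ∩ (∧g)^g = 0`.  Here `ρ` is the adjoint action of `g` on `∧g` (the
derivation extending `ad`), and `d` is the coboundary operator, characterized as the
antiderivation of degree `+1` whose value on degree-one elements is the image of the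
transpose of the bracket under the Killing identification. -/
theorem coboundary_inter_invariants_eq_zero
    {L : Type*} [LieRing L] [LieAlgebra ℂ L] [Module.Finite ℂ L]
    [LieAlgebra.IsSemisimple ℂ L]
    {κ : Type*} [Fintype κ] [DecidableEq κ] (b b' : κ → L)
    (hdual : ∀ i j, killingForm ℂ L (b i) (b' j) = if i = j then 1 else 0)
    (hbasis : Submodule.span ℂ (Set.range b) = ⊤)
    -- `ρ` is the adjoint action of `L` on the exterior algebra, extending `ad` by
    -- derivations:
    (ρ : L → Module.End ℂ (ExteriorAlgebra ℂ L))
    (hρι : ∀ x y : L, ρ x (ι ℂ y) = ι ℂ ⁅x, y⁆)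
    (hρmul : ∀ x u v, ρ x (u * v) = ρ x u * v + u * ρ x v)
    (hρone : ∀ x, ρ x 1 = 0)
    -- `d` is the Chevalley–Eilenberg coboundary operator on `∧g ≅ ∧g*`:
    (d : ExteriorAlgebra ℂ L →ₗ[ℂ] ExteriorAlgebra ℂ L)
    (hdι : ∀ x : L, d (ι ℂ x) = (-(1 / 2) : ℂ) • ∑ i, ι ℂ (b' i) * ι ℂ ⁅b i, x⁆)
    (hdone : d 1 = 0)
    (hdanti : ∀ (x : L) (u : ExteriorAlgebra ℂ L),
      d (ι ℂ x * u) = d (ι ℂ x) * u - ι ℂ x * d u)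
    (u : ExteriorAlgebra ℂ L) (hu : u ∈ LinearMap.range d)
    (hinv : ∀ x : L, ρ x u = 0) :
    u = 0 := by
  classical
  have := CobAux.isKilling b b' hdual hbasis
  have := CobAux.ext_finite L
  obtain ⟨s, h, e, f, c, hc, hef, hhe, hhf, hdiag, hrep⟩ := CobAux.structure_lemma L
  -- `ρ` is a linear representation
  have hadd : ∀ x y, ρ (x + y) = ρ x + ρ y := fun x y =>
    CobAux.der_ext _ _ (hρone _) (by simp [hρone]) (hρmul _)
      (fun u v => by simp only [LinearMap.add_apply, hρmul, add_mul, mul_add]; abel)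
      (fun z => by simp [hρι])
  have hsmul : ∀ (a : ℂ) x, ρ (a • x) = a • ρ x := fun a x =>
    CobAux.der_ext _ _ (hρone _) (by simp [hρone]) (hρmul _)
      (fun u v => by simp [hρmul])
      (fun z => by simp [hρι])
  have hlie : ∀ x y, ρ ⁅x, y⁆ = ρ x * ρ y - ρ y * ρ x := fun x y =>
    CobAux.der_ext _ _ (hρone _) (by simp [hρone]) (hρmul _)
      (fun u v => by
        simp only [LinearMap.sub_apply, Module.End.mul_apply, hρmul, map_add, sub_mul, mul_sub]
        abel)
      (fun z => by simp [hρι])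
  let R : L →ₗ[ℂ] Module.End ℂ (ExteriorAlgebra ℂ L) :=
    { toFun := ρ, map_add' := hadd, map_smul' := hsmul }
  let F : L →ₗ[ℂ] L →ₗ[ℂ] Module.End ℂ (ExteriorAlgebra ℂ L) :=
    (LinearMap.mul ℂ (Module.End ℂ (ExteriorAlgebra ℂ L))).compl₁₂ R R
  have hF : ∀ x y, F x y = ρ x * ρ y := fun x y => rfl
  -- the Casimir operator
  set C : Module.End ℂ (ExteriorAlgebra ℂ L) := ∑ i, ρ (b i) * ρ (b' i) with hCdef
  have hCcomm : ∀ x, Commute C (ρ x) := by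
    intro x
    have := CobAux.invar b b' hdual hbasis F x
    simp only [hF, hlie] at this
    have h2 : ρ x * C - C * ρ x = 0 := by
      rw [← this, hCdef, Finset.mul_sum, Finset.sum_mul, ← Finset.sum_sub_distrib]
      exact Finset.sum_congr rfl fun i _ => by
        simp only [sub_mul, mul_sub, mul_assoc]; abel
    exact (sub_eq_zero.mp h2).symm
  have hC2 : C = ∑ i, (((c i : ℂ) ^ 2) • (ρ (h i) * ρ (h i)) + (c i : ℂ) • (ρ (e i) * ρ (f i))) := by
    have := CobAux.indep b b' hdual hbasis F
      (Sum.elim (fun i => ((c i : ℂ) ^ 2) • h i) (fun i => (c i : ℂ) • e i)) (Sum.elim h f)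
      (fun x => by
        conv_lhs => rw [hrep x]
        rw [Fintype.sum_sum_type, Finset.sum_add_distrib]
        simp only [Sum.elim_inl, Sum.elim_inr, smul_smul, mul_comm])
    simp only [hF] at this
    rw [hCdef, this, Fintype.sum_sum_type, Finset.sum_add_distrib]
    simp only [Sum.elim_inl, Sum.elim_inr, hsmul, smul_mul_assoc]
  have hID := fun i => CobAux.intDiag_of_iSup (ρ (h i))
    (CobAux.der_diag (LieAlgebra.ad ℂ L (h i)) (ρ (h i)) (hρone _) (hρmul _)
      (fun y => by simp [hρι]) (hdiag i))
  obtain ⟨n, hn1, hcompl, hker⟩ := CobAux.fitting (fun i => ρ (h i)) (fun i => ρ (e i))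
    (fun i => ρ (f i)) c hc
    (fun i => by rw [← hlie, hef]) (fun i => by rw [← hlie, hhe, hsmul])
    (fun i => by rw [← hlie, hhf, hsmul]) (fun i => (hID i).1) (fun i => (hID i).2)
    C hC2 (fun i => hCcomm _) (fun i => hCcomm _) (fun i => hCcomm _)
  have hker' : ∀ w ∈ LinearMap.ker (C ^ n), ∀ x, ρ x w = 0 := by
    intro w hw x
    have h1 : R x w = 0 := by
      rw [hrep x, map_sum, LinearMap.sum_apply]
      refine Finset.sum_eq_zero fun i _ => ?_
      have h2 := (hker w hw i).1
      have h3 := (hker w hw i).2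
      have h2' : R (h i) w = 0 := h2
      have h3' : R (e i) w = 0 := h3
      simp [h2', h3']
    exact h1
  -- the formula for `d`
  have hd : ∀ w, d w = (-(1 / 2) : ℂ) • ∑ i, ι ℂ (b' i) * ρ (b i) w := by
    intro w
    induction w using CliffordAlgebra.left_induction with
    | algebraMap r =>
      have h1 : (algebraMap ℂ (ExteriorAlgebra ℂ L)) r = r • 1 := Algebra.algebraMap_eq_smul_one r
      have h2 : d ((algebraMap ℂ (ExteriorAlgebra ℂ L)) r) = 0 := by rw [h1, map_smul, hdone, smul_zero]
      have h3 : ∀ x, ρ x ((algebraMap ℂ (ExteriorAlgebra ℂ L)) r) = 0 := by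
        intro x; rw [h1, map_smul, hρone, smul_zero]
      refine h2.trans ?_
      symm
      rw [Finset.sum_eq_zero, smul_zero]
      intro i _
      exact (congrArg (fun z => ι ℂ (b' i) * z) (h3 (b i))).trans (mul_zero _)
    | add x y hx hy =>
      simp only [map_add, hx, hy, mul_add, Finset.sum_add_distrib, smul_add]
    | ι_mul w x hw =>
      change d (ι ℂ x * w) = (-(1 / 2) : ℂ) • ∑ i, ι ℂ (b' i) * ρ (b i) (ι ℂ x * w)
      rw [hdanti, hw, hdι]
      simp only [hρmul, hρι, mul_add, Finset.sum_add_distrib, smul_add, smul_mul_assoc,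
        Finset.sum_mul, mul_smul_comm, Finset.mul_sum, mul_assoc]
      rw [sub_eq_add_neg, ← smul_neg, ← Finset.sum_neg_distrib]
      congr 2
      refine Finset.sum_congr rfl fun i _ => ?_
      rw [← mul_assoc, ← mul_assoc, ← neg_mul]
      congr 1
      exact (eq_neg_of_add_eq_zero_left (ExteriorAlgebra.ι_add_mul_swap (b' i) x)).symm
  obtain ⟨w, rfl⟩ := hu
  -- `d w` is a sum of elements `ρ (b i) m`
  have hd2 : d w = (-(1 / 2) : ℂ) • ∑ i, ρ (b i) (ι ℂ (b' i) * w) := by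
    rw [hd]
    congr 1
    simp only [hρmul, hρι, Finset.sum_add_distrib]
    rw [← Finset.sum_mul, ← map_sum, CobAux.sum_lie b b' hdual hbasis]
    simp
  have hmemker : d w ∈ LinearMap.ker (C ^ n) := by
    obtain ⟨m, rfl⟩ : ∃ m, n = m + 1 := ⟨n - 1, by omega⟩
    rw [LinearMap.mem_ker, pow_succ, Module.End.mul_apply]
    have : C (d w) = 0 := by
      rw [hCdef, LinearMap.sum_apply]
      exact Finset.sum_eq_zero fun i _ => by rw [Module.End.mul_apply, hinv, map_zero]
    rw [this, map_zero]
  have hmemran : d w ∈ LinearMap.range (C ^ n) := by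
    rw [hd2]
    refine Submodule.smul_mem _ _ (Submodule.sum_mem _ fun i _ => ?_)
    have htop : ι ℂ (b' i) * w ∈ LinearMap.ker (C ^ n) ⊔ LinearMap.range (C ^ n) := by
      rw [hcompl.sup_eq_top]; trivial
    obtain ⟨p, hp, q, ⟨r, rfl⟩, hpq⟩ := Submodule.mem_sup.mp htop
    rw [← hpq, map_add, hker' p hp, zero_add]
    refine ⟨ρ (b i) r, ?_⟩
    exact LinearMap.congr_fun ((hCcomm (b i)).pow_left n).eq r
  exact Submodule.disjoint_def.mp hcompl.disjoint _ hmemker hmemran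
end

section
/- Let g be a complex reductive Lie algebra and x ∈ g. With g identified with g* via the Killing form, let dx ∈ ∧²g be the coboundary of x. If k is maximal such that (dx)^k ≠ 0, then dim [g, x] = 2k, and (dx)^k = c · w₁ ∧ ⋯ ∧ w_{2k} for some nonzero scalar c, where w₁, …, w_{2k} is a basis of [x, g]. -/
open ExteriorAlgebra LieAlgebra

namespace PowCob

variable {V : Type*} [AddCommGroup V] [Module ℂ V]

theorem exists_dual {I : Type*} {w : I → V} (hw : LinearIndependent ℂ w) (c : I → ℂ) :
    ∃ d : Module.Dual ℂ V, ∀ i, d (w i) = c i := by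
  obtain ⟨g, hg⟩ := LinearMap.exists_leftInverse_of_injective _
    (LinearMap.ker_eq_bot.2 hw)
  refine ⟨(Finsupp.linearCombination ℂ c) ∘ₗ g, fun i => ?_⟩
  have := LinearMap.congr_fun hg (Finsupp.single i 1)
  simp at this
  simp [this]

/-- left contraction on the exterior algebra -/
noncomputable def ctr (d : Module.Dual ℂ V) : ExteriorAlgebra ℂ V →ₗ[ℂ] ExteriorAlgebra ℂ V :=
  CliffordAlgebra.contractLeft (Q := (0 : QuadraticForm ℂ V)) d

theorem ctr_mul (d : Module.Dual ℂ V) (a : V) (y : ExteriorAlgebra ℂ V) :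
    ctr d (ι ℂ a * y) = d a • y - ι ℂ a * ctr d y :=
  CliffordAlgebra.contractLeft_ι_mul (Q := (0 : QuadraticForm ℂ V)) d a y

theorem ctr_one (d : Module.Dual ℂ V) : ctr d (1 : ExteriorAlgebra ℂ V) = 0 :=
  CliffordAlgebra.contractLeft_one (Q := (0 : QuadraticForm ℂ V)) d

theorem ctr_ι (d : Module.Dual ℂ V) (a : V) :
    ctr d (ι ℂ a) = algebraMap ℂ _ (d a) :=
  CliffordAlgebra.contractLeft_ι (Q := (0 : QuadraticForm ℂ V)) d a

theorem ctr_two (d : Module.Dual ℂ V) (a e : V) :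
    ctr d (ι ℂ a * ι ℂ e) = ι ℂ (d a • e - d e • a) := by
  rw [ctr_mul, ctr_ι, ← Algebra.commutes, ← Algebra.smul_def, map_sub, map_smul, map_smul]

theorem ctr_prod (d : Module.Dual ℂ V) : ∀ {n : ℕ} (w : Fin n → V), (∀ i, d (w i) = 0) →
    ctr d (List.ofFn fun i => ι ℂ (w i)).prod = 0
  | 0, w, _ => by simp [ctr_one]
  | n + 1, w, h => by
    rw [List.ofFn_succ, List.prod_cons, ctr_mul, h 0,
      ctr_prod d (fun i => w i.succ) (fun i => h i.succ)]
    simp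

theorem prod_ne_zero : ∀ {n : ℕ} (w : Fin n → V), LinearIndependent ℂ w →
    (List.ofFn fun i => ι ℂ (w i)).prod ≠ 0
  | 0, w, _ => by simp
  | n + 1, w, h => by
    intro h0
    obtain ⟨d, hd⟩ := exists_dual h (fun i => if i = 0 then 1 else 0)
    have h1 := congrArg (ctr d) h0
    rw [List.ofFn_succ, List.prod_cons, ctr_mul, hd 0,
      ctr_prod d (fun i => w i.succ) (fun i => by simp [hd])] at h1
    simp only [if_true, one_smul, mul_zero, sub_zero, map_zero] at h1
    exact prod_ne_zero (fun i => w i.succ)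
      (h.comp Fin.succ (Fin.succ_injective _)) h1

theorem swap (a e : V) : ι ℂ a * ι ℂ e = - (ι ℂ e * ι ℂ a) :=
  eq_neg_of_add_eq_zero_left (ι_add_mul_swap a e)

theorem pair_comm (a e f : V) : Commute (ι ℂ a * ι ℂ e) (ι ℂ f) := by
  unfold Commute SemiconjBy
  rw [mul_assoc, swap e f, mul_neg, ← mul_assoc, swap a f]
  simp [mul_assoc]

theorem pair_sq (a e : V) : (ι ℂ a * ι ℂ e) * (ι ℂ a * ι ℂ e) = 0 := by
  rw [← mul_assoc, (pair_comm a e a).eq, ← mul_assoc, ι_sq_zero]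
  simp

theorem add_pow_sq_zero {A : Type*} [Ring A] (p s : A) (hp : p * p = 0) (hc : Commute p s) :
    ∀ n : ℕ, (p + s) ^ (n + 1) = s ^ (n + 1) + (n + 1) • (p * s ^ n)
  | 0 => by simp [add_comm]
  | n + 1 => by
    rw [pow_succ', add_pow_sq_zero p s hp hc n, add_mul, mul_add, mul_add, mul_smul_comm,
      mul_smul_comm, ← mul_assoc p p, hp, ← mul_assoc s p, ← hc.eq, mul_assoc p s,
      ← pow_succ', ← pow_succ', succ_nsmul _ (n + 1)]
    simp only [zero_mul, smul_zero]
    abel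

theorem sum_pow : ∀ {n : ℕ} (u v : Fin n → V),
    (∑ i, ι ℂ (u i) * ι ℂ (v i)) ^ n
      = (n.factorial : ℂ) • (List.ofFn fun i => ι ℂ (u i) * ι ℂ (v i)).prod ∧
    (∑ i, ι ℂ (u i) * ι ℂ (v i)) ^ (n + 1) = 0
  | 0, u, v => by simp
  | n + 1, u, v => by
    obtain ⟨h1, h2⟩ := sum_pow (fun i => u i.succ) (fun i => v i.succ)
    have hc : Commute (ι ℂ (u 0) * ι ℂ (v 0))
        (∑ i : Fin n, ι ℂ (u i.succ) * ι ℂ (v i.succ)) :=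
      Commute.sum_right _ _ _ fun i _ => (pair_comm _ _ _).mul_right (pair_comm _ _ _)
    rw [Fin.sum_univ_succ, add_pow_sq_zero _ _ (pair_sq _ _) hc,
      add_pow_sq_zero _ _ (pair_sq _ _) hc]
    constructor
    · rw [h2, h1, zero_add, List.ofFn_succ, List.prod_cons, Nat.factorial_succ, mul_smul_comm,
        ← Nat.cast_smul_eq_nsmul ℂ, smul_smul]
      push_cast
      rfl
    · rw [pow_succ _ (n + 1), h2]
      simp

theorem reduce {m : ℕ} (u v : Fin (m + 1) → V) (j : Fin (m + 1))
    (a c : Fin (m + 1) → ℂ) (hj : c j ≠ 0) (h0 : ∑ i, (a i • u i + c i • v i) = 0) :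
    ∃ u' v' : Fin m → V, ∑ i, ι ℂ (u i) * ι ℂ (v i) = ∑ i, ι ℂ (u' i) * ι ℂ (v' i) := by
  rw [Fin.sum_univ_succAbove _ j] at h0
  have hv : v j = -((c j)⁻¹ • (a j • u j + ∑ i, (a (j.succAbove i) • u (j.succAbove i)
      + c (j.succAbove i) • v (j.succAbove i)))) := by
    have : c j • v j = -(a j • u j + ∑ i, (a (j.succAbove i) • u (j.succAbove i)
      + c (j.succAbove i) • v (j.succAbove i))) := by
      rw [eq_neg_iff_add_eq_zero, ← h0]; abel
    rw [← smul_neg, ← this, smul_smul, inv_mul_cancel₀ hj, one_smul]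
  refine ⟨fun i => u (j.succAbove i) - ((c j)⁻¹ * c (j.succAbove i)) • u j,
    fun i => v (j.succAbove i) + ((c j)⁻¹ * a (j.succAbove i)) • u j, ?_⟩
  rw [Fin.sum_univ_succAbove _ j, hv]
  simp only [map_neg, map_smul, map_add, map_sum, map_sub, mul_neg, mul_smul_comm, mul_add,
    ι_sq_zero, smul_zero, zero_add, Finset.mul_sum, Finset.smul_sum]
  rw [← Finset.sum_neg_distrib, ← Finset.sum_add_distrib]
  refine Finset.sum_congr rfl fun i _ => ?_
  rw [swap (u j) (u (j.succAbove i))]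
  simp only [sub_mul, smul_mul_assoc, ι_sq_zero, smul_zero, sub_zero, smul_add, smul_smul,
    smul_neg]
  abel

theorem exists_indep (z : ExteriorAlgebra ℂ V)
    (h : ∃ (n : ℕ) (u v : Fin n → V), z = ∑ i, ι ℂ (u i) * ι ℂ (v i)) :
    ∃ (n : ℕ) (u v : Fin n → V), z = ∑ i, ι ℂ (u i) * ι ℂ (v i) ∧
      LinearIndependent ℂ (Sum.elim u v) := by
  classical
  obtain ⟨u, v, hz⟩ := Nat.find_spec h
  have hmin := fun m hm => Nat.find_min h (m := m) hm
  generalize Nat.find h = n at u v hz hmin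
  refine ⟨n, u, v, hz, ?_⟩
  by_contra hli
  rw [Fintype.not_linearIndependent_iff] at hli
  obtain ⟨g, hg, i, hi⟩ := hli
  rw [Fintype.sum_sum_type] at hg
  simp only [Sum.elim_inl, Sum.elim_inr] at hg
  cases n with
  | zero => rcases i with i | i <;> exact i.elim0
  | succ m =>
    rcases i with j | j
    · obtain ⟨u', v', h'⟩ := reduce (fun i => - v i) u j (fun i => - g (Sum.inr i))
        (fun i => g (Sum.inl i)) hi (by
          simp only [smul_neg, neg_smul, neg_neg, Finset.sum_add_distrib]
          rw [add_comm]; exact hg)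
      refine hmin m (Nat.lt_succ_self m) ⟨u', v', ?_⟩
      rw [hz, ← h']
      refine Finset.sum_congr rfl fun i _ => ?_
      rw [swap]; simp
    · obtain ⟨u', v', h'⟩ := reduce u v j (fun i => g (Sum.inl i))
        (fun i => g (Sum.inr i)) hi (by
          simp only [Finset.sum_add_distrib]; exact hg)
      exact hmin m (Nat.lt_succ_self m) ⟨u', v', hz.trans h'⟩

/-- interleaving of two families -/
def inter {n : ℕ} (u v : Fin n → V) (i : Fin (2 * n)) : V :=
  if (i : ℕ) % 2 = 0 then u ⟨i / 2, by omega⟩ else v ⟨i / 2, by omega⟩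

theorem inter_range {n : ℕ} (u v : Fin n → V) :
    Set.range (inter u v) = Set.range (Sum.elim u v) := by
  ext y
  constructor
  · rintro ⟨i, rfl⟩
    unfold inter
    split_ifs
    · exact ⟨Sum.inl _, rfl⟩
    · exact ⟨Sum.inr _, rfl⟩
  · rintro ⟨i | i, rfl⟩
    · refine ⟨⟨2 * i, by omega⟩, ?_⟩
      simp [inter]
    · refine ⟨⟨2 * i + 1, by omega⟩, ?_⟩
      have : (2 * (i : ℕ) + 1) / 2 = i := by omega
      simp [inter, this]

theorem inter_prod {n : ℕ} (u v : Fin n → V) :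
    (List.ofFn fun i => ι ℂ (inter u v i)).prod
      = (List.ofFn fun i => ι ℂ (u i) * ι ℂ (v i)).prod := by
  rw [List.ofFn_mul', List.prod_flatten, List.map_ofFn]
  congr 2
  funext i
  have : (2 * (i : ℕ) + 1) / 2 = i := by omega
  simp [inter, this]

theorem span_contr {n : ℕ} (u v : Fin n → V) (hli : LinearIndependent ℂ (Sum.elim u v)) (y : V) :
    y ∈ Submodule.span ℂ (Set.range (Sum.elim u v)) ↔
      ∃ d : Module.Dual ℂ V, ∑ i, (d (u i) • v i - d (v i) • u i) = y := by
  constructor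
  · intro hy
    obtain ⟨c, rfl⟩ := (Submodule.mem_span_range_iff_exists_fun ℂ).1 hy
    obtain ⟨d, hd⟩ := exists_dual hli (Sum.elim (fun i => c (Sum.inr i)) fun i => - c (Sum.inl i))
    refine ⟨d, ?_⟩
    have h1 := fun i => hd (Sum.inl i)
    have h2 := fun i => hd (Sum.inr i)
    simp only [Sum.elim_inl, Sum.elim_inr] at h1 h2
    rw [Fintype.sum_sum_type]
    simp only [h1, h2, Sum.elim_inl, Sum.elim_inr, neg_smul, sub_neg_eq_add,
      Finset.sum_add_distrib]
    rw [add_comm]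
  · rintro ⟨d, rfl⟩
    refine Submodule.sum_mem _ fun i _ => Submodule.sub_mem _ ?_ ?_
    · exact Submodule.smul_mem _ _ (Submodule.subset_span ⟨Sum.inr i, rfl⟩)
    · exact Submodule.smul_mem _ _ (Submodule.subset_span ⟨Sum.inl i, rfl⟩)

end PowCob


open ExteriorAlgebra LieAlgebra

/-- Let `g` be a complex reductive Lie algebra identified with its dual via the Killing
form (via dual bases `b`, `b'`), and for `x ∈ g` let `dx ∈ ∧²g` be the Chevalley–Eilenberg
coboundary of `x`.  If `k` is maximal with `(dx)^k ≠ 0`, then `dim [g,x] = 2k` and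
`(dx)^k = c · w₁ ∧ ⋯ ∧ w_{2k}` for some nonzero scalar `c` and some basis
`w₁, …, w_{2k}` of `[x, g]`. -/
theorem pow_coboundary_eq_wedge_of_centralizer
    {L : Type*} [LieRing L] [LieAlgebra ℂ L] [Module.Finite ℂ L]
    (hred : LieAlgebra.radical ℂ L = LieAlgebra.center ℂ L)
    {κ : Type*} [Fintype κ] [DecidableEq κ] (b b' : κ → L)
    (hdual : ∀ i j, killingForm ℂ L (b i) (b' j) = if i = j then 1 else 0)
    (hbasis : Submodule.span ℂ (Set.range b) = ⊤)
    (x : L) (dx : ExteriorAlgebra ℂ L)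
    (hdx : dx = (-(1 / 2) : ℂ) • ∑ i, ι ℂ (b' i) * ι ℂ ⁅b i, x⁆)
    (k : ℕ) (hk : dx ^ k ≠ 0) (hk1 : dx ^ (k + 1) = 0) :
    Module.finrank ℂ (LinearMap.range ((ad ℂ L) x)) = 2 * k ∧
    ∃ (c : ℂ), c ≠ 0 ∧ ∃ w : Fin (2 * k) → L,
      LinearIndependent ℂ w ∧
      Submodule.span ℂ (Set.range w) = LinearMap.range ((ad ℂ L) x) ∧
      dx ^ k = c • (List.ofFn fun i => ι ℂ (w i)).prod := by
  classical
  set K := killingForm ℂ L with hK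
  have hsymm : ∀ y z, K y z = K z y := fun y z => LieModule.traceForm_comm ℂ L L y z
  have hexp : ∀ y, ∑ i, K y (b' i) • b i = y := by
    intro y
    have hy : y ∈ Submodule.span ℂ (Set.range b) := hbasis ▸ Submodule.mem_top
    obtain ⟨c, rfl⟩ := (Submodule.mem_span_range_iff_exists_fun ℂ).1 hy
    simp [hdual]
  have hext : ∀ f g : Module.Dual ℂ L, (∀ i, f (b i) = g (b i)) → f = g := by
    intro f g hfg
    refine LinearMap.ext_on hbasis ?_
    rintro _ ⟨i, rfl⟩
    exact hfg i
  have hinj : ∀ y z, K y = K z → y = z := by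
    intro y z h
    rw [← hexp y, ← hexp z, h]
  have hrep : ∀ d : Module.Dual ℂ L, K (∑ i, d (b i) • b' i) = d := by
    intro d
    refine hext _ _ fun j => ?_
    rw [hsymm]
    simp [hdual]
  have hexp' : ∀ z, ∑ i, K z (b i) • b' i = z := fun z => hinj _ _ (hrep (K z))
  have hctr : ∀ y, PowCob.ctr (K y) dx = ι ℂ ⁅x, y⁆ := by
    intro y
    rw [hdx, map_smul, map_sum]
    simp only [PowCob.ctr_two]
    rw [← map_sum, ← map_smul]
    congr 1
    rw [Finset.sum_sub_distrib]
    have e1 : ∑ i, K y (b' i) • ⁅b i, x⁆ = ⁅y, x⁆ := by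
      conv_rhs => rw [← hexp y]
      rw [sum_lie]
      simp
    have e2 : ∑ i, K y ⁅b i, x⁆ • b' i = ⁅x, y⁆ := by
      conv_rhs => rw [← hexp' ⁅x, y⁆]
      refine Finset.sum_congr rfl fun i _ => ?_
      congr 1
      rw [hsymm, hsymm _ (b i)]
      exact LieModule.traceForm_apply_lie_apply ℂ L L _ _ _
    rw [e1, e2, ← lie_skew x y]
    module
  obtain ⟨n, u, v, hz, hli⟩ := PowCob.exists_indep dx (by
    let e := Fintype.equivFin κ
    refine ⟨Fintype.card κ, fun i => (-(1 / 2) : ℂ) • b' (e.symm i), fun i => ⁅b (e.symm i), x⁆, ?_⟩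
    rw [hdx, Finset.smul_sum, ← e.symm.sum_comp]
    simp only [map_smul, smul_mul_assoc])
  have hspan : Submodule.span ℂ (Set.range (Sum.elim u v)) = LinearMap.range ((ad ℂ L) x) := by
    have key : ∀ y, ⁅x, y⁆ = ∑ i, (K y (u i) • v i - K y (v i) • u i) := by
      intro y
      apply (ExteriorAlgebra.ι_leftInverse (R := ℂ) (M := L)).injective
      rw [← hctr y, hz, map_sum, map_sum]
      simp only [PowCob.ctr_two]
    ext y
    rw [PowCob.span_contr u v hli]
    constructor
    · rintro ⟨d, rfl⟩
      refine ⟨∑ i, d (b i) • b' i, ?_⟩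
      rw [LieAlgebra.ad_apply, key, hrep]
    · rintro ⟨y, rfl⟩
      exact ⟨K y, (key y).symm⟩
  have hfin : Module.finrank ℂ (LinearMap.range ((ad ℂ L) x)) = 2 * n := by
    rw [← hspan, finrank_span_eq_card hli]
    simp [two_mul]
  have hwspan := (congrArg (Submodule.span ℂ) (PowCob.inter_range u v)).trans hspan
  have hw : LinearIndependent ℂ (PowCob.inter u v) := by
    rw [linearIndependent_iff_card_eq_finrank_span, Set.finrank, hwspan, hfin]
    simp
  obtain ⟨hp1, hp2⟩ := PowCob.sum_pow u v
  rw [← hz, ← PowCob.inter_prod] at hp1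
  rw [← hz] at hp2
  have hfac : (n.factorial : ℂ) ≠ 0 := Nat.cast_ne_zero.2 n.factorial_ne_zero
  have hne : dx ^ n ≠ 0 := by
    rw [hp1]
    exact smul_ne_zero hfac (PowCob.prod_ne_zero _ hw)
  have hkn : k = n := by
    apply le_antisymm
    · by_contra hlt
      exact hk (pow_eq_zero_of_le (by omega) hp2)
    · by_contra hlt
      exact hne (pow_eq_zero_of_le (by omega) hk1)
  subst hkn
  exact ⟨hfin, _, hfac, _, hw, hwspan, hp1⟩
end

section
/- Let g be a finite-dimensional complex semisimple Lie algebra, ∧^k g its k-th exterior power with the adjoint action, and Cas the Casimir element of U(g) relative to the Killing form. Then every eigenvalue of the action of Cas on ∧^k g is at most k. -/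
open ExteriorAlgebra


namespace KostantCas

lemma comb {Δ V : Type*} [Fintype Δ] [DecidableEq Δ] [AddCommGroup V] (wt : Δ → V)
    (hinj : Function.Injective wt) (neg : Δ → Δ) (hneg : ∀ a, wt (neg a) = - wt a)
    (f : V → ℝ) (hfneg : ∀ v, f (-v) = - f v) (hf : ∀ a, f (wt a) ≠ 0)
    (n ip : Δ → Δ → ℝ) (hn : ∀ a b, 0 ≤ n a b)
    (hip : ∀ s t, ip s t = n (neg s) t - n s t)
    (hone : ∀ s, ip s s + ∑ α, n α s = 1)
    (hsymm : ∀ s t, n (neg s) t = n (neg t) s)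
    (hadd : ∀ s t, s ≠ t → n (neg s) t = 0 ∨ ∃ r, wt r = wt t - wt s ∧ n (neg s) t = n r s)
    (S : Finset Δ) :
    ∑ s ∈ S, ∑ t ∈ S, ip s t + ∑ s ∈ S, ∑ α with 0 < f (wt α), ip α s ≤ S.card := by
  classical
  have hnn : ∀ a, neg (neg a) = a := fun a => hinj (by simp [hneg])
  set P : Finset Δ := Finset.univ.filter (fun α => 0 < f (wt α)) with hP
  set A : Δ → Δ → ℝ := fun s t => ∑ α ∈ P, if wt α = wt t - wt s then n α s else 0 with hA
  have hA0 : ∀ s t, 0 ≤ A s t := fun s t => Finset.sum_nonneg fun α _ => by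
    split_ifs <;> simp [hn]
  have hAr : ∀ s t r, wt r = wt t - wt s → r ∈ P → n r s ≤ A s t := by
    intro s t r hr hrP
    have := Finset.single_le_sum (f := fun α => if wt α = wt t - wt s then n α s else 0) (s := P)
      (fun α _ => by split_ifs <;> simp [hn]) hrP
    simpa [hr] using this
  have key : ∀ s t, s ≠ t → n (neg s) t ≤ A s t + A t s := by
    intro s t hst
    rcases hadd s t hst with h | ⟨r, hr, h⟩
    · rw [h]; exact add_nonneg (hA0 _ _) (hA0 _ _)
    rcases lt_or_gt_of_ne (hf r) with hlt | hgt
    · rcases hadd t s hst.symm with h' | ⟨r', hr', h'⟩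
      · rw [hsymm, h']; exact add_nonneg (hA0 _ _) (hA0 _ _)
      · rw [hsymm, h']
        have : r' ∈ P := by
          simp only [hP, Finset.mem_filter, Finset.mem_univ, true_and]
          have : wt r' = - wt r := by rw [hr, hr']; abel
          rw [this, hfneg]; linarith
        linarith [hAr t s r' hr' this, hA0 s t]
    · have : r ∈ P := by simp [hP, hgt]
      rw [h]; linarith [hAr s t r hr this, hA0 t s]
  have hsumA : ∀ s, ∑ t ∈ S, A s t ≤ ∑ α ∈ P, n α s := by
    intro s
    simp only [hA]
    rw [Finset.sum_comm]
    refine Finset.sum_le_sum fun α _ => ?_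
    by_cases h : ∃ t, wt α = wt t - wt s
    · obtain ⟨t, ht⟩ := h
      have : ∀ t', (wt α = wt t' - wt s) ↔ t = t' := by
        intro t'
        rw [ht, sub_left_inj]
        exact hinj.eq_iff
      simp only [this]
      rw [Finset.sum_ite_eq]
      split_ifs <;> simp [hn]
    · push Not at h
      simp [h, hn]
  have hall : ∀ s, ∑ α, n α s = ∑ α ∈ P, (n α s + n (neg α) s) := by
    intro s
    rw [← Finset.sum_filter_add_sum_filter_not Finset.univ (fun α => 0 < f (wt α)),
      Finset.sum_add_distrib]
    congr 1
    refine Finset.sum_bij' (fun a _ => neg a) (fun a _ => neg a) ?_ ?_ ?_ ?_ ?_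
    · intro a ha
      simp only [hP, Finset.mem_filter, Finset.mem_univ, true_and, hneg, hfneg] at ha ⊢
      have := hf a
      push Not at ha
      have := lt_of_le_of_ne ha this
      linarith
    · intro a ha
      simp only [hP, Finset.mem_filter, Finset.mem_univ, true_and, hneg, hfneg] at ha ⊢
      linarith
    · intro a _; exact hnn a
    · intro a _; exact hnn a
    · intro a _; rw [hnn]
  have hcard : (S.card : ℝ) = ∑ s ∈ S, (ip s s + ∑ α ∈ P, (n α s + n (neg α) s)) := by
    simp only [← hall, hone]; simp
  have h1 : ∀ s ∈ S, ∑ t ∈ S, ip s t ≤ ip s s + ∑ t ∈ S, (A s t + A t s) := by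
    intro s hs
    rw [← Finset.add_sum_erase S (fun t => ip s t) hs]
    have : ∑ t ∈ S.erase s, ip s t ≤ ∑ t ∈ S.erase s, (A s t + A t s) := by
      refine Finset.sum_le_sum fun t ht => ?_
      rw [hip]
      linarith [key s t (Finset.ne_of_mem_erase ht).symm, hn s t]
    have h2 : ∑ t ∈ S.erase s, (A s t + A t s) ≤ ∑ t ∈ S, (A s t + A t s) :=
      Finset.sum_le_sum_of_subset_of_nonneg (Finset.erase_subset _ _)
        (fun t _ _ => add_nonneg (hA0 _ _) (hA0 _ _))
    linarith
  have h2 : ∑ s ∈ S, ∑ t ∈ S, ip s t ≤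
      ∑ s ∈ S, ip s s + 2 * ∑ s ∈ S, ∑ α ∈ P, n α s := by
    have e1 := Finset.sum_le_sum h1
    have e2 : ∑ s ∈ S, ∑ t ∈ S, A t s = ∑ s ∈ S, ∑ t ∈ S, A s t := Finset.sum_comm
    have e3 := Finset.sum_le_sum (fun s (_ : s ∈ S) => hsumA s)
    simp only [Finset.sum_add_distrib] at e1
    linarith
  have h3 : ∑ s ∈ S, ∑ α ∈ P, ip α s =
      ∑ s ∈ S, ∑ α ∈ P, n (neg α) s - ∑ s ∈ S, ∑ α ∈ P, n α s := by
    simp only [hip, Finset.sum_sub_distrib]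
  rw [hcard, h3]
  simp only [Finset.sum_add_distrib]
  linarith

section rho
variable {L : Type*} [LieRing L] [LieAlgebra ℂ L]

lemma deriv_ext (D D' : Module.End ℂ (ExteriorAlgebra ℂ L))
    (hι : ∀ y, D (ι ℂ y) = D' (ι ℂ y))
    (hmul : ∀ u v, D (u * v) = D u * v + u * D v)
    (hmul' : ∀ u v, D' (u * v) = D' u * v + u * D' v)
    (h1 : D 1 = 0) (h1' : D' 1 = 0) : D = D' := by
  refine LinearMap.ext fun u => ?_
  induction u using ExteriorAlgebra.induction with
  | algebraMap r => rw [Algebra.algebraMap_eq_smul_one, map_smul, map_smul, h1, h1']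
  | ι x => exact hι x
  | mul a b ha hb => rw [hmul, hmul', ha, hb]
  | add a b ha hb => rw [map_add, map_add, ha, hb]

variable (ρ : L → Module.End ℂ (ExteriorAlgebra ℂ L))
    (hρι : ∀ x y : L, ρ x (ι ℂ y) = ι ℂ ⁅x, y⁆)
    (hρmul : ∀ x u v, ρ x (u * v) = ρ x u * v + u * ρ x v)
    (hρone : ∀ x, ρ x 1 = 0)
include hρι hρmul hρone

lemma rho_add (x y : L) : ρ (x + y) = ρ x + ρ y := by
  apply deriv_ext
  · intro z; simp [hρι]
  · exact hρmul _
  · intro u v; simp only [LinearMap.add_apply, hρmul, add_mul, mul_add]; abel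
  · exact hρone _
  · simp [hρone]

lemma rho_smul (c : ℂ) (x : L) : ρ (c • x) = c • ρ x := by
  apply deriv_ext
  · intro z; simp [hρι]
  · exact hρmul _
  · intro u v; simp only [LinearMap.smul_apply, hρmul, smul_add, smul_mul_assoc, mul_smul_comm]
  · exact hρone _
  · simp [hρone]

lemma rho_lie (x y : L) : ρ ⁅x, y⁆ = ρ x * ρ y - ρ y * ρ x := by
  apply deriv_ext
  · intro z; simp [hρι]
  · exact hρmul _
  · intro u v
    simp only [LinearMap.sub_apply, Module.End.mul_apply, hρmul, map_add, sub_mul, mul_sub]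
    abel
  · exact hρone _
  · simp [hρone]

omit hρι in
lemma rho_ιMulti (x : L) {n : ℕ} (v : Fin n → L) (μ : Fin n → ℂ)
    (hρι : ∀ x y : L, ρ x (ι ℂ y) = ι ℂ ⁅x, y⁆)
    (h : ∀ i, ⁅x, v i⁆ = μ i • v i) :
    ρ x (ExteriorAlgebra.ιMulti ℂ n v) = (∑ i, μ i) • ExteriorAlgebra.ιMulti ℂ n v := by
  induction n with
  | zero => simp [hρone]
  | succ n ih =>
    rw [ExteriorAlgebra.ιMulti_succ_apply, hρmul, hρι, h, ih (Matrix.vecTail v) (fun i => μ i.succ)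
      (fun i => h i.succ), Fin.sum_univ_succ]
    simp only [map_smul, smul_mul_assoc, mul_smul_comm, add_smul]

lemma rho_mem_exteriorPower (x : L) (n : ℕ) (u : ExteriorAlgebra ℂ L) (hu : u ∈ ⋀[ℂ]^n L) :
    ρ x u ∈ ⋀[ℂ]^n L := by
  induction n generalizing u with
  | zero =>
    simp only [pow_zero, Submodule.mem_one] at hu ⊢
    obtain ⟨r, rfl⟩ := hu
    refine ⟨0, ?_⟩
    rw [Algebra.algebraMap_eq_smul_one, Algebra.algebraMap_eq_smul_one, map_smul, hρone,
      zero_smul, smul_zero]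
  | succ n ih =>
    rw [exteriorPower, pow_succ] at hu ⊢
    induction hu using Submodule.mul_induction_on' with
    | mem_mul_mem m hm y hy =>
      rw [hρmul]
      obtain ⟨z, rfl⟩ := hy
      refine add_mem (Submodule.mul_mem_mul (ih _ hm) ⟨z, rfl⟩) ?_
      rw [hρι]
      exact Submodule.mul_mem_mul hm ⟨_, rfl⟩
    | add a ha b hb h1 h2 => rw [map_add]; exact add_mem h1 h2

end rho
end KostantCas
set_option linter.unusedSectionVars false
set_option linter.unusedDecidableInType false

namespace KostantCas

section dual
variable {L : Type*} [LieRing L] [LieAlgebra ℂ L] [Module.Finite ℂ L]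
variable {I J : Type*} [Fintype I] [DecidableEq I] [Fintype J] [DecidableEq J]

/-- dual bases with respect to the Killing form -/
structure DualB (b b' : I → L) : Prop where
  dual : ∀ i j, killingForm ℂ L (b i) (b' j) = if i = j then 1 else 0
  span : Submodule.span ℂ (Set.range b) = ⊤

lemma DualB.expand {b b' : I → L} (h : DualB b b') (x : L) :
    ∑ i, killingForm ℂ L x (b' i) • b i = x := by
  have hx : x ∈ Submodule.span ℂ (Set.range b) := by rw [h.span]; trivial
  obtain ⟨c, rfl⟩ := (Submodule.mem_span_range_iff_exists_fun ℂ).1 hx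
  refine Finset.sum_congr rfl fun i _ => ?_
  congr 1
  simp [h.dual, LinearMap.sum_apply]

lemma DualB.nondeg {b b' : I → L} (h : DualB b b') (x : L)
    (hx : ∀ y, killingForm ℂ L x y = 0) : x = 0 := by
  rw [← h.expand x]; simp [hx]

lemma DualB.expand' {b b' : I → L} (h : DualB b b') (y : L) :
    ∑ i, killingForm ℂ L (b i) y • b' i = y := by
  rw [← sub_eq_zero]
  apply h.nondeg
  intro z
  rw [LieModule.traceForm_comm, ← h.expand z]
  simp [h.dual, LinearMap.sum_apply]

lemma DualB.indep {M : Type*} [AddCommGroup M] [Module ℂ M] {b b' : I → L} (h : DualB b b')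
    {d d' : J → L} (h' : DualB d d') (F : L →ₗ[ℂ] L →ₗ[ℂ] M) :
    ∑ i, F (b i) (b' i) = ∑ j, F (d j) (d' j) := by
  have : ∀ i, F (b i) (b' i) = ∑ j, killingForm ℂ L (b i) (d' j) • F (d j) (b' i) := by
    intro i
    conv_lhs => rw [← h'.expand (b i)]
    simp [LinearMap.sum_apply]
  simp_rw [this]
  rw [Finset.sum_comm]
  refine Finset.sum_congr rfl fun j _ => ?_
  conv_rhs => rw [← h.expand' (d' j)]
  simp

lemma killing_lie_left (x y z : L) :
    killingForm ℂ L ⁅x, y⁆ z = - killingForm ℂ L y ⁅x, z⁆ := by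
  rw [LieModule.traceForm_apply_lie_apply' ]

lemma killing_lie (x y z : L) :
    killingForm ℂ L ⁅x, y⁆ z = killingForm ℂ L x ⁅y, z⁆ :=
  LieModule.traceForm_apply_lie_apply ℂ L L x y z

lemma killing_comm (x y : L) :
    killingForm ℂ L x y = killingForm ℂ L y x := LieModule.traceForm_comm ℂ L L x y

lemma DualB.inv {M : Type*} [AddCommGroup M] [Module ℂ M] {b b' : I → L} (h : DualB b b')
    (F : L →ₗ[ℂ] L →ₗ[ℂ] M) (x : L) :
    ∑ i, (F ⁅x, b i⁆ (b' i) + F (b i) ⁅x, b' i⁆) = 0 := by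
  rw [Finset.sum_add_distrib]
  have : ∀ i, F ⁅x, b i⁆ (b' i) = ∑ j, killingForm ℂ L ⁅x, b i⁆ (b' j) • F (b j) (b' i) := by
    intro i
    conv_lhs => rw [← h.expand ⁅x, b i⁆]
    simp [LinearMap.sum_apply]
  simp_rw [this]
  rw [Finset.sum_comm, ← Finset.sum_add_distrib]
  refine Finset.sum_eq_zero fun j _ => ?_
  have e : F (b j) ⁅x, b' j⁆ = ∑ i, killingForm ℂ L (b i) ⁅x, b' j⁆ • F (b j) (b' i) := by
    conv_lhs => rw [← h.expand' ⁅x, b' j⁆]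
    simp
  rw [e, ← Finset.sum_add_distrib]
  refine Finset.sum_eq_zero fun i _ => ?_
  rw [killing_lie_left, neg_smul, neg_add_cancel]

lemma DualB.killing_eq {b b' : I → L} (h : DualB b b') (y z : L) :
    killingForm ℂ L y z = ∑ i, killingForm ℂ L ⁅y, ⁅z, b i⁆⁆ (b' i) := by
  have hli : LinearIndependent ℂ b := by
    rw [Fintype.linearIndependent_iff]
    intro g hg i
    have := congrArg (fun x => killingForm ℂ L x (b' i)) hg
    simpa [h.dual, LinearMap.sum_apply] using this
  let B : Module.Basis I ℂ L := Module.Basis.mk hli h.span.ge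
  have hr : ∀ x i, B.repr x i = killingForm ℂ L x (b' i) := by
    intro x i
    conv_lhs => rw [← h.expand x]
    have : ∀ j, b j = B j := fun j => by simp [B]
    simp [this, Finsupp.single_apply]
  rw [killingForm_apply_apply, LinearMap.trace_eq_matrix_trace ℂ B, Matrix.trace]
  refine Finset.sum_congr rfl fun i _ => ?_
  rw [Matrix.diag_apply, LinearMap.toMatrix_apply, hr]
  simp [B]

lemma DualB.isKilling {b b' : I → L} (h : DualB b b') : LieAlgebra.IsKilling ℂ L := by
  refine ⟨?_⟩
  rw [eq_bot_iff]
  intro x hx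
  rw [LieIdeal.mem_killingCompl] at hx
  rw [LieSubmodule.mem_bot]
  exact h.nondeg x fun y => by rw [killing_comm]; exact hx y trivial

end dual
end KostantCas

namespace KostantCas
open LieAlgebra LieAlgebra.IsKilling LieModule

section roots
variable {L : Type*} [LieRing L] [LieAlgebra ℂ L] [Module.Finite ℂ L] [LieAlgebra.IsKilling ℂ L]
variable (H : LieSubalgebra ℂ L) [H.IsCartanSubalgebra]

/-- negation of roots -/
noncomputable def rneg (α : H.root) : H.root :=
  ⟨-α.1, by simpa [LieSubalgebra.root] using H.isNonZero_coe_root α⟩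

@[simp] lemma rneg_rneg (α : H.root) : rneg H (rneg H α) = α := by
  ext1; simp [rneg]

lemma rneg_involutive : Function.Involutive (rneg H) := rneg_rneg H

lemma rneg_coe (α : H.root) : ((rneg H α).1 : H → ℂ) = -α.1 := by
  simp [rneg]

lemma exists_rootVectors : ∃ e : H.root → L, (∀ α : H.root, e α ∈ rootSpace H (α.1 : H → ℂ)) ∧
    (∀ α : H.root, killingForm ℂ L (e α) (e (rneg H α)) = 1) := by
  have h0 : ∀ α : H.root, ∃ x ∈ rootSpace H (α.1 : H → ℂ), x ≠ 0 := fun α =>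
    α.1.exists_ne_zero
  choose x hx hx0 using h0
  have hne : ∀ α : H.root, killingForm ℂ L (x α) (x (rneg H α)) ≠ 0 := by
    intro α h
    apply hx0 α
    have := mem_ker_killingForm_of_mem_rootSpace_of_forall_rootSpace_neg ℂ L H (hx α) ?_
    · simpa using this
    · intro y hy
      rw [← rneg_coe] at hy
      have h1 := finrank_rootSpace_eq_one (rneg H α).1 (H.isNonZero_coe_root _)
      have h2 := (finrank_eq_one_iff_of_nonzero' (⟨x (rneg H α), hx _⟩ : rootSpace H (rneg H α).1)
        (by simpa [Subtype.ext_iff] using hx0 (rneg H α))).1 h1 ⟨y, hy⟩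
      obtain ⟨c, hc⟩ := h2
      have hc' : c • x (rneg H α) = y := congrArg Subtype.val hc
      rw [← hc', map_smul, h, smul_zero]
  obtain ⟨f, hf⟩ := Module.exists_dual_forall_apply_ne_zero (K := ℝ)
    (M := Module.Dual ℂ H) (fun α : H.root => Weight.toLinear ℂ H L α.1) (by
      intro α h
      exact H.isNonZero_coe_root α (by
        ext y; simpa using LinearMap.congr_fun h y))
  have hfneg : ∀ α : H.root, f (Weight.toLinear ℂ H L (rneg H α).1) =
      - f (Weight.toLinear ℂ H L α.1) := by
    intro α
    simp [rneg]
  classical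
  refine ⟨fun α => if 0 < f (Weight.toLinear ℂ H L α.1) then x α else
    (killingForm ℂ L (x α) (x (rneg H α)))⁻¹ • x α, ?_, ?_⟩
  · intro α
    dsimp only
    split_ifs
    · exact hx α
    · exact Submodule.smul_mem _ _ (hx α)
  · intro α
    dsimp only
    rw [hfneg]
    have := hf α
    rcases lt_or_gt_of_ne this with h | h
    · rw [if_neg (by linarith), if_pos (by linarith)]
      simp [hne α]
    · rw [if_pos (by linarith), if_neg (by linarith)]
      simp only [rneg_rneg, map_smul, smul_eq_mul]
      rw [LieModule.traceForm_comm ℂ L L (x α)]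
      exact inv_mul_cancel₀ (by rw [LieModule.traceForm_comm]; exact hne α)

variable [DecidableEq H.root] (e : H.root → L) (he : ∀ α : H.root, e α ∈ rootSpace H (α.1 : H → ℂ))
  (he1 : ∀ α : H.root, killingForm ℂ L (e α) (e (rneg H α)) = 1)
include he he1

lemma mem_rootSpace_eq (α : H.root) (y : L) (hy : y ∈ rootSpace H (α.1 : H → ℂ)) :
    y = killingForm ℂ L y (e (rneg H α)) • e α := by
  have h1 := finrank_rootSpace_eq_one α.1 (H.isNonZero_coe_root _)
  have hne : e α ≠ 0 := by
    intro h; have := he1 α; simp [h] at this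
  have h2 := (finrank_eq_one_iff_of_nonzero' (⟨e α, he _⟩ : rootSpace H α.1)
        (by simpa [Subtype.ext_iff] using hne)).1 h1 ⟨y, hy⟩
  obtain ⟨c, hc⟩ := h2
  have hc' : c • e α = y := congrArg Subtype.val hc
  rw [← hc', map_smul, LinearMap.smul_apply, he1]
  simp

lemma killing_root (α β : H.root) : killingForm ℂ L (e α) (e (rneg H β)) =
    if α = β then 1 else 0 := by
  split_ifs with h
  · rw [h, he1]
  · apply killingForm_apply_eq_zero_of_mem_rootSpace_of_add_ne_zero ℂ L H (he α) (he _)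
    rw [rneg_coe]
    intro h'
    apply h
    ext1
    apply DFunLike.coe_injective
    simpa [add_neg_eq_zero] using h'

omit he1 in
lemma killing_cartan_root (h : H) (α : H.root) : killingForm ℂ L h (e α) = 0 := by
  apply killingForm_apply_eq_zero_of_mem_rootSpace_of_add_ne_zero ℂ L H (α := 0) (β := α.1) _ (he _)
  · rw [zero_add]
    exact H.isNonZero_coe_root α
  · simp

lemma exists_dualB : ∃ (r : ℕ) (g g' : Fin r → H),
    DualB (Sum.elim (fun i => (g i : L)) e) (Sum.elim (fun i => (g' i : L)) (e ∘ rneg H)) := by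
  let g := Module.finBasis ℂ H
  have hB := traceForm_cartan_nondegenerate ℂ L H
  let g' := LinearMap.BilinForm.dualBasis (traceForm ℂ H L) hB g
  refine ⟨_, g, g', ?_, ?_⟩
  · rintro (i | α) (j | β)
    · have := LinearMap.BilinForm.apply_dualBasis_right hB
        ⟨LieModule.traceForm_comm ℂ H L⟩ g i j
      simp only [Sum.elim_inl, Sum.inl.injEq]
      exact this
    · simp [killing_cartan_root H e he]
    · simp only [Sum.elim_inl, Sum.elim_inr]
      rw [LieModule.traceForm_comm]
      simp [killing_cartan_root H e he]
    · simp [killing_root H e he he1]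
  · rw [eq_top_iff]
    have := congrArg LieSubmodule.toSubmodule (cartan_sup_iSup_rootSpace_eq_top (K := ℂ) (L := L) (H := H))
    simp only [LieSubmodule.sup_toSubmodule, LieSubmodule.iSup_toSubmodule,
      LieSubmodule.top_toSubmodule] at this
    rw [← this]
    refine sup_le ?_ (iSup_le fun α => iSup_le fun hα => ?_)
    · intro x hx
      have hx' : x ∈ H := hx
      have e1 := g.sum_repr ⟨x, hx'⟩
      have e2 := congrArg Subtype.val e1
      change x ∈ _
      have e3 : x = ↑(∑ i, (g.repr ⟨x, hx'⟩) i • g i) := e2.symm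
      rw [e3]
      simp only [AddSubmonoidClass.coe_finsetSum, SetLike.val_smul]
      exact sum_mem fun i _ => Submodule.smul_mem _ _ (Submodule.subset_span ⟨Sum.inl i, rfl⟩)
    · intro x hx
      have hα' : α ∈ H.root := by simpa [LieSubalgebra.root] using hα
      rw [mem_rootSpace_eq H e he he1 ⟨α, hα'⟩ x hx]
      exact Submodule.smul_mem _ _ (Submodule.subset_span ⟨Sum.inr ⟨α, hα'⟩, rfl⟩)

end roots
end KostantCas

namespace KostantCas
open LieAlgebra LieAlgebra.IsKilling LieModule

section consts
variable {L : Type*} [LieRing L] [LieAlgebra ℂ L] [Module.Finite ℂ L] [LieAlgebra.IsKilling ℂ L]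
variable (H : LieSubalgebra ℂ L) [H.IsCartanSubalgebra]

/-- the element of the Cartan subalgebra dual to a root -/
noncomputable def tt (α : H.root) : H := (cartanEquivDual H).symm (Weight.toLinear ℂ H L α.1)

lemma killing_tt (α : H.root) (h : H) : killingForm ℂ L (tt H α) h = α.1 h := by
  exact LinearMap.BilinForm.apply_toDual_symm_apply (hB := traceForm_cartan_nondegenerate ℂ L H) _ _

/-- inner product of roots -/
noncomputable def ip (α β : H.root) : ℂ := β.1 (tt H α)

/-- products of structure constants -/
noncomputable def nn (e : H.root → L) (α β : H.root) : ℂ :=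
  - killingForm ℂ L ⁅e α, e β⁆ ⁅e (rneg H α), e (rneg H β)⁆

lemma killing_skew_right (x a b : L) :
    killingForm ℂ L x ⁅a, b⁆ = - killingForm ℂ L x ⁅b, a⁆ := by
  rw [← lie_skew a b, map_neg]

lemma killing_skew_both (a b c d : L) :
    killingForm ℂ L ⁅a, b⁆ ⁅c, d⁆ = killingForm ℂ L ⁅b, a⁆ ⁅d, c⁆ := by
  rw [← lie_skew a b, map_neg, LinearMap.neg_apply, killing_skew_right, neg_neg]

variable [DecidableEq H.root] (e : H.root → L)
  (he : ∀ α : H.root, e α ∈ rootSpace H (α.1 : H → ℂ))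
  (he1 : ∀ α : H.root, killingForm ℂ L (e α) (e (rneg H α)) = 1)

include he he1

lemma lie_e_neg (α : H.root) : ⁅e α, e (rneg H α)⁆ = (tt H α : L) := by
  have h2 := he (rneg H α)
  rw [rneg_coe] at h2
  rw [lie_eq_killingForm_smul_of_mem_rootSpace_of_mem_rootSpace_neg (he α) h2, he1, one_smul]
  rfl

omit he1 in
lemma lie_cartan_e (h : H) (α : H.root) : ⁅(h : L), e α⁆ = α.1 h • e α :=
  lie_eq_smul_of_mem_rootSpace (he α) h

lemma ip_eq (α β : H.root) : ip H α β = nn H e (rneg H α) β - nn H e α β := by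
  have h1 : killingForm ℂ L ⁅(tt H α : L), e β⁆ (e (rneg H β)) = ip H α β := by
    rw [lie_cartan_e H e he, map_smul, LinearMap.smul_apply, he1]; simp [ip]
  rw [← h1, ← lie_e_neg H e he he1, lie_lie, map_sub, LinearMap.sub_apply,
    killing_lie_left (e α), killing_lie_left (e (rneg H α)) ⁅e α, e β⁆, nn, nn, rneg_rneg]

omit he he1 in
lemma nn_symm (α β : H.root) : nn H e (rneg H α) β = nn H e (rneg H β) α := by
  rw [nn, nn, rneg_rneg, rneg_rneg, killing_comm, killing_skew_both]

omit he he1 in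
lemma nn_comm (α β : H.root) : nn H e α β = nn H e β α := by
  rw [nn, nn, killing_skew_both]

lemma nn_self (α : H.root) : nn H e α α = 0 := by simp [nn]

omit he1 in
lemma lie_mem (α β : H.root) :
    ⁅e α, e β⁆ ∈ rootSpace H ((α.1 : H → ℂ) + β.1) :=
  mapsTo_toEnd_genWeightSpace_add_of_mem_rootSpace ℂ L H L α.1 β.1 (he α) (he β)

lemma nn_of_root (s t r : H.root) (h : (t.1 : H → ℂ) = s.1 + r.1) :
    nn H e (rneg H s) t = nn H e r s := by
  have e1 : ⁅e (rneg H s), e t⁆ = killingForm ℂ L ⁅e (rneg H s), e t⁆ (e (rneg H r)) • e r := by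
    apply mem_rootSpace_eq H e he he1
    have := lie_mem H e he (rneg H s) t
    rwa [rneg_coe, h, neg_add_cancel_left] at this
  have e2 : ⁅e r, e s⁆ = killingForm ℂ L ⁅e r, e s⁆ (e (rneg H t)) • e t := by
    apply mem_rootSpace_eq H e he he1
    have := lie_mem H e he r s
    rwa [add_comm, ← h] at this
  rw [nn, nn, e1, e2]
  simp only [map_smul, LinearMap.smul_apply, rneg_rneg, smul_eq_mul]
  have e3 : killingForm ℂ L ⁅e r, e s⁆ (e (rneg H t)) =
      killingForm ℂ L (e r) ⁅e s, e (rneg H t)⁆ := killing_lie _ _ _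
  have e4 : killingForm ℂ L ⁅e (rneg H s), e t⁆ (e (rneg H r)) =
      killingForm ℂ L (e t) ⁅e (rneg H r), e (rneg H s)⁆ := by
    rw [killing_lie_left, killing_skew_right, neg_neg]
  rw [e3, e4]; ring

omit he1 in
lemma nn_of_not_root (s t : H.root) (hst : s ≠ t)
    (h : ¬ ∃ r : H.root, (t.1 : H → ℂ) = s.1 + r.1) :
    nn H e (rneg H s) t = 0 := by
  have : ⁅e (rneg H s), e t⁆ = 0 := by
    have h1 := lie_mem H e he (rneg H s) t
    by_cases hb : rootSpace H (((rneg H s).1 : H → ℂ) + t.1) = ⊥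
    · rw [hb] at h1; simpa using h1
    · exfalso
      apply h
      let w : Weight ℂ H L := ⟨_, hb⟩
      have hw : (w : H → ℂ) = ((rneg H s).1 : H → ℂ) + t.1 := rfl
      have hw0 : w.IsNonZero := by
        intro hz
        have hz' : (w : H → ℂ) = 0 := hz
        apply hst
        ext1
        apply DFunLike.coe_injective
        rw [hw, rneg_coe, neg_add_eq_zero] at hz'
        exact hz'
      refine ⟨⟨w, by simpa [LieSubalgebra.root] using hw0⟩, ?_⟩
      simp [hw, rneg_coe]
  rw [nn, this]; simp

lemma hone (s : H.root) : ip H s s + ∑ α, nn H e α s = 1 := by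
  obtain ⟨r, g, g', hD⟩ := exists_dualB H e he he1
  have h := hD.killing_eq (e s) (e (rneg H s))
  rw [he1, Fintype.sum_sum_type] at h
  rw [h]
  congr 1
  · simp only [Sum.elim_inl]
    have : ∀ i, killingForm ℂ L ⁅e s, ⁅e (rneg H s), (g i : L)⁆⁆ (g' i) =
        killingForm ℂ L (killingForm ℂ L (tt H s) (g' i) • (g i : L)) (tt H s) := by
      intro i
      rw [← lie_skew (e (rneg H s)), lie_cartan_e H e he, rneg_coe, lie_neg, lie_smul,
        lie_e_neg H e he he1]
      simp only [map_neg, map_smul, LinearMap.neg_apply, LinearMap.smul_apply, smul_eq_mul,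
        Pi.neg_apply]
      rw [killing_comm (g i : L), killing_tt, killing_tt]
      ring
    simp_rw [this]
    rw [← LinearMap.sum_apply, ← map_sum]
    have h2 := hD.expand (tt H s)
    rw [Fintype.sum_sum_type] at h2
    simp only [Sum.elim_inl, Sum.elim_inr, Function.comp, killing_cartan_root H e he, zero_smul,
      Finset.sum_const_zero, add_zero] at h2
    rw [h2, killing_tt, ip]
  · rw [← Equiv.sum_comp (Function.Involutive.toPerm (rneg H) (rneg_involutive H))]
    refine Finset.sum_congr rfl fun α _ => ?_
    simp only [Sum.elim_inr, Function.comp, Function.Involutive.coe_toPerm]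
    rw [nn_symm, nn, killing_lie_left (e s), rneg_rneg]

end consts
end KostantCas

namespace KostantCas
open LieAlgebra LieAlgebra.IsKilling LieModule

section pos
variable {L : Type*} [LieRing L] [LieAlgebra ℂ L] [Module.Finite ℂ L] [LieAlgebra.IsKilling ℂ L]
variable (H : LieSubalgebra ℂ L) [H.IsCartanSubalgebra]

lemma ip_self_ne (α : H.root) : ip H α α ≠ 0 :=
  root_apply_cartanEquivDual_symm_ne_zero (H.isNonZero_coe_root α)

lemma ip_eq_chain (α : H.root) (β : Weight ℂ H L) :
    β (tt H α) = ip H α α / 2 * ((chainBotCoeff α.1 β : ℂ) - chainTopCoeff α.1 β) := by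
  have h1 := apply_coroot_eq_cast α.1 β
  have h2 : (coroot α.1 : H) = (2 * (ip H α α)⁻¹) • tt H α := by
    rw [coroot, ← Nat.cast_smul_eq_nsmul ℂ, smul_smul]
    rfl
  have h3 : β (coroot α.1) = (2 * (ip H α α)⁻¹) * β (tt H α) := by
    rw [h2]
    exact (Weight.toLinear ℂ H L β).map_smul _ _
  rw [h3] at h1
  have := ip_self_ne H α
  push_cast at h1
  rw [← h1]
  field_simp

lemma ip_self_pos (α : H.root) : ∃ a : ℝ, 0 < a ∧ ip H α α = a := by
  have h := killing_tt H α (tt H α)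
  have h2 := LinearMap.congr_fun₂ (restrict_killingForm_eq_sum (K := ℂ) (L := L) (H := H))
    (tt H α) (tt H α)
  have h3 : killingForm ℂ L (tt H α) (tt H α) = ∑ γ ∈ H.root, (γ (tt H α)) ^ 2 := by
    refine Eq.trans h2 ?_
    simp [LinearMap.sum_apply, pow_two]
    rfl
  rw [h3] at h
  simp only [ip_eq_chain] at h
  set q : ℝ := ∑ γ ∈ H.root, (((chainBotCoeff α.1 γ : ℝ) - chainTopCoeff α.1 γ) / 2) ^ 2 with hq
  have ha := ip_self_ne H α
  have hqc : (ip H α α) ^ 2 * (q : ℂ) = ip H α α := by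
    have : α.1 (tt H α) = ip H α α := rfl
    rw [ip_eq_chain] at this
    rw [this] at h
    refine Eq.trans ?_ h
    rw [hq]
    push_cast
    rw [Finset.mul_sum]
    refine Finset.sum_congr rfl fun γ _ => ?_
    ring
  have h1 : ip H α α * (q : ℂ) = 1 := by
    apply mul_left_cancel₀ ha
    rw [← mul_assoc, ← pow_two, hqc, mul_one]
  have hq0 : 0 ≤ q := Finset.sum_nonneg fun _ _ => sq_nonneg _
  have hq1 : q ≠ 0 := by
    intro h0; rw [h0] at h1; simp at h1
  refine ⟨q⁻¹, inv_pos.2 (lt_of_le_of_ne hq0 hq1.symm), ?_⟩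
  push_cast
  exact eq_inv_of_mul_eq_one_left h1

variable [DecidableEq H.root] (e : H.root → L)
  (he : ∀ α : H.root, e α ∈ rootSpace H (α.1 : H → ℂ))
  (he1 : ∀ α : H.root, killingForm ℂ L (e α) (e (rneg H α)) = 1)

include he he1

lemma nn_formula (α : H.root) (p : ℕ) : ∀ β : H.root, chainBotCoeff α.1 β.1 = p →
    nn H e α β = ip H α α / 2 * ((chainTopCoeff α.1 β.1 : ℂ) * (p + 1)) := by
  have hα := H.isNonZero_coe_root α
  have hself : ∀ p : ℂ, nn H e α α = ip H α α / 2 * ((chainTopCoeff α.1 α.1 : ℂ) * (p + 1)) := by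
    intro p
    rw [nn_self H e he he1]
    have h2 := rootSpace_two_smul α.1 hα
    have h3 := (rootSpace_zsmul_add_ne_bot_iff α.1 α.1 hα 1).not
    have h4 : ((1 : ℤ) • (α.1 : H → ℂ) + α.1) = 2 • (α.1 : H → ℂ) := by
      rw [one_smul, two_smul]
    rw [h4, h2] at h3
    have : chainTopCoeff α.1 α.1 = 0 := by
      have h5 := h3.1 (by simp)
      by_contra h6
      exact h5 ⟨by omega, by omega⟩
    rw [this]; simp
  induction p with
  | zero =>
    intro β hβ
    by_cases hαβ : α = β
    · subst hαβ; exact hself _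
    have h0 : nn H e (rneg H α) β = 0 := by
      apply nn_of_not_root H e he _ _ hαβ
      rintro ⟨r, hr⟩
      have h1 := (rootSpace_zsmul_add_ne_bot_iff α.1 β.1 hα (-1)).1 (by
        have : ((-1 : ℤ) • (α.1 : H → ℂ) + β.1) = r.1 := by rw [hr]; simp
        rw [this]
        exact r.1.genWeightSpace_ne_bot)
      omega
    have h1 := ip_eq H e he he1 α β
    rw [h0, ip, ip_eq_chain, hβ] at h1
    have : nn H e α β = -(0 - nn H e α β) := by ring
    rw [this, ← h1]; push_cast; ring
  | succ p ih =>
    intro β hβ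
    by_cases hαβ : α = β
    · subst hαβ; exact hself _
    have hne := (rootSpace_zsmul_add_ne_bot_iff α.1 β.1 hα (-1)).2 ⟨by omega, by omega⟩
    let w : Weight ℂ H L := ⟨_, hne⟩
    have hw : (w : H → ℂ) = (-1 : ℤ) • (α.1 : H → ℂ) + β.1 := rfl
    have hw0 : w.IsNonZero := by
      intro hz
      have hz' : (w : H → ℂ) = 0 := hz
      apply hαβ
      ext1
      apply DFunLike.coe_injective
      rw [hw, neg_smul, one_smul, neg_add_eq_zero] at hz'
      exact hz'
    let r : H.root := ⟨w, by simpa [LieSubalgebra.root] using hw0⟩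
    have hb := chainBotCoeff_of_eq_zsmul_add α.1 β.1 hα w (-1) hw
    have ht := chainTopCoeff_of_eq_zsmul_add α.1 β.1 hα w (-1) hw
    have hb' : chainBotCoeff α.1 r.1 = p := by
      change chainBotCoeff α.1 w = p
      omega
    have ht' : chainTopCoeff α.1 r.1 = chainTopCoeff α.1 β.1 + 1 := by
      change chainTopCoeff α.1 w = _
      omega
    have h0 : nn H e (rneg H α) β = nn H e r α := by
      apply nn_of_root H e he he1
      change _ = _ + (w : H → ℂ)
      rw [hw]; simp
    have hi := ih r hb'
    have h1 := ip_eq H e he he1 α β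
    rw [h0, nn_comm, hi, ht', ip, ip_eq_chain, hβ] at h1
    have h2 := eq_sub_iff_add_eq'.1 h1
    rw [← eq_sub_iff_add_eq] at h2
    rw [h2]
    push_cast
    ring

lemma nn_nonneg (α β : H.root) : ∃ x : ℝ, 0 ≤ x ∧ nn H e α β = x := by
  obtain ⟨a, ha, h⟩ := ip_self_pos H α
  refine ⟨a / 2 * (chainTopCoeff α.1 β.1 * (chainBotCoeff α.1 β.1 + 1)), by positivity, ?_⟩
  rw [nn_formula H e he he1 α _ β rfl, h]
  push_cast
  ring

end pos

section weightineq
variable {L : Type*} [LieRing L] [LieAlgebra ℂ L] [Module.Finite ℂ L] [LieAlgebra.IsKilling ℂ L]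
variable (H : LieSubalgebra ℂ L) [H.IsCartanSubalgebra] [DecidableEq H.root]

lemma weight_ineq (f : Module.Dual ℂ H → ℝ) (hfneg : ∀ v, f (-v) = - f v)
    (hf : ∀ α : H.root, f (Weight.toLinear ℂ H L α.1) ≠ 0) (S : Finset H.root) :
    ∃ x : ℝ, x ≤ S.card ∧ ∑ s ∈ S, ∑ t ∈ S, ip H s t +
      ∑ s ∈ S, ∑ α with 0 < f (Weight.toLinear ℂ H L (Subtype.val α)), ip H α s = x := by
  obtain ⟨e, he, he1⟩ := exists_rootVectors H
  choose n hn0 hn using nn_nonneg H e he he1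
  have hip : ∀ s t, ip H s t = ((n (rneg H s) t - n s t : ℝ) : ℂ) := by
    intro s t
    rw [ip_eq H e he he1, hn, hn]; push_cast; ring
  refine ⟨_, comb (fun α : H.root => Weight.toLinear ℂ H L α.1) ?_ (rneg H) ?_ f hfneg hf n
    (fun s t => n (rneg H s) t - n s t) hn0 (fun _ _ => rfl) ?_ ?_ ?_ S, ?_⟩
  · intro a b hab
    ext1
    apply DFunLike.coe_injective
    funext h
    simpa using LinearMap.congr_fun hab h
  · intro a; simp [rneg]
  · intro s
    have := hone H e he he1 s
    rw [hip] at this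
    simp only [hn] at this
    exact_mod_cast this
  · intro s t
    have := nn_symm H e s t
    rw [hn, hn] at this
    exact_mod_cast this
  · intro s t hst
    by_cases h : ∃ r : H.root, (t.1 : H → ℂ) = s.1 + r.1
    · right
      obtain ⟨r, hr⟩ := h
      refine ⟨r, ?_, ?_⟩
      · ext x
        have := congrFun hr x
        simp [this]
      · have := nn_of_root H e he he1 s t r hr
        rw [hn, hn] at this
        exact_mod_cast this
    · left
      have := nn_of_not_root H e he s t hst h
      rw [hn] at this
      exact_mod_cast this
  · simp only [hip]
    push_cast
    rfl

end weightineq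
end KostantCas

namespace KostantCas
open LieAlgebra LieAlgebra.IsKilling LieModule

lemma exists_joint {X W : Type*} [LieRing X] [LieAlgebra ℂ X] [IsLieAbelian X]
    [AddCommGroup W] [Module ℂ W] [Module.Finite ℂ W] [Nontrivial W]
    (φ : X →ₗ[ℂ] Module.End ℂ W) (hc : ∀ x y, φ x * φ y = φ y * φ x) :
    ∃ (lam : Module.Dual ℂ X) (v : W), v ≠ 0 ∧ ∀ x, φ x v = lam x • v := by
  let i1 : LieRingModule X W :=
    { bracket := fun x w => φ x w
      add_lie := fun x y w => by simp
      lie_add := fun x v w => map_add (φ x) v w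
      leibniz_lie := fun x y w => by
        change φ x (φ y w) = φ ⁅x, y⁆ w + φ y (φ x w)
        rw [trivial_lie_zero, map_zero, LinearMap.zero_apply, zero_add]
        exact LinearMap.congr_fun (hc x y) w }
  let i2 : LieModule ℂ X W :=
    { smul_lie := fun t x w => by change φ (t • x) w = t • φ x w; simp
      lie_smul := fun t x w => map_smul (φ x) t w }
  obtain ⟨lam, hl⟩ := LieModule.exists_nontrivial_weightSpace_of_isSolvable ℂ X W
  obtain ⟨⟨v, hv⟩, hv0⟩ := exists_ne (0 : weightSpace W lam)
  refine ⟨lam, v, fun h => hv0 (by ext; exact h), ?_⟩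
  intro x
  exact (mem_weightSpace lam v).1 hv x

section wf
variable {L : Type*} [LieRing L] [LieAlgebra ℂ L]
    (ρ : L → Module.End ℂ (ExteriorAlgebra ℂ L))
    (hρι : ∀ x y : L, ρ x (ι ℂ y) = ι ℂ ⁅x, y⁆)
    (hρmul : ∀ x u v, ρ x (u * v) = ρ x u * v + u * ρ x v)
    (hρone : ∀ x, ρ x 1 = 0)
include hρι hρmul hρone

lemma weight_form {I X : Type*} (B : Module.Basis I ℂ L) (j : X → L) (wt : I → X → ℂ)
    (hB : ∀ x i, ⁅j x, B i⁆ = wt i x • B i) (k : ℕ) (v : ExteriorAlgebra ℂ L)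
    (hv : v ∈ ⋀[ℂ]^k L) (hv0 : v ≠ 0) (lam : X → ℂ) (h : ∀ x, ρ (j x) v = lam x • v) :
    ∃ s : Finset I, s.card = k ∧ ∀ x, lam x = ∑ i ∈ s, wt i x := by
  classical
  let _ : LinearOrder I := linearOrderOfSTO WellOrderingRel
  set C := B.exteriorPower k with hC
  obtain ⟨s, hs⟩ : ∃ s, C.repr ⟨v, hv⟩ s ≠ 0 := by
    by_contra! hh
    apply hv0
    have : C.repr ⟨v, hv⟩ = 0 := by ext s; exact hh s
    simpa using this
  refine ⟨s.1, s.2, fun x => ?_⟩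
  let R : Module.End ℂ (⋀[ℂ]^k L) := (ρ (j x)).restrict
    (fun u hu => rho_mem_exteriorPower ρ hρι hρmul hρone (j x) k u hu)
  have key : C.coord s ∘ₗ R = (∑ i ∈ s.1, wt i x) • C.coord s := by
    apply C.ext
    intro t
    have hR : R (C t) = (∑ i ∈ t.1, wt i x) • C t := by
      ext1
      have h1 := rho_ιMulti ρ hρmul hρone (j x)
        (fun i => B (Set.powersetCard.ofFinEmbEquiv.symm t i))
        (fun i => wt (Set.powersetCard.ofFinEmbEquiv.symm t i) x) hρι (fun i => hB x _)
      have h2 : ((C t : ⋀[ℂ]^k L) : ExteriorAlgebra ℂ L) = ExteriorAlgebra.ιMulti ℂ k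
        (fun i => B (Set.powersetCard.ofFinEmbEquiv.symm t i)) := by
        rw [hC, exteriorPower.basis_apply, exteriorPower.ιMulti_family]
        rfl
      have h3 : ∑ i, wt (Set.powersetCard.ofFinEmbEquiv.symm t i) x = ∑ i ∈ t.1, wt i x := by
        have : t.1 = Finset.univ.map (Set.powersetCard.ofFinEmbEquiv.symm t).toEmbedding := by
          ext a
          rw [← SetLike.mem_coe]
          have := Set.powersetCard.mem_range_ofFinEmbEquiv_symm_iff_mem t a
          simp only [Finset.mem_map, Finset.mem_univ, true_and]
          exact this.symm
        rw [this, Finset.sum_map]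
        rfl
      change ρ (j x) (C t : ⋀[ℂ]^k L) = (∑ i ∈ t.1, wt i x) • ((C t : ⋀[ℂ]^k L) : ExteriorAlgebra ℂ L)
      rw [h2, h1, h3]
    rw [LinearMap.comp_apply, hR]
    by_cases hst : t = s
    · subst hst; simp
    · simp [hst]
  have h4 := LinearMap.congr_fun key ⟨v, hv⟩
  have h5 : R ⟨v, hv⟩ = lam x • ⟨v, hv⟩ := by
    ext1; exact h x
  rw [LinearMap.comp_apply, h5, map_smul] at h4
  simp only [LinearMap.smul_apply, smul_eq_mul, Module.Basis.coord_apply] at h4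
  exact mul_right_cancel₀ hs h4

end wf
end KostantCas

namespace KostantCas
open LieAlgebra LieAlgebra.IsKilling LieModule

section fin
variable {L : Type*} [LieRing L] [LieAlgebra ℂ L] [Module.Finite ℂ L] [LieAlgebra.IsKilling ℂ L]
    (H : LieSubalgebra ℂ L) [H.IsCartanSubalgebra]
    (ρ : L → Module.End ℂ (ExteriorAlgebra ℂ L))
    (hρι : ∀ x y : L, ρ x (ι ℂ y) = ι ℂ ⁅x, y⁆)
    (hρmul : ∀ x u v, ρ x (u * v) = ρ x u * v + u * ρ x v)
    (hρone : ∀ x, ρ x 1 = 0)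
include H hρι hρmul hρone

lemma main_ineq {κ : Type*} [Fintype κ] [DecidableEq κ] (b b' : κ → L) (hb : DualB b b')
    (k : ℕ) (c : ℂ) (u : ExteriorAlgebra ℂ L) (hu : u ∈ ⋀[ℂ]^k L) (hu0 : u ≠ 0)
    (heig : (∑ i, ρ (b i) * ρ (b' i)) u = c • u) :
    c.re ≤ (k : ℝ) ∧ c.im = 0 := by
  classical
  have hlie := rho_lie ρ hρι hρmul hρone
  obtain ⟨e, he, he1⟩ := exists_rootVectors H
  obtain ⟨r, g, g', hD⟩ := exists_dualB H e he he1
  -- the representation as a linear map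
  let P : L →ₗ[ℂ] Module.End ℂ (ExteriorAlgebra ℂ L) :=
    { toFun := ρ
      map_add' := rho_add ρ hρι hρmul hρone
      map_smul' := rho_smul ρ hρι hρmul hρone }
  have hP : ∀ x, P x = ρ x := fun _ => rfl
  let F : L →ₗ[ℂ] L →ₗ[ℂ] Module.End ℂ (ExteriorAlgebra ℂ L) :=
    (LinearMap.mul ℂ (Module.End ℂ (ExteriorAlgebra ℂ L))).compl₁₂ P P
  have hF : ∀ x y, F x y = ρ x * ρ y := fun _ _ => rfl
  set Cas := ∑ i, ρ (b i) * ρ (b' i) with hCas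
  have hCas2 : Cas = ∑ i, ρ (g i) * ρ (g' i) + ∑ α, ρ (e α) * ρ (e (rneg H α)) := by
    have := hb.indep hD F
    simp only [hF, Fintype.sum_sum_type] at this
    exact this
  have hcomm : ∀ x, ρ x * Cas = Cas * ρ x := by
    intro x
    have := hb.inv F x
    simp only [hF, hlie] at this
    rw [hCas, Finset.mul_sum, Finset.sum_mul, ← sub_eq_zero, ← Finset.sum_sub_distrib, ← this]
    refine Finset.sum_congr rfl fun i _ => ?_
    simp only [sub_mul, mul_sub, mul_assoc]
    abel
  -- the eigenspace
  let W : Submodule ℂ (ExteriorAlgebra ℂ L) := (⋀[ℂ]^k L) ⊓ LinearMap.ker (Cas - c • 1)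
  have hW : ∀ v, v ∈ W ↔ v ∈ (⋀[ℂ]^k L) ∧ Cas v = c • v := by
    intro v
    simp [W, Submodule.mem_inf, sub_eq_zero]
  have hWst : ∀ x, ∀ v ∈ W, ρ x v ∈ W := by
    intro x v hv
    rw [hW] at hv ⊢
    refine ⟨rho_mem_exteriorPower ρ hρι hρmul hρone x k v hv.1, ?_⟩
    have := LinearMap.congr_fun (hcomm x) v
    simp only [Module.End.mul_apply] at this
    rw [← this, hv.2, map_smul]
  have : Module.Finite ℂ W :=
    Submodule.finiteDimensional_of_le (S₂ := (⋀[ℂ]^k L)) inf_le_left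
  have : Nontrivial W := ⟨⟨⟨u, (hW u).2 ⟨hu, heig⟩⟩, 0, fun h => hu0 (congrArg Subtype.val h)⟩⟩
  let φ : H →ₗ[ℂ] Module.End ℂ W :=
    { toFun := fun h => (ρ h).restrict (hWst h)
      map_add' := by
        intro x y; ext v
        exact LinearMap.congr_fun (P.map_add (x : L) y) v
      map_smul' := by
        intro t x; ext v
        exact LinearMap.congr_fun (P.map_smul t (x : L)) v }
  have hφ : ∀ x y, φ x * φ y = φ y * φ x := by
    intro x y
    ext v
    have h0 : ⁅(x : L), (y : L)⁆ = 0 := by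
      rw [← LieSubalgebra.coe_bracket, trivial_lie_zero]; rfl
    have h1 := hlie (x : L) (y : L)
    rw [h0, ← hP, map_zero] at h1
    exact LinearMap.congr_fun (sub_eq_zero.1 h1.symm) (v : ExteriorAlgebra ℂ L)
  obtain ⟨lam0, v0, hv0, hv0'⟩ := exists_joint φ hφ
  -- weight basis
  have hli : LinearIndependent ℂ (Sum.elim (fun i => (g i : L)) e) := by
    rw [Fintype.linearIndependent_iff]
    intro a ha i
    have := congrArg (fun x => killingForm ℂ L x
      ((Sum.elim (fun i => (g' i : L)) (e ∘ rneg H)) i)) ha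
    simpa only [map_sum, map_smul, LinearMap.sum_apply, LinearMap.smul_apply, hD.dual,
      smul_eq_mul, mul_ite, mul_one, mul_zero, Finset.sum_ite_eq', Finset.mem_univ, if_true,
      map_zero, LinearMap.zero_apply] using this
  let B : Module.Basis (Fin r ⊕ H.root) ℂ L := Module.Basis.mk hli hD.span.ge
  let wt : Fin r ⊕ H.root → Module.Dual ℂ H :=
    Sum.elim (fun _ => 0) (fun α => Weight.toLinear ℂ H L α.1)
  have hB : ∀ (h : H) i, ⁅(h : L), B i⁆ = wt i h • B i := by
    intro h i
    rcases i with i | α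
    · have h0 : ⁅(h : L), (g i : L)⁆ = 0 := by
        rw [← LieSubalgebra.coe_bracket, trivial_lie_zero]; rfl
      simp [B, wt, h0]
    · simpa [B, wt] using lie_cartan_e H e he h α
  let T : Set (Module.Dual ℂ H) := {lam | ∃ v ∈ W, v ≠ 0 ∧ ∀ h : H, ρ h v = lam h • v}
  have hT : ∀ lam ∈ T, ∃ s : Finset (Fin r ⊕ H.root), s.card = k ∧ lam = ∑ i ∈ s, wt i := by
    rintro lam ⟨v, hv, hvn, hvl⟩
    obtain ⟨s, hs, hs'⟩ := weight_form ρ hρι hρmul hρone B (fun h : H => (h : L))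
      (fun i h => wt i h) hB k v ((hW v).1 hv).1 hvn lam hvl
    refine ⟨s, hs, ?_⟩
    ext h
    rw [hs', LinearMap.sum_apply]
  have hTfin : T.Finite := by
    refine (Set.finite_range (fun s : Finset (Fin r ⊕ H.root) => ∑ i ∈ s, wt i)).subset ?_
    intro lam hl
    obtain ⟨s, -, hs⟩ := hT lam hl
    exact ⟨s, hs.symm⟩
  have hTne : T.Nonempty := ⟨lam0, v0, v0.2, fun h => hv0 (Subtype.ext h),
    fun h => congrArg Subtype.val (hv0' h)⟩
  obtain ⟨f, hf⟩ := Module.exists_dual_forall_apply_ne_zero (K := ℝ)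
    (M := Module.Dual ℂ H) (fun α : H.root => Weight.toLinear ℂ H L α.1) (by
      intro α h
      exact H.isNonZero_coe_root α (by
        ext y; simpa using LinearMap.congr_fun h y))
  obtain ⟨lam, hlam, hmax⟩ := Set.exists_max_image T f hTfin hTne
  obtain ⟨s, hsk, hs⟩ := hT lam hlam
  obtain ⟨v, hv, hvn, hvl⟩ := hlam
  have hkill : ∀ α : H.root, 0 < f (Weight.toLinear ℂ H L α.1) → ρ (e α) v = 0 := by
    intro α hα
    by_contra hne
    have := hmax (lam + Weight.toLinear ℂ H L α.1) ⟨ρ (e α) v, hWst _ _ hv, hne, by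
      intro h
      have h1 := hlie (h : L) (e α)
      rw [lie_cartan_e H e he, ← hP, map_smul, hP] at h1
      have h2 := LinearMap.congr_fun h1 v
      simp only [LinearMap.smul_apply, LinearMap.sub_apply, Module.End.mul_apply, hvl,
        map_smul] at h2
      rw [eq_sub_iff_add_eq] at h2
      rw [← h2, LinearMap.add_apply, add_smul, add_comm]
      rfl⟩
    rw [map_add] at this
    linarith
  have hfr : ∀ α : H.root, f (Weight.toLinear ℂ H L (rneg H α).1) =
      - f (Weight.toLinear ℂ H L α.1) := by
    intro α
    simp [rneg]
  have hroot : ∀ α : H.root, (ρ (e α) * ρ (e (rneg H α))) v =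
      (if 0 < f (Weight.toLinear ℂ H L α.1) then lam (tt H α) else 0) • v := by
    intro α
    split_ifs with hα
    · have h1 := hlie (e α) (e (rneg H α))
      rw [lie_e_neg H e he he1] at h1
      have h2 := LinearMap.congr_fun h1 v
      rw [hvl, LinearMap.sub_apply, Module.End.mul_apply (ρ (e (rneg H α))), hkill α hα,
        map_zero, sub_zero] at h2
      exact h2.symm
    · rw [Module.End.mul_apply, hkill (rneg H α), map_zero, zero_smul]
      rw [hfr]
      have := hf α
      have h3 : f (Weight.toLinear ℂ H L α.1) < 0 := lt_of_le_of_ne (not_lt.1 hα) this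
      linarith
  have hc : c = ∑ i, lam (g i) * lam (g' i) +
      ∑ α with 0 < f (Weight.toLinear ℂ H L (Subtype.val α)), lam (tt H α) := by
    have h1 := ((hW v).1 hv).2
    rw [hCas2, LinearMap.add_apply, LinearMap.sum_apply, LinearMap.sum_apply] at h1
    simp_rw [hroot] at h1
    simp only [Module.End.mul_apply, hvl, map_smul, smul_smul] at h1
    rw [← Finset.sum_smul, ← Finset.sum_smul, ← add_smul] at h1
    have h2 := smul_left_injective ℂ hvn h1
    rw [← h2, Finset.sum_filter]
    congr 1
    exact Finset.sum_congr rfl fun i _ => mul_comm _ _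
  -- roots occurring in the weight
  let S : Finset H.root := s.toRight
  have hS : lam = ∑ α ∈ S, Weight.toLinear ℂ H L α.1 := by
    rw [hs, ← Finset.toLeft_disjSum_toRight (u := s), Finset.sum_disjSum]
    simp [wt, S]
  have hcard : S.card ≤ k := by
    rw [← hsk]
    exact Finset.card_toRight_le
  have hlamap : ∀ h, lam h = ∑ α ∈ S, α.1 h := by
    intro h
    rw [hS, LinearMap.sum_apply]
    rfl
  have hgg : ∀ a t : H.root, ∑ i, a.1 (g i) * t.1 (g' i) = ip H t a := by
    intro a t
    have h2 := hD.expand (tt H t)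
    rw [Fintype.sum_sum_type] at h2
    simp only [Sum.elim_inl, Sum.elim_inr, Function.comp, killing_cartan_root H e he, zero_smul,
      Finset.sum_const_zero, add_zero, killing_tt] at h2
    have h3 : ∑ i, t.1 (g' i) • g i = tt H t := by
      apply Subtype.ext
      rw [← h2]
      push_cast
      rfl
    rw [ip, ← h3]
    change _ = Weight.toLinear ℂ H L a.1 _
    rw [map_sum]
    refine Finset.sum_congr rfl fun i _ => ?_
    rw [map_smul, smul_eq_mul, mul_comm]
    rfl
  obtain ⟨x, hx, hx'⟩ := weight_ineq H f (fun v => map_neg f v) hf S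
  have hcx : c = x := by
    rw [hc, ← hx']
    congr 1
    · simp only [hlamap, Finset.sum_mul_sum]
      rw [Finset.sum_comm, Finset.sum_comm (s := S) (t := S)]
      simp_rw [← hgg]
      refine Finset.sum_congr rfl fun a _ => ?_
      rw [Finset.sum_comm]
    · simp only [hlamap]
      rw [Finset.sum_comm]
      rfl
  rw [hcx]
  refine ⟨?_, Complex.ofReal_im x⟩
  rw [Complex.ofReal_re]
  exact hx.trans (by exact_mod_cast hcard)

end fin
end KostantCas

/-- Let `g` be a finite-dimensional complex semisimple Lie algebra acting on its exterior
algebra by the adjoint action `ρ` (the derivation extending `ad`), and let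
`Cas = ∑ᵢ ρ(bᵢ) ρ(b'ᵢ)` be the Casimir operator, where `b`, `b'` are dual bases with
respect to the Killing form.  Then every eigenvalue of `Cas` on `∧^k g` is (real and)
at most `k`. -/
theorem casimir_eigenvalue_le_on_exterior_power
    {L : Type*} [LieRing L] [LieAlgebra ℂ L] [Module.Finite ℂ L]
    [LieAlgebra.IsSemisimple ℂ L]
    {κ : Type*} [Fintype κ] [DecidableEq κ] (b b' : κ → L)
    (hdual : ∀ i j, killingForm ℂ L (b i) (b' j) = if i = j then 1 else 0)
    (hbasis : Submodule.span ℂ (Set.range b) = ⊤)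
    (ρ : L → Module.End ℂ (ExteriorAlgebra ℂ L))
    (hρι : ∀ x y : L, ρ x (ι ℂ y) = ι ℂ ⁅x, y⁆)
    (hρmul : ∀ x u v, ρ x (u * v) = ρ x u * v + u * ρ x v)
    (hρone : ∀ x, ρ x 1 = 0)
    (k : ℕ) (c : ℂ) (u : ExteriorAlgebra ℂ L) (hu : u ∈ ⋀[ℂ]^k L) (hu0 : u ≠ 0)
    (heig : (∑ i, ρ (b i) * ρ (b' i)) u = c • u) :
    c.re ≤ (k : ℝ) ∧ c.im = 0 := by
  have hD : KostantCas.DualB b b' := ⟨hdual, hbasis⟩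
  have : LieAlgebra.IsKilling ℂ L := hD.isKilling
  obtain ⟨x, hx⟩ := LieAlgebra.exists_isCartanSubalgebra_engel ℂ L
  exact KostantCas.main_ineq (LieSubalgebra.engel ℂ x) ρ hρι hρmul hρone b b' hD k c u hu hu0 heig
end

section
/- Let g be a complex reductive Lie algebra identified with its dual via the Killing form, and let x ∈ g be regular (i.e., dim [g, x] = 2r where r is the number of positive roots). Then dim g^x = ℓ = rank g, and the centralizer g^x is an abelian Lie subalgebra of g. -/
open LieAlgebra

section AuxLemmas

attribute [local instance] LieRing.ofAssociativeRing

lemma aux_ker_killing {L : Type*} [LieRing L] [LieAlgebra ℂ L] [Module.Finite ℂ L]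
    (hred : LieAlgebra.radical ℂ L = LieAlgebra.center ℂ L) (z : L)
    (hz : ∀ u, killingForm ℂ L z u = 0) : z ∈ LieAlgebra.center ℂ L := by
  rw [← hred]
  apply killingCompl_top_le_radical ℂ L
  rw [LieIdeal.mem_killingCompl]
  intro y _
  rw [LieModule.traceForm_comm]
  exact hz y

lemma aux_center {L : Type*} [LieRing L] [LieAlgebra ℂ L] {z : L}
    (hz : z ∈ LieAlgebra.center ℂ L) (u : L) : ⁅u, z⁆ = 0 ∧ ⁅z, u⁆ = 0 := by
  have h : ⁅u, z⁆ = 0 := (LieModule.mem_maxTrivSubmodule ℂ L L z).1 hz u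
  refine ⟨h, ?_⟩
  rw [← lie_skew, h, neg_zero]

lemma aux_killing_center {L : Type*} [LieRing L] [LieAlgebra ℂ L] {z : L}
    (hz : z ∈ LieAlgebra.center ℂ L) (u : L) : killingForm ℂ L z u = 0 := by
  have : ad ℂ L z = 0 := by
    ext v; simp [(aux_center hz v).2]
  rw [killingForm_apply_apply, this]; simp

/-- A functional killing the centre is represented by the Killing form. -/
lemma aux_repr {L : Type*} [LieRing L] [LieAlgebra ℂ L] [Module.Finite ℂ L]
    (hred : LieAlgebra.radical ℂ L = LieAlgebra.center ℂ L) (f : Module.Dual ℂ L)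
    (hf : ∀ z ∈ LieAlgebra.center ℂ L, f z = 0) : f ∈ LinearMap.range (killingForm ℂ L) := by
  have h1 : LinearMap.flip (killingForm ℂ L) = killingForm ℂ L := LieModule.traceForm_flip ℂ L L
  have h := LinearMap.dualAnnihilator_ker_eq_range_flip (B := killingForm ℂ L)
  rw [h1] at h
  rw [← h,
    Submodule.mem_dualAnnihilator]
  intro z hz
  apply hf
  apply aux_ker_killing hred
  intro u
  rw [LinearMap.mem_ker.1 hz]; rfl

lemma aux_whitehead {L : Type*} [LieRing L] [LieAlgebra ℂ L] [Module.Finite ℂ L]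
    (hred : LieAlgebra.radical ℂ L = LieAlgebra.center ℂ L) (f : Module.Dual ℂ L) :
    ∃ d : L, ∀ u v : L, f ⁅u, v⁆ = killingForm ℂ L d ⁅u, v⁆ := by
  have hinv := LieModule.traceForm_apply_lie_apply ℂ L L
  -- the map `D`
  obtain ⟨s, hs⟩ := (killingForm ℂ L).rangeRestrict.exists_rightInverse_of_surjective
    (LinearMap.range_rangeRestrict _)
  let ω : L →ₗ[ℂ] Module.Dual ℂ L := (ad ℂ L).toLinearMap.compr₂ f
  have hω : ∀ u v, ω u v = f ⁅u, v⁆ := fun u v => rfl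
  let D : L →ₗ[ℂ] L := s ∘ₗ ω.codRestrict (LinearMap.range (killingForm ℂ L)) (fun u =>
    aux_repr hred _ (fun z hz => by rw [hω, (aux_center hz u).1, map_zero]))
  have hD : ∀ u v, killingForm ℂ L (D u) v = f ⁅u, v⁆ := by
    intro u v
    have := LinearMap.congr_fun hs (ω.codRestrict (LinearMap.range (killingForm ℂ L)) (fun u =>
      aux_repr hred _ (fun z hz => by rw [hω, (aux_center hz u).1, map_zero])) u)
    have := congrArg Subtype.val this
    exact LinearMap.congr_fun this v
  have hder : ∀ u v, D ⁅u, v⁆ - ⁅D u, v⁆ - ⁅u, D v⁆ ∈ LieAlgebra.center ℂ L := by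
    intro u v
    apply aux_ker_killing hred
    intro w
    rw [← lie_skew u (D v)]
    simp only [map_sub, map_neg, LinearMap.sub_apply, LinearMap.neg_apply, hinv, hD]
    rw [leibniz_lie u v w]
    simp
  -- the element `d`
  let g : Module.Dual ℂ L := (LinearMap.trace ℂ L) ∘ₗ (LinearMap.mulLeft ℂ D) ∘ₗ
    (ad ℂ L).toLinearMap
  have hg : ∀ u, g u = LinearMap.trace ℂ L (D * ad ℂ L u) := fun u => rfl
  obtain ⟨d, hd⟩ := aux_repr hred g (fun z hz => by
    have : ad ℂ L z = 0 := by
      ext v; simp [(aux_center hz v).2]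
    rw [hg, this]; simp)
  let E : L →ₗ[ℂ] L := D - ad ℂ L d
  have hE : ∀ u, LinearMap.trace ℂ L (E * ad ℂ L u) = 0 := by
    intro u
    have := LinearMap.congr_fun hd u
    rw [hg, killingForm_apply_apply] at this
    simp only [E, sub_mul, map_sub]
    rw [← this]
    simp [Module.End.mul_eq_comp]
  have hEder : ∀ u v, E ⁅u, v⁆ - ⁅E u, v⁆ - ⁅u, E v⁆ ∈ LieAlgebra.center ℂ L := by
    intro u v
    have : E ⁅u, v⁆ - ⁅E u, v⁆ - ⁅u, E v⁆ = D ⁅u, v⁆ - ⁅D u, v⁆ - ⁅u, D v⁆ := by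
      simp only [E, LinearMap.sub_apply, ad_apply, sub_lie, lie_sub]
      rw [leibniz_lie d u v]
      abel
    rw [this]; exact hder u v
  have hEc : ∀ u, E u ∈ LieAlgebra.center ℂ L := by
    intro u
    apply aux_ker_killing hred
    intro v
    have h1 : ad ℂ L v * (E * ad ℂ L u - ad ℂ L u * E - ad ℂ L (E u)) = 0 := by
      ext w
      simp only [Module.End.mul_apply, LinearMap.sub_apply, ad_apply, LinearMap.zero_apply]
      have : E ⁅u, w⁆ - ⁅u, E w⁆ - ⁅E u, w⁆ = E ⁅u, w⁆ - ⁅E u, w⁆ - ⁅u, E w⁆ := by abel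
      rw [this]
      exact (aux_center (hEder u w) v).1
    have h2 := congrArg (LinearMap.trace ℂ L) h1
    have h3 := hE ⁅u, v⁆
    rw [LieHom.map_lie, Ring.lie_def] at h3
    simp only [mul_sub, map_sub, map_zero] at h2 h3
    rw [LieModule.traceForm_comm, killingForm_apply_apply, ← Module.End.mul_eq_comp]
    have e1 : LinearMap.trace ℂ L (ad ℂ L v * (E * ad ℂ L u)) =
      LinearMap.trace ℂ L (E * (ad ℂ L u * ad ℂ L v)) := by
      rw [LinearMap.trace_mul_comm, mul_assoc]
    have e2 : LinearMap.trace ℂ L (ad ℂ L v * (ad ℂ L u * E)) =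
      LinearMap.trace ℂ L (E * (ad ℂ L v * ad ℂ L u)) := by
      rw [← mul_assoc, LinearMap.trace_mul_comm]
    rw [e1, e2] at h2
    linear_combination h3 - h2
  refine ⟨d, fun u v => ?_⟩
  have h := aux_killing_center (hEc u) v
  simp only [E, LinearMap.sub_apply, map_sub, ad_apply, hD, hinv] at h
  linear_combination h

lemma aux_derived_center {L : Type*} [LieRing L] [LieAlgebra ℂ L] [Module.Finite ℂ L]
    (hred : LieAlgebra.radical ℂ L = LieAlgebra.center ℂ L) (z : L)
    (hz : z ∈ LieAlgebra.center ℂ L)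
    (hz' : z ∈ Submodule.span ℂ {w : L | ∃ u v : L, ⁅u, v⁆ = w}) : z = 0 := by
  rw [← Module.forall_dual_apply_eq_zero_iff ℂ]
  intro f
  obtain ⟨d, hd⟩ := aux_whitehead hred f
  have : ∀ w ∈ Submodule.span ℂ {w : L | ∃ u v : L, ⁅u, v⁆ = w}, f w = killingForm ℂ L d w := by
    intro w hw
    induction hw using Submodule.span_induction with
    | mem w hw => obtain ⟨u, v, rfl⟩ := hw; exact hd u v
    | zero => simp
    | add a b _ _ ha hb => simp [ha, hb]
    | smul c a _ ha => simp [ha]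
  rw [this z hz', LieModule.traceForm_comm, aux_killing_center hz]

/-- Cartan subalgebras are abelian -/
lemma aux_cartan {L : Type*} [LieRing L] [LieAlgebra ℂ L] [Module.Finite ℂ L]
    (hred : LieAlgebra.radical ℂ L = LieAlgebra.center ℂ L) (H : LieSubalgebra ℂ L)
    [H.IsCartanSubalgebra] : IsLieAbelian H := by
  refine (LieModule.disjoint_lowerCentralSeries_maxTrivSubmodule_iff ℂ H H).1 ?_
  rw [disjoint_iff_inf_le]
  intro z hz
  have hk := LieModule.lowerCentralSeries_one_inf_center_le_ker_traceForm ℂ H L hz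
  have h : Codisjoint (rootSpace H 0) (LieModule.posFittingComp ℂ H L) :=
    (LieModule.isCompl_genWeightSpace_zero_posFittingComp ℂ H L).codisjoint
  replace h : Codisjoint (H : Submodule ℂ L) (LieModule.posFittingComp ℂ H L : Submodule ℂ L) := by
    rwa [codisjoint_iff, ← LieSubmodule.toSubmodule_inj, LieSubmodule.sup_toSubmodule,
      LieSubmodule.top_toSubmodule, rootSpace_zero_eq ℂ L H, LieSubalgebra.coe_toLieSubmodule,
      ← codisjoint_iff] at h
  have hzc : (z : L) ∈ LieAlgebra.center ℂ L := by
    apply aux_ker_killing hred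
    intro u
    have hu : u ∈ (H : Submodule ℂ L) ⊔ (LieModule.posFittingComp ℂ H L : Submodule ℂ L) := by
      rw [codisjoint_iff.1 h]; trivial
    obtain ⟨a, ha, b, hb, rfl⟩ := Submodule.mem_sup.1 hu
    rw [map_add, killingForm_eq_zero_of_mem_zeroRoot_mem_posFitting ℂ L H
      (le_zeroRootSubalgebra ℂ L H z.2) hb, add_zero]
    exact LinearMap.congr_fun (LinearMap.mem_ker.1 hk) ⟨a, ha⟩
  have hzd : (z : L) ∈ Submodule.span ℂ {w : L | ∃ u v : L, ⁅u, v⁆ = w} := by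
    have h1 := hz.1
    have h2 : z ∈ (LieModule.lowerCentralSeries ℂ H H 1).toSubmodule := h1
    rw [LieModule.lowerCentralSeries_succ, LieSubmodule.lieIdeal_oper_eq_linear_span'] at h2
    have h3 := Submodule.mem_map_of_mem (f := H.toSubmodule.subtype) h2
    rw [Submodule.map_span] at h3
    refine Submodule.span_mono ?_ h3
    rintro _ ⟨_, ⟨u, _, v, _, rfl⟩, rfl⟩
    exact ⟨u, v, rfl⟩
  have := aux_derived_center hred _ hzc hzd
  simpa using this

lemma aux_linInd {V : Type*} [AddCommGroup V] [Module ℂ V] {k : ℕ} (v w : Fin k → V)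
    (hv : LinearIndependent ℂ v) :
    {t : ℂ | ¬ LinearIndependent ℂ (fun i => v i + t • w i)}.Finite := by
  obtain ⟨φ, hφ⟩ := LinearMap.exists_leftInverse_of_injective
    (Fintype.linearCombination ℂ v) (LinearMap.ker_eq_bot.2
      (hv.fintypeLinearCombination_injective))
  have hφv : ∀ i, φ (v i) = Pi.single i 1 := by
    intro i
    have := LinearMap.congr_fun hφ (Pi.single i 1)
    simpa [Fintype.linearCombination_apply_single] using this
  let W : Matrix (Fin k) (Fin k) ℂ := Matrix.of fun i => φ (w i)
  let M : Matrix (Fin k) (Fin k) (Polynomial ℂ) := Matrix.of fun i j =>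
    Polynomial.C ((1 : Matrix (Fin k) (Fin k) ℂ) i j) + Polynomial.X * Polynomial.C (W i j)
  obtain ⟨p, hpdef⟩ : ∃ p : Polynomial ℂ, p = M.det := ⟨_, rfl⟩
  have hp : ∀ t, p.eval t = (1 + t • W).det := by
    intro t
    rw [hpdef, ← Polynomial.coe_evalRingHom, RingHom.map_det]
    congr 1
    ext i j
    simp [M]
    ring
  have hp0 : p ≠ 0 := by
    intro h
    have := hp 0
    simp [h] at this
  refine (Polynomial.finite_setOfPred_isRoot hp0).subset ?_
  intro t ht
  by_contra hne
  apply ht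
  have hdet : (1 + t • W).det ≠ 0 := by rw [← hp]; exact hne
  have hrows := Matrix.linearIndependent_rows_of_det_ne_zero hdet
  refine LinearIndependent.of_comp φ ?_
  have heq : (φ ∘ fun i => v i + t • w i) = fun i => (1 + t • W) i := by
    ext i j
    simp [hφv, W, Matrix.one_apply, Pi.single_apply, eq_comm]
  rw [heq]
  exact hrows

lemma aux_card_le {V : Type*} [AddCommGroup V] [Module ℂ V] [Module.Finite ℂ V] {k : ℕ}
    (v : Fin k → V) (S : Submodule ℂ V) (hv : LinearIndependent ℂ v) (h : ∀ i, v i ∈ S) :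
    k ≤ Module.finrank ℂ S := by
  have h1 := finrank_span_eq_card hv
  rw [Fintype.card_fin] at h1
  have h2 : Submodule.span ℂ (Set.range v) ≤ S := by
    rw [Submodule.span_le]
    rintro _ ⟨i, rfl⟩
    exact h i
  have h3 := Submodule.finrank_mono h2
  omega

lemma aux_rank {V : Type*} [AddCommGroup V] [Module ℂ V] [Module.Finite ℂ V] 
    (A B : V →ₗ[ℂ] V) :
    {t : ℂ | Module.finrank ℂ (LinearMap.range (A + t • B)) <
      Module.finrank ℂ (LinearMap.range A)}.Finite := by
  let b := Module.finBasis ℂ (LinearMap.range A)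
  choose e he using fun i => (b i).2
  have hi : LinearIndependent ℂ (fun i => A (e i)) := by
    have : (fun i => A (e i)) = (LinearMap.range A).subtype ∘ b := by
      ext i; simp [he]
    rw [this]
    exact b.linearIndependent.map' _ (Submodule.ker_subtype _)
  refine (aux_linInd _ (fun i => B (e i)) hi).subset ?_
  intro t ht hli
  apply not_le_of_gt (Set.mem_ofPred_eq ▸ ht : _ < _)
  exact aux_card_le _ _ hli (fun i => ⟨e i, by simp⟩)

lemma aux_first_order_aux {V : Type*} [AddCommGroup V] [Module ℂ V] [Module.Finite ℂ V]
    (A B : V →ₗ[ℂ] V) (k : ℕ)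
    (h : ∀ t : ℂ, Module.finrank ℂ (LinearMap.range (A + t • B)) ≤ k)
    (y : V) (hy : A y = 0) (e : Fin k → V) (hi : LinearIndependent ℂ (fun i => A (e i))) :
    B y ∈ LinearMap.range A := by
  by_contra hBy
  have hi' : LinearIndependent ℂ (Fin.cons (B y) (fun i => A (e i)) : Fin (k + 1) → V) := by
    refine hi.finCons ?_
    intro hmem
    apply hBy
    refine Submodule.span_le.2 ?_ hmem
    rintro _ ⟨i, rfl⟩
    exact LinearMap.mem_range_self _ _
  have hfin := aux_linInd _ (Fin.cons 0 (fun i => B (e i)) : Fin (k + 1) → V) hi'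
  obtain ⟨t, ht⟩ := (hfin.union (Set.finite_singleton 0)).infinite_compl.nonempty
  simp only [Set.mem_compl_iff, Set.mem_union, Set.mem_ofPred_eq, Set.mem_singleton_iff,
    not_or, not_not] at ht
  obtain ⟨hli, ht0⟩ := ht
  have hmem : ∀ i, (Fin.cons (B y) (fun i => A (e i)) : Fin (k + 1) → V) i +
      t • (Fin.cons 0 (fun i => B (e i)) : Fin (k + 1) → V) i ∈ LinearMap.range (A + t • B) := by
    intro i
    refine Fin.cases ?_ (fun i => ?_) i
    · refine ⟨t⁻¹ • y, ?_⟩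
      simp [hy, smul_smul, ht0]
    · exact ⟨e i, by simp⟩
  have h1 := aux_card_le _ _ hli hmem
  have h2 := h t
  omega

/-- First-order deformation of kernel vectors when the rank does not jump. -/
lemma aux_first_order {V : Type*} [AddCommGroup V] [Module ℂ V] [Module.Finite ℂ V]
    (A B : V →ₗ[ℂ] V)
    (h : ∀ t : ℂ, Module.finrank ℂ (LinearMap.range (A + t • B)) ≤
      Module.finrank ℂ (LinearMap.range A)) (y : V) (hy : A y = 0) :
    B y ∈ LinearMap.range A := by
  let b := Module.finBasis ℂ (LinearMap.range A)
  choose e he using fun i => (b i).2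
  have hi : LinearIndependent ℂ (fun i => A (e i)) := by
    have : (fun i => A (e i)) = (LinearMap.range A).subtype ∘ b := by
      ext i; simp [he]
    rw [this]
    exact b.linearIndependent.map' _ (Submodule.ker_subtype _)
  exact aux_first_order_aux A B _ h y hy e hi

lemma aux_regular_line {L : Type*} [LieRing L] [LieAlgebra ℂ L] [Module.Finite ℂ L]
    (h : L) (hh : IsRegular ℂ h) (u : L) : {t : ℂ | ¬ IsRegular ℂ (u + t • (h - u))}.Finite := by
  classical
  let b := Module.finBasis ℂ L
  let q := (LinearMap.polyCharpoly (ad ℂ L).toLinearMap b).coeff (rank ℂ L)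
  let p : Polynomial ℂ := MvPolynomial.aeval (fun i => Polynomial.C (b.repr u i) +
    Polynomial.X * Polynomial.C (b.repr (h - u) i)) q
  have hp : ∀ t, p.eval t = MvPolynomial.eval (b.repr (u + t • (h - u))) q := by
    intro t
    simp only [p]
    rw [← Polynomial.coe_evalRingHom, MvPolynomial.aeval_def, MvPolynomial.hom_eval₂]
    rw [MvPolynomial.eval, MvPolynomial.coe_eval₂Hom]
    congr 1
    · ext; simp
    · ext i; simp 
  have hp0 : p ≠ 0 := by
    intro h0
    have h1 := hp 1
    refine (isRegular_iff_coeff_polyCharpoly_rank_ne_zero ℂ b h).1 hh ?_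
    have : u + (1 : ℂ) • (h - u) = h := by simp
    rw [this, h0] at h1
    rw [← h1, Polynomial.eval_zero]
  refine (Polynomial.finite_setOfPred_isRoot hp0).subset ?_
  intro t ht
  by_contra hne
  apply ht
  rw [isRegular_iff_coeff_polyCharpoly_rank_ne_zero ℂ b, ← hp]
  exact hne

lemma aux_regular_cartan {L : Type*} [LieRing L] [LieAlgebra ℂ L] [Module.Finite ℂ L]
    (x : L) (hx : IsRegular ℂ x) : (LieSubalgebra.engel ℂ x).IsCartanSubalgebra := by
  have h : (Module.finrank ℂ L : Cardinal) ≤ Cardinal.mk ℂ :=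
    Cardinal.natCast_le_aleph0.trans <| Cardinal.infinite_iff.mp inferInstance
  refine ⟨?_, LieSubalgebra.normalizer_engel _ _⟩
  apply LieSubalgebra.isNilpotent_of_forall_le_engel
  intro y hy
  set Ex : {LieSubalgebra.engel ℂ z | z ∈ LieSubalgebra.engel ℂ x} :=
    ⟨LieSubalgebra.engel ℂ x, x, LieSubalgebra.self_mem_engel _ _, rfl⟩
  suffices IsBot Ex from @this ⟨LieSubalgebra.engel ℂ y, y, hy, rfl⟩
  apply engel_isBot_of_isMin h (LieSubalgebra.engel ℂ x) Ex le_rfl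
  rintro ⟨_, y, hy, rfl⟩ hyx
  suffices Module.finrank ℂ (LieSubalgebra.engel ℂ x) ≤
      Module.finrank ℂ (LieSubalgebra.engel ℂ y) by
    suffices LieSubalgebra.engel ℂ y = LieSubalgebra.engel ℂ x from this.ge
    apply LieSubalgebra.toSubmodule_injective
    exact Submodule.eq_of_le_of_finrank_le hyx this
  rw [(isRegular_iff_finrank_engel_eq_rank ℂ x).mp hx]
  apply rank_le_finrank_engel

lemma aux_rank_ad {L : Type*} [LieRing L] [LieAlgebra ℂ L] [Module.Finite ℂ L]
    (hred : LieAlgebra.radical ℂ L = LieAlgebra.center ℂ L) (w : L) :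
    Module.finrank ℂ (LinearMap.range (ad ℂ L w)) ≤ Module.finrank ℂ L - rank ℂ L := by
  obtain ⟨h, hh⟩ := exists_isRegular ℂ L
  obtain ⟨t, ht⟩ := ((aux_regular_line h hh w).union
    (aux_rank (ad ℂ L w) (ad ℂ L (h - w)))).infinite_compl.nonempty
  simp only [Set.mem_compl_iff, Set.mem_union, Set.mem_ofPred_eq, not_or, not_not, not_lt] at ht
  obtain ⟨hreg, hle⟩ := ht
  refine hle.trans ?_
  rw [← map_smul, ← map_add]
  set w' := w + t • (h - w)
  have hC := aux_regular_cartan w' hreg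
  have hab := aux_cartan hred (LieSubalgebra.engel ℂ w')
  have hsub : (LieSubalgebra.engel ℂ w').toSubmodule ≤ LinearMap.ker (ad ℂ L w') := by
    intro y hy
    have := hab.trivial ⟨w', LieSubalgebra.self_mem_engel ℂ w'⟩ ⟨y, hy⟩
    simpa using congrArg Subtype.val this
  have h1 := Submodule.finrank_mono hsub
  have h2 : Module.finrank ℂ (LieSubalgebra.engel ℂ w').toSubmodule = rank ℂ L :=
    (isRegular_iff_finrank_engel_eq_rank ℂ w').1 hreg
  have h3 := LinearMap.finrank_range_add_finrank_ker (ad ℂ L w')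
  omega

end AuxLemmas

/-- Let `g` be a complex reductive Lie algebra and `x ∈ g` regular, i.e.
`dim [g,x] = 2r = dim g − rank g` (`r` = number of positive roots).  Then the centralizer
`g^x = ker (ad x)` has dimension `ℓ = rank g` and is an abelian subalgebra. -/
theorem centralizer_of_regular_is_abelian
    {L : Type*} [LieRing L] [LieAlgebra ℂ L] [Module.Finite ℂ L]
    (hred : LieAlgebra.radical ℂ L = LieAlgebra.center ℂ L)
    (x : L)
    (hreg : Module.finrank ℂ (LinearMap.range ((ad ℂ L) x)) =
      Module.finrank ℂ L - LieAlgebra.rank ℂ L) :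
    Module.finrank ℂ (LinearMap.ker ((ad ℂ L) x)) = LieAlgebra.rank ℂ L ∧
    ∀ y ∈ LinearMap.ker ((ad ℂ L) x), ∀ z ∈ LinearMap.ker ((ad ℂ L) x), ⁅y, z⁆ = 0 := by
  constructor
  · have h3 := LinearMap.finrank_range_add_finrank_ker (ad ℂ L x)
    have h4 : rank ℂ L ≤ Module.finrank ℂ L := rank_le_finrank ℂ L
    omega
  · intro y hy z hz
    rw [LinearMap.mem_ker, ad_apply] at hy hz
    rw [← Module.forall_dual_apply_eq_zero_iff ℂ]
    intro f
    obtain ⟨d, hd⟩ := aux_whitehead hred f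
    obtain ⟨y₁, hy₁⟩ := aux_first_order (ad ℂ L x) (ad ℂ L d) (fun t => by
      rw [← map_smul, ← map_add, hreg]
      exact aux_rank_ad hred _) y (by simpa using hy)
    rw [ad_apply, ad_apply] at hy₁
    rw [hd, ← LieModule.traceForm_apply_lie_apply, ← hy₁, LieModule.traceForm_apply_lie_apply',
      hz, map_zero, neg_zero]
end
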